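/- For every T > 1 there exists a constant c(T) > 0 such that for every x₀ ∈ ℝⁿ with u(x₀) ≤ T and v(x₀) ≤ T, one has both u(x₀) ≥ c(T) and v(x₀) ≥ c(T). -/

import Mathlib

/-!
Write `H(x,s)` for the average of `u² + v²` against the Gaussian of variance `s` centred at `x`, and `N` for
the corresponding Almgren frequency, `s` times the averaged energy density divided by `H`. The Gaussian
divergence theorem shows that `N` is nondecreasing in `s` (`N_deriv`, `N_mono`); linear growth of the solution
forces `N ≤ 1` (`N_le_one`), so `H(x,s)/s` is nonincreasing up to the factor `e` (`F1`).

The heart of the proof is the opposite bound `H(x,s) ≥ c s`, uniform in `x` (`F2`). By `F1` it suffices to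
have it at the origin for large `s` (`step4`). At a large scale the two components segregate: the product
`uv` is much smaller than the heights of `u` and `v` allow (`lemD`, `uv_small`), so suitable `C¹` truncations
have almost disjoint supports, and a combination of them of (almost) zero mean can be inserted into the
Gaussian Poincaré inequality. First this shows that neither component carries a vanishing share of `H`
(`step3`). Then, with the weights `v̄` and `ū` (the Gaussian means), it shows that
`log ((v̄² ∫u² + ū² ∫v²) / (ūv̄ t))` is nondecreasing in the scale `t` up to a bounded error. This uses a
Poincaré inequality with surplus (`poincare_gap`), proved by interpolation along Mehler correlations: the
surplus bounds the variance of the gradient, hence the distance to an affine function (`near_linear`), hence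
the imbalance `v̄² ∫u² - ū² ∫v²` (`static4`).

Now let `u, v ≤ T` at a point, taken as the origin. A Harnack inequality (`harnack`) at the scale where
`s H(s) = 1` gives `H(S) ≤ K S` for `S` not too small, with `K` depending only on `n`, `T` and `c` (`fin1`). If `u` were
tiny at the point, the Harnack inequality would make it small on a large ball, `v` would be nearly harmonic
there and its mean would stay bounded in terms of `T`; then `H` would be bounded at a large scale, against
`H(S) ≥ c S` (`fin2`). The same argument with the components exchanged bounds `v` from below.
-/

open MeasureTheory Metric Set
open scoped RealInnerProductSpace ENNReal

/-- Euclidean space `ℝⁿ`. -/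
abbrev Euc (n : ℕ) := EuclideanSpace ℝ (Fin n)

/-- The Laplacian `Δu` of a function `u : ℝⁿ → ℝ`. -/
noncomputable def lap {n : ℕ} (u : Euc n → ℝ) (x : Euc n) : ℝ :=
  ∑ i : Fin n,
    fderiv ℝ (fun y => fderiv ℝ u y (EuclideanSpace.single i 1)) x (EuclideanSpace.single i 1)

/-- The divergence `div Y = Σ_α ∂Y^α/∂x_α` of a vector field `Y`. -/
noncomputable def vdiv {n : ℕ} (Y : Euc n → Euc n) (x : Euc n) : ℝ :=
  ∑ i : Fin n, fderiv ℝ Y x (EuclideanSpace.single i 1) i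

/-- `DY(p,q)(x) = Σ_{α,β} (∂Y^α/∂x_β)(x) p_α q_β`. -/
noncomputable def DYbil {n : ℕ} (Y : Euc n → Euc n) (p q x : Euc n) : ℝ :=
  ∑ α : Fin n, ∑ β : Fin n,
    fderiv ℝ Y x (EuclideanSpace.single β 1) α * p α * q β

/-- The rescaled function `u_κ(x) = R⁻¹ u(x₀ + R x)` (with `κ = R⁴`). -/
noncomputable def resc {n : ℕ} (u : Euc n → ℝ) (x₀ : Euc n) (R : ℝ) (x : Euc n) : ℝ :=
  R⁻¹ * u (x₀ + R • x)

/-! ### Gaussian averages -/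

namespace TR
open Real Filter Topology

variable {n : ℕ}

/-- The centred Gaussian density on `ℝⁿ` with variance `s` in each coordinate. -/
noncomputable def gk (s : ℝ) (y : Euc n) : ℝ :=
  (2 * π * s) ^ (-(n / 2 : ℝ)) * exp (-‖y‖ ^ 2 / (2 * s))

lemma gk_pos {s : ℝ} (hs : 0 < s) (y : Euc n) : 0 < gk s y := by
  unfold gk; positivity

lemma gk_cont (s : ℝ) : Continuous (gk s : Euc n → ℝ) := by
  unfold gk; fun_prop

lemma gk_neg (s : ℝ) (y : Euc n) : gk s (-y) = gk s y := by simp [gk]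

lemma gk_integral {s : ℝ} (hs : 0 < s) : ∫ y : Euc n, gk s y = 1 := by
  have hb : 0 < 1 / (2 * s) := by positivity
  have h := GaussianFourier.integral_rexp_neg_mul_sq_norm (V := Euc n) hb
  have e : ∀ y : Euc n, gk s y = (2 * π * s) ^ (-(n / 2 : ℝ)) * exp (-(1 / (2 * s)) * ‖y‖ ^ 2) := by
    intro y; unfold gk; congr 2; field_simp
  simp_rw [e]
  rw [integral_const_mul, h, finrank_euclideanSpace, Fintype.card_fin,
    show π / (1 / (2 * s)) = 2 * π * s by field_simp, ← rpow_add (by positivity)]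
  simp

lemma gk_integrable {s : ℝ} (hs : 0 < s) : Integrable (gk s : Euc n → ℝ) := by
  apply MeasureTheory.Integrable.of_integral_ne_zero
  rw [gk_integral hs]; exact one_ne_zero

lemma pow_le_exp {δ : ℝ} (hδ : 0 < δ) (k : ℕ) {r : ℝ} (hr : 0 ≤ r) :
    (1 + r) ^ k ≤ (k.factorial / δ ^ k * exp δ) * exp (δ * r) := by
  have h := Real.pow_div_factorial_le_exp (δ * (1 + r)) (by positivity) k
  rw [div_le_iff₀ (by positivity), mul_pow] at h
  have : exp (δ * (1 + r)) = exp δ * exp (δ * r) := by rw [← exp_add]; ring_nf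
  rw [this] at h
  have h2 : (1 + r) ^ k = (δ ^ k * (1 + r) ^ k) / δ ^ k := by field_simp
  rw [h2, div_le_iff₀ (by positivity)]
  calc _ ≤ _ := h
    _ = _ := by field_simp

/-- Uniform absorption of polynomial weights by a wider Gaussian. -/
lemma gk_poly_le {a b t : ℝ} (ha : 0 < a) (hab : a ≤ b) (hbt : b < t) (k : ℕ) :
    ∃ C > 0, ∀ s, a ≤ s → s ≤ b → ∀ y : Euc n, (1 + ‖y‖ ^ 2) ^ k * gk s y ≤ C * gk t y := by
  have hb : 0 < b := ha.trans_le hab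
  have ht : 0 < t := hb.trans hbt
  set δ := 1 / (2 * b) - 1 / (2 * t) with hδd
  have hδ : 0 < δ := by
    rw [hδd, sub_pos]; gcongr
  set K := (k.factorial / δ ^ k * exp δ : ℝ) with hK
  have hKpos : 0 < K := by positivity
  refine ⟨K * (2 * π * a) ^ (-(n / 2 : ℝ)) * (2 * π * t) ^ ((n / 2 : ℝ)), by positivity, ?_⟩
  intro s has hsb y
  have hs : 0 < s := ha.trans_le has
  have h1 : (2 * π * s) ^ (-(n / 2 : ℝ)) ≤ (2 * π * a) ^ (-(n / 2 : ℝ)) := by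
    apply rpow_le_rpow_of_nonpos (by positivity)
    · gcongr
    · have : (0 : ℝ) ≤ n / 2 := by positivity
      linarith
  have h2 : exp (-‖y‖ ^ 2 / (2 * s)) ≤ exp (-‖y‖ ^ 2 / (2 * b)) := by
    apply exp_le_exp.mpr
    rw [neg_div, neg_div, neg_le_neg_iff]; gcongr
  have h3 := pow_le_exp hδ k (sq_nonneg ‖y‖)
  have h4 : exp (δ * ‖y‖ ^ 2) * exp (-‖y‖ ^ 2 / (2 * b)) = exp (-‖y‖ ^ 2 / (2 * t)) := by
    rw [← exp_add]; congr 1; rw [hδd]; field_simp; ring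
  have h5 : (2 * π * t) ^ ((n / 2 : ℝ)) * (2 * π * t) ^ (-(n / 2 : ℝ)) = 1 := by
    rw [← rpow_add (by positivity)]; simp
  unfold gk
  calc (1 + ‖y‖ ^ 2) ^ k * ((2 * π * s) ^ (-(n / 2 : ℝ)) * exp (-‖y‖ ^ 2 / (2 * s)))
      ≤ (K * exp (δ * ‖y‖ ^ 2)) * ((2 * π * a) ^ (-(n / 2 : ℝ)) * exp (-‖y‖ ^ 2 / (2 * b))) := by
        gcongr
    _ = K * (2 * π * a) ^ (-(n / 2 : ℝ)) * (exp (δ * ‖y‖ ^ 2) * exp (-‖y‖ ^ 2 / (2 * b))) := by ring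
    _ = K * (2 * π * a) ^ (-(n / 2 : ℝ)) * ((2 * π * t) ^ ((n / 2 : ℝ)) * (2 * π * t) ^ (-(n / 2 : ℝ))) * exp (-‖y‖ ^ 2 / (2 * t)) := by rw [h4, h5]; ring
    _ = _ := by ring

/-- The Gaussian average of `f` at scale `s`, centred at the origin. Other centres are reached by
translating `f`. -/
noncomputable def av (s : ℝ) (f : Euc n → ℝ) : ℝ := ∫ y, f y * gk s y

/-- Continuous, and integrable against every Gaussian. -/
structure GI (f : Euc n → ℝ) : Prop where
  cont : Continuous f
  int : ∀ s, 0 < s → Integrable (fun y => f y * gk s y)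

/-- Continuous with square integrable against every Gaussian. -/
structure G2 (f : Euc n → ℝ) : Prop where
  cont : Continuous f
  sq : GI (fun y => f y ^ 2)

/-- Continuous of polynomial growth. -/
structure PG (f : Euc n → ℝ) : Prop where
  cont : Continuous f
  bound : ∃ C : ℝ, 0 ≤ C ∧ ∃ k : ℕ, ∀ y, |f y| ≤ C * (1 + ‖y‖ ^ 2) ^ k

lemma GI.mono {f g : Euc n → ℝ} (hf : GI f) (hg : Continuous g) (h : ∀ y, |g y| ≤ |f y|) : GI g := by
  refine ⟨hg, fun s hs => (hf.int s hs).mono (hg.mul (gk_cont s)).aestronglyMeasurable ?_⟩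
  refine Eventually.of_forall fun y => ?_
  rw [norm_mul, norm_mul, norm_eq_abs, norm_eq_abs (f y)]
  exact mul_le_mul_of_nonneg_right (h y) (norm_nonneg _)

lemma GI.mul_PG {f g : Euc n → ℝ} (hf : GI f) (hg : PG g) : GI (fun y => f y * g y) := by
  obtain ⟨C, hC, k, hb⟩ := hg.bound
  refine ⟨hf.cont.mul hg.cont, fun s hs => ?_⟩
  obtain ⟨K, hK, hk⟩ := gk_poly_le (n := n) hs le_rfl (show s < 2 * s by linarith) k
  refine ((hf.int (2 * s) (by linarith)).const_mul (C * K)).mono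
    ((hf.cont.mul hg.cont).mul (gk_cont s)).aestronglyMeasurable ?_
  refine Eventually.of_forall fun y => ?_
  have h1 := hk s le_rfl le_rfl y
  have h2 := hb y
  have p1 := gk_pos hs y
  have p2 := gk_pos (show 0 < 2 * s by linarith) y
  simp only [norm_mul, norm_eq_abs, abs_of_pos p1, abs_of_pos p2, abs_of_nonneg hC, abs_of_pos hK]
  calc |f y| * |g y| * gk s y ≤ |f y| * (C * (1 + ‖y‖ ^ 2) ^ k) * gk s y := by gcongr
    _ = |f y| * C * ((1 + ‖y‖ ^ 2) ^ k * gk s y) := by ring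
    _ ≤ |f y| * C * (K * gk (2 * s) y) := by gcongr
    _ = _ := by ring

lemma GI.const (c : ℝ) : GI (fun _ : Euc n => c) :=
  ⟨continuous_const, fun _ hs => (gk_integrable hs).const_mul c⟩

lemma PG.GI {f : Euc n → ℝ} (hf : PG f) : GI f := by
  simpa using (GI.const (1 : ℝ)).mul_PG hf

lemma GI.add {f g : Euc n → ℝ} (hf : GI f) (hg : GI g) : GI (fun y => f y + g y) :=
  ⟨hf.cont.add hg.cont, fun s hs => by
    simp only [add_mul]
    exact (hf.int s hs).add (hg.int s hs)⟩

lemma GI.const_mul {f : Euc n → ℝ} (hf : GI f) (c : ℝ) : GI (fun y => c * f y) :=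
  ⟨continuous_const.mul hf.cont, fun s hs => by
    simpa only [mul_assoc] using (hf.int s hs).const_mul c⟩

lemma GI.neg {f : Euc n → ℝ} (hf : GI f) : GI (fun y => -f y) := by
  simpa using hf.const_mul (-1)

lemma GI.sub {f g : Euc n → ℝ} (hf : GI f) (hg : GI g) : GI (fun y => f y - g y) := by
  simpa only [sub_eq_add_neg] using hf.add hg.neg

lemma GI.sum {ι : Type*} (I : Finset ι) {f : ι → Euc n → ℝ} (hf : ∀ i ∈ I, GI (f i)) :
    GI (fun y => ∑ i ∈ I, f i y) := by
  refine ⟨continuous_finsetSum _ fun i hi => (hf i hi).cont, fun s hs => ?_⟩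
  simp only [Finset.sum_mul]
  exact integrable_finsetSum _ fun i hi => (hf i hi).int s hs

lemma GI.abs {f : Euc n → ℝ} (hf : GI f) : GI (fun y => |f y|) :=
  hf.mono hf.cont.abs fun y => by simp

lemma G2.mul {f g : Euc n → ℝ} (hf : G2 f) (hg : G2 g) : GI (fun y => f y * g y) := by
  refine (hf.sq.add hg.sq).mono (hf.cont.mul hg.cont) fun y => ?_
  rw [abs_le, abs_of_nonneg (by positivity)]
  constructor <;> nlinarith [sq_nonneg (f y + g y), sq_nonneg (f y - g y), sq_nonneg (f y), sq_nonneg (g y)]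

lemma G2.add {f g : Euc n → ℝ} (hf : G2 f) (hg : G2 g) : G2 (fun y => f y + g y) := by
  refine ⟨hf.cont.add hg.cont, ?_⟩
  have := (hf.sq.add hg.sq).add ((hf.mul hg).const_mul 2)
  convert this using 2; ring

lemma G2.const_mul {f : Euc n → ℝ} (hf : G2 f) (c : ℝ) : G2 (fun y => c * f y) := by
  refine ⟨continuous_const.mul hf.cont, ?_⟩
  simpa only [mul_pow] using hf.sq.const_mul (c ^ 2)

lemma G2.neg {f : Euc n → ℝ} (hf : G2 f) : G2 (fun y => -f y) := by
  simpa using hf.const_mul (-1)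

lemma G2.sub {f g : Euc n → ℝ} (hf : G2 f) (hg : G2 g) : G2 (fun y => f y - g y) := by
  simpa only [sub_eq_add_neg] using hf.add hg.neg

lemma PG.mul {f g : Euc n → ℝ} (hf : PG f) (hg : PG g) : PG (fun y => f y * g y) := by
  obtain ⟨C, hC, k, h1⟩ := hf.bound
  obtain ⟨D, hD, l, h2⟩ := hg.bound
  refine ⟨hf.cont.mul hg.cont, C * D, by positivity, k + l, fun y => ?_⟩
  rw [abs_mul, pow_add]
  calc |f y| * |g y| ≤ (C * (1 + ‖y‖ ^ 2) ^ k) * (D * (1 + ‖y‖ ^ 2) ^ l) := by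
        gcongr; exacts [h1 y, h2 y]
    _ = _ := by ring

lemma PG.const (c : ℝ) : PG (fun _ : Euc n => c) :=
  ⟨continuous_const, |c|, abs_nonneg _, 0, fun y => by simp⟩

lemma PG.pow {f : Euc n → ℝ} (hf : PG f) (k : ℕ) : PG (fun y => f y ^ k) := by
  induction k with
  | zero => simpa using PG.const 1
  | succ k ih => simpa only [pow_succ] using ih.mul hf

lemma PG.norm_sq : PG (fun y : Euc n => ‖y‖ ^ 2) :=
  ⟨by fun_prop, 1, zero_le_one, 1, fun y => by
    rw [abs_of_nonneg (by positivity)]; simp⟩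

lemma PG.coord (i : Fin n) : PG (fun y : Euc n => y i) :=
  ⟨by fun_prop, 1, zero_le_one, 1, fun y => by
    have := EuclideanSpace.norm_sq_eq y
    have h2 : y i ^ 2 ≤ ‖y‖ ^ 2 := by
      rw [this, ← sq_abs]
      exact Finset.single_le_sum (f := fun i => ‖y i‖ ^ 2) (fun _ _ => by positivity) (Finset.mem_univ i)
    rw [abs_le]; constructor <;> nlinarith [sq_nonneg (y i - 1), sq_nonneg (y i + 1)]⟩

lemma PG.mono {f g : Euc n → ℝ} (hf : PG f) (hg : Continuous g) (h : ∀ y, |g y| ≤ |f y|) : PG g := by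
  obtain ⟨C, hC, k, h1⟩ := hf.bound
  exact ⟨hg, C, hC, k, fun y => (h y).trans (h1 y)⟩

lemma PG.add {f g : Euc n → ℝ} (hf : PG f) (hg : PG g) : PG (fun y => f y + g y) := by
  obtain ⟨C, hC, k, h1⟩ := hf.bound
  obtain ⟨D, hD, l, h2⟩ := hg.bound
  refine ⟨hf.cont.add hg.cont, C + D, by positivity, k + l, fun y => ?_⟩
  have e1 : (1 : ℝ) ≤ 1 + ‖y‖ ^ 2 := by nlinarith [sq_nonneg ‖y‖]
  calc |f y + g y| ≤ |f y| + |g y| := abs_add_le _ _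
    _ ≤ C * (1 + ‖y‖ ^ 2) ^ k + D * (1 + ‖y‖ ^ 2) ^ l := add_le_add (h1 y) (h2 y)
    _ ≤ C * (1 + ‖y‖ ^ 2) ^ (k + l) + D * (1 + ‖y‖ ^ 2) ^ (k + l) := by
        gcongr <;> first | exact e1 | omega
    _ = _ := by ring

lemma PG.G2 {f : Euc n → ℝ} (hf : PG f) : G2 f := ⟨hf.cont, (hf.pow 2).GI⟩

lemma G2.mul_PG {f g : Euc n → ℝ} (hf : G2 f) (hg : PG g) : G2 (fun y => f y * g y) :=
  ⟨hf.cont.mul hg.cont, by simpa only [mul_pow] using hf.sq.mul_PG (hg.pow 2)⟩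

lemma G2.GI {f : Euc n → ℝ} (hf : G2 f) : GI f := by
  simpa using hf.mul (PG.const 1).G2

lemma G2.mono {f g : Euc n → ℝ} (hf : G2 f) (hg : Continuous g) (h : ∀ y, |g y| ≤ |f y|) : G2 g :=
  ⟨hg, hf.sq.mono (hg.pow 2) fun y => by
    rw [abs_pow, abs_pow]; exact pow_le_pow_left₀ (abs_nonneg _) (h y) 2⟩

lemma G2.sum {ι : Type*} (I : Finset ι) {f : ι → Euc n → ℝ} (hf : ∀ i ∈ I, G2 (f i)) :
    G2 (fun y => ∑ i ∈ I, f i y) := by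
  classical
  induction I using Finset.induction_on with
  | empty => simpa using (PG.const 0).G2
  | insert a I ha ih =>
    simp only [Finset.sum_insert ha]
    exact (hf a (by simp)).add (ih fun i hi => hf i (by simp [hi]))

/-! ### Algebra of Gaussian averages -/
section av
variable {s : ℝ} {f g : Euc n → ℝ}

lemma av_add (hs : 0 < s) (hf : GI f) (hg : GI g) :
    av s (fun y => f y + g y) = av s f + av s g := by
  unfold av; simp only [add_mul]; exact integral_add (hf.int s hs) (hg.int s hs)

lemma av_sub (hs : 0 < s) (hf : GI f) (hg : GI g) :
    av s (fun y => f y - g y) = av s f - av s g := by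
  unfold av; simp only [sub_mul]; exact integral_sub (hf.int s hs) (hg.int s hs)

lemma av_const_mul (c : ℝ) : av s (fun y => c * f y) = c * av s f := by
  unfold av; simp only [mul_assoc]; exact integral_const_mul _ _

lemma av_neg : av s (fun y => - f y) = - av s f := by
  simpa using av_const_mul (s := s) (f := f) (-1)

lemma av_sum (hs : 0 < s) {ι : Type*} (I : Finset ι) {f : ι → Euc n → ℝ} (hf : ∀ i ∈ I, GI (f i)) :
    av s (fun y => ∑ i ∈ I, f i y) = ∑ i ∈ I, av s (f i) := by
  unfold av; simp only [Finset.sum_mul]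
  exact integral_finsetSum _ fun i hi => (hf i hi).int s hs

lemma av_const (hs : 0 < s) (c : ℝ) : av s (fun _ : Euc n => c) = c := by
  unfold av; rw [integral_const_mul, gk_integral hs, mul_one]

lemma av_mono (hs : 0 < s) (hf : GI f) (hg : GI g) (h : ∀ y, f y ≤ g y) : av s f ≤ av s g := by
  unfold av
  exact integral_mono (hf.int s hs) (hg.int s hs) fun y =>
    mul_le_mul_of_nonneg_right (h y) (gk_pos hs y).le

lemma av_nonneg (hs : 0 < s) (h : ∀ y, 0 ≤ f y) : 0 ≤ av s f :=
  integral_nonneg fun y => mul_nonneg (h y) (gk_pos hs y).le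

lemma av_pos (hs : 0 < s) (hf : GI f) (h : ∀ y, 0 < f y) : 0 < av s f := by
  unfold av
  rw [integral_pos_iff_support_of_nonneg (fun y => (mul_pos (h y) (gk_pos hs y)).le) (hf.int s hs)]
  have : Function.support (fun y => f y * gk s y) = univ := by
    ext y; simpa using ⟨(h y).ne', (gk_pos hs y).ne'⟩
  rw [this]; simp [Measure.measure_univ_pos, NeZero.ne]

lemma av_abs_le (hs : 0 < s) (hf : GI f) : |av s f| ≤ av s (fun y => |f y|) := by
  rw [abs_le]
  constructor
  · rw [← av_neg]; exact av_mono hs hf.abs.neg hf fun y => neg_abs_le _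
  · exact av_mono hs hf hf.abs fun y => le_abs_self _

/-- Cauchy–Schwarz. -/
lemma av_cs (hs : 0 < s) (hf : G2 f) (hg : G2 g) :
    av s (fun y => f y * g y) ^ 2 ≤ av s (fun y => f y ^ 2) * av s (fun y => g y ^ 2) := by
  have key : ∀ t : ℝ, 0 ≤ av s (fun y => f y ^ 2) * (t * t) + (2 * av s (fun y => f y * g y)) * t
      + av s (fun y => g y ^ 2) := by
    intro t
    have h0 : 0 ≤ av s (fun y => (t * f y + g y) ^ 2) := av_nonneg hs fun y => sq_nonneg _
    have e : av s (fun y => (t * f y + g y) ^ 2) =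
        av s (fun y => ((t * t) * f y ^ 2 + (2 * t) * (f y * g y)) + g y ^ 2) := by
      congr 1; ext y; ring
    rw [e, av_add hs ((hf.sq.const_mul _).add ((hf.mul hg).const_mul _)) hg.sq,
      av_add hs (hf.sq.const_mul _) ((hf.mul hg).const_mul _), av_const_mul, av_const_mul] at h0
    linarith
  have := discrim_le_zero key
  unfold discrim at this
  nlinarith

lemma av_sq_le (hs : 0 < s) (hf : G2 f) : av s f ^ 2 ≤ av s (fun y => f y ^ 2) := by
  have := av_cs hs hf (PG.const 1).G2
  simpa [av_const hs] using this

/-- The derivative of the Gaussian density in the scale. -/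
lemma gk_hasDerivAt (hs : 0 < s) (y : Euc n) :
    HasDerivAt (fun s => gk s y) ((‖y‖ ^ 2 / (2 * s ^ 2) - n / (2 * s)) * gk s y) s := by
  unfold gk
  have h1 : HasDerivAt (fun s : ℝ => (2 * π * s) ^ (-(n / 2 : ℝ)))
      ((2 * π) * (-(n / 2 : ℝ)) * (2 * π * s) ^ (-(n / 2 : ℝ) - 1)) s := by
    have := ((hasDerivAt_id s).const_mul (2 * π)).rpow_const (p := -(n / 2 : ℝ))
      (Or.inl (by simp; positivity))
    simpa using this
  have h2 : HasDerivAt (fun s : ℝ => exp (-‖y‖ ^ 2 / (2 * s)))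
      (exp (-‖y‖ ^ 2 / (2 * s)) * (‖y‖ ^ 2 / (2 * s ^ 2))) s := by
    have h3 : HasDerivAt (fun s : ℝ => -‖y‖ ^ 2 / (2 * s)) (‖y‖ ^ 2 / (2 * s ^ 2)) s := by
      have := (hasDerivAt_const s (-‖y‖ ^ 2)).div ((hasDerivAt_id s).const_mul 2)
        (by simp; positivity)
      refine this.congr_deriv ?_
      simp; field_simp
    exact h3.exp
  refine (h1.mul h2).congr_deriv ?_
  rw [rpow_sub_one (by positivity)]
  field_simp; ring

/-- Differentiation of a Gaussian average in the scale, under the integral sign. -/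
lemma av_hasDerivAt (hs : 0 < s) (hf : GI f) :
    HasDerivAt (fun s => av s f) (av s (fun y => f y * (‖y‖ ^ 2 / (2 * s ^ 2) - n / (2 * s)))) s := by
  obtain ⟨C, hC, hk⟩ := gk_poly_le (n := n) (show 0 < s / 2 by linarith)
    (show s / 2 ≤ 2 * s by linarith) (show 2 * s < 3 * s by linarith) 1
  have hnhds : Ioo (s / 2) (2 * s) ∈ 𝓝 s := Ioo_mem_nhds (by linarith) (by linarith)
  set K : ℝ := 2 / s ^ 2 + n / s with hKd
  have hK : 0 ≤ K := by positivity
  have hfin := hasDerivAt_integral_of_dominated_loc_of_deriv_le (μ := (volume : Measure (Euc n)))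
    (F := fun s y => f y * gk s y)
    (F' := fun s y => f y * (‖y‖ ^ 2 / (2 * s ^ 2) - n / (2 * s)) * gk s y)
    (bound := fun y => K * C * (|f y| * gk (3 * s) y)) hnhds
    (Eventually.of_forall fun s' => (hf.cont.mul (gk_cont s')).aestronglyMeasurable)
    (hf.int s hs)
    ((hf.cont.mul (by fun_prop)).mul (gk_cont s)).aestronglyMeasurable
    ?_ ((hf.abs.int _ (by linarith)).const_mul _) ?_
  · exact hfin.2
  · refine Eventually.of_forall fun y x hx => ?_
    have hx0 : 0 < x := by linarith [hx.1]
    have h1 := hk x hx.1.le hx.2.le y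
    have p1 := gk_pos hx0 y
    rw [norm_mul, norm_mul, norm_eq_abs, norm_eq_abs, norm_eq_abs, abs_of_pos p1]
    have h2 : |‖y‖ ^ 2 / (2 * x ^ 2) - n / (2 * x)| ≤ K * (1 + ‖y‖ ^ 2) := by
      have a1 : ‖y‖ ^ 2 / (2 * x ^ 2) ≤ 2 / s ^ 2 * ‖y‖ ^ 2 := by
        rw [div_le_iff₀ (by positivity)]
        have : s ^ 2 ≤ 4 * x ^ 2 := by nlinarith [hx.1]
        rw [show 2 / s ^ 2 * ‖y‖ ^ 2 * (2 * x ^ 2) = ‖y‖ ^ 2 * (4 * x ^ 2) / s ^ 2 by ring,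
          le_div_iff₀ (by positivity)]
        gcongr
      have a2 : (n : ℝ) / (2 * x) ≤ n / s := by
        gcongr; linarith [hx.1]
      have b1 : 0 ≤ ‖y‖ ^ 2 / (2 * x ^ 2) := by positivity
      have b2 : 0 ≤ (n : ℝ) / (2 * x) := by positivity
      have b3 : 0 ≤ 2 / s ^ 2 := by positivity
      have b4 : 0 ≤ (n : ℝ) / s := by positivity
      have b5 : 0 ≤ (n : ℝ) / s * ‖y‖ ^ 2 := by positivity
      rw [abs_le, hKd]; constructor <;> nlinarith
    calc |f y| * |‖y‖ ^ 2 / (2 * x ^ 2) - n / (2 * x)| * gk x y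
        ≤ |f y| * (K * (1 + ‖y‖ ^ 2)) * gk x y := by gcongr
      _ = |f y| * K * ((1 + ‖y‖ ^ 2) ^ 1 * gk x y) := by ring
      _ ≤ |f y| * K * (C * gk (3 * s) y) := by gcongr
      _ = _ := by ring
  · refine Eventually.of_forall fun y x hx => ?_
    have hx0 : 0 < x := by linarith [hx.1]
    have := (gk_hasDerivAt hx0 y).const_mul (f y)
    simpa only [mul_assoc] using this

end av
end TR

/-! ### Partial derivatives, cutoffs and the Gaussian divergence theorem -/

namespace TR
open Real Filter Topology

variable {n : ℕ}

/-- The partial derivative `∂ᵢ f`. -/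
noncomputable def D (i : Fin n) (f : Euc n → ℝ) (x : Euc n) : ℝ :=
  fderiv ℝ f x (EuclideanSpace.single i 1)

lemma lap_eq (u : Euc n → ℝ) (x : Euc n) : lap u x = ∑ i, D i (D i u) x := rfl

section D
variable {i : Fin n} {f g : Euc n → ℝ} {x : Euc n}

lemma D_add (hf : DifferentiableAt ℝ f x) (hg : DifferentiableAt ℝ g x) :
    D i (fun y => f y + g y) x = D i f x + D i g x := by
  simp [D, fderiv_fun_add hf hg]

lemma D_sub (hf : DifferentiableAt ℝ f x) (hg : DifferentiableAt ℝ g x) :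
    D i (fun y => f y - g y) x = D i f x - D i g x := by
  simp [D, fderiv_fun_sub hf hg]

lemma D_mul (hf : DifferentiableAt ℝ f x) (hg : DifferentiableAt ℝ g x) :
    D i (fun y => f y * g y) x = D i f x * g x + f x * D i g x := by
  simp [D, fderiv_fun_mul hf hg]; ring

lemma D_const_mul (hf : DifferentiableAt ℝ f x) (c : ℝ) :
    D i (fun y => c * f y) x = c * D i f x := by
  simp [D, fderiv_const_mul hf c]

lemma D_const (c : ℝ) : D i (fun _ => c) x = 0 := by simp [D]

lemma D_sq (hf : DifferentiableAt ℝ f x) : D i (fun y => f y ^ 2) x = 2 * f x * D i f x := by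
  have : (fun y => f y ^ 2) = fun y => f y * f y := by ext y; ring
  rw [this, D_mul hf hf]; ring

lemma D_sum {ι : Type*} (I : Finset ι) {f : ι → Euc n → ℝ} (hf : ∀ j ∈ I, DifferentiableAt ℝ (f j) x) :
    D i (fun y => ∑ j ∈ I, f j y) x = ∑ j ∈ I, D i (f j) x := by
  simp [D, fderiv_fun_sum hf]

lemma D_comp {φ : ℝ → ℝ} {φ' : ℝ} (hφ : HasDerivAt φ φ' (f x)) (hf : DifferentiableAt ℝ f x) :
    D i (fun y => φ (f y)) x = φ' * D i f x := by
  have := (hφ.comp_hasFDerivAt x hf.hasFDerivAt).fderiv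
  unfold D
  rw [show (fun y => φ (f y)) = φ ∘ f from rfl, this]; simp

lemma D_coord (j : Fin n) : D i (fun y : Euc n => y j) x = if i = j then 1 else 0 := by
  have : HasFDerivAt (fun y : Euc n => y j) (EuclideanSpace.proj j : Euc n →L[ℝ] ℝ) x :=
    (EuclideanSpace.proj j : Euc n →L[ℝ] ℝ).hasFDerivAt
  simp [D, this.fderiv, PiLp.single_apply, eq_comm]

lemma contDiff_D {k : ℕ} (hf : ContDiff ℝ (k + 1) f) : ContDiff ℝ k (D i f) := by
  unfold D
  exact (hf.fderiv_right (m := (k : WithTop ℕ∞)) le_rfl).clm_apply contDiff_const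

lemma continuous_D (hf : ContDiff ℝ 1 f) : Continuous (D i f) := by
  unfold D
  exact (hf.continuous_fderiv one_ne_zero).clm_apply continuous_const

lemma D_comm {j : Fin n} (hf : ContDiff ℝ 2 f) : D i (D j f) x = D j (D i f) x := by
  have hd : DifferentiableAt ℝ (fderiv ℝ f) x :=
    ((hf.fderiv_right (m := 1) (by norm_num)).differentiable one_ne_zero) x
  have e : ∀ k l : Fin n, D k (D l f) x =
      fderiv ℝ (fderiv ℝ f) x (EuclideanSpace.single k 1) (EuclideanSpace.single l 1) := by
    intro k l
    unfold D
    rw [fderiv_clm_apply hd (differentiableAt_const _)]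
    simp
  rw [e, e]
  exact (hf.contDiffAt.isSymmSndFDerivAt (by simp)) _ _

end D

lemma D_gk {s : ℝ} (hs : 0 < s) (i : Fin n) (y : Euc n) : D i (gk s) y = -(y i / s) * gk s y := by
  have h1 : HasFDerivAt (fun y : Euc n => ‖y‖ ^ 2) (2 • innerSL ℝ y) y :=
    (hasStrictFDerivAt_norm_sq y).hasFDerivAt
  have h2 : D i (fun y : Euc n => ‖y‖ ^ 2) y = 2 * y i := by
    unfold D; rw [h1.fderiv]; simp [EuclideanSpace.inner_single_right]
  have h3 : HasDerivAt (fun r : ℝ => (2 * π * s) ^ (-(n / 2 : ℝ)) * exp (-r / (2 * s)))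
      ((2 * π * s) ^ (-(n / 2 : ℝ)) * (exp (-‖y‖ ^ 2 / (2 * s)) * (-1 / (2 * s)))) (‖y‖ ^ 2) := by
    have := (((hasDerivAt_id (‖y‖ ^ 2)).neg.div_const (2 * s)).exp).const_mul ((2 * π * s) ^ (-(n / 2 : ℝ)))
    simpa using this
  have h4 := D_comp (i := i) h3 h1.differentiableAt
  rw [h2] at h4
  change D i (gk s) y = _ at h4
  rw [h4]; unfold gk; field_simp

lemma gk_contDiff (s : ℝ) : ContDiff ℝ 1 (gk s : Euc n → ℝ) := by
  unfold gk
  exact contDiff_const.mul ((((contDiff_norm_sq ℝ).neg).div_const _).exp)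

/-- A sequence of cutoff functions exhausting the space, with uniformly bounded gradients. -/
structure Cutoffs (n : ℕ) where
  φ : ℕ → Euc n → ℝ
  K : ℝ
  smooth : ∀ m, ContDiff ℝ 1 (φ m)
  supp : ∀ m, HasCompactSupport (φ m)
  nonneg : ∀ m y, 0 ≤ φ m y
  le_one : ∀ m y, φ m y ≤ 1
  eq_one : ∀ (m : ℕ) (y : Euc n), y ∈ ball (0 : Euc n) (m + 1) → φ m y = 1
  D_le : ∀ i m y, |D i (φ m) y| ≤ K

lemma exists_cutoffs (n : ℕ) : Nonempty (Cutoffs n) := by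
  let b : ContDiffBump (0 : Euc n) := ⟨1, 2, zero_lt_one, one_lt_two⟩
  have hb1 : ContDiff ℝ 1 (b : Euc n → ℝ) := b.contDiff
  have hK : ∃ K, ∀ x, ‖fderiv ℝ (b : Euc n → ℝ) x‖ ≤ K :=
    (hb1.continuous_fderiv one_ne_zero).bounded_above_of_compact_support
      (b.hasCompactSupport.fderiv ℝ)
  obtain ⟨K, hK⟩ := hK
  have hK0 : 0 ≤ K := (norm_nonneg _).trans (hK 0)
  have hpos : ∀ m : ℕ, (0 : ℝ) < (m + 1 : ℝ)⁻¹ := fun m => by positivity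
  refine ⟨⟨fun m y => b ((m + 1 : ℝ)⁻¹ • y), K, ?_, ?_, ?_, ?_, ?_, ?_⟩⟩
  · intro m; exact hb1.comp (contDiff_const_smul _)
  · intro m
    exact b.hasCompactSupport.comp_homeomorph (Homeomorph.smulOfNeZero _ (hpos m).ne')
  · intro m y; exact b.nonneg
  · intro m y; exact b.le_one
  · intro m y hy
    apply b.one_of_mem_closedBall
    rw [mem_closedBall_zero_iff, norm_smul, norm_inv, norm_eq_abs, abs_of_pos (by positivity)]
    rw [mem_ball_zero_iff] at hy
    rw [inv_mul_le_iff₀ (by positivity)]; simpa [b] using hy.le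
  · intro i m y
    have : HasFDerivAt (fun y : Euc n => b ((m + 1 : ℝ)⁻¹ • y))
        ((fderiv ℝ (b : Euc n → ℝ) ((m + 1 : ℝ)⁻¹ • y)).comp
          ((m + 1 : ℝ)⁻¹ • ContinuousLinearMap.id ℝ (Euc n))) y := by
      have h0 : HasFDerivAt (fun y : Euc n => (m + 1 : ℝ)⁻¹ • y)
          ((m + 1 : ℝ)⁻¹ • ContinuousLinearMap.id ℝ (Euc n)) y :=
        ((m + 1 : ℝ)⁻¹ • ContinuousLinearMap.id ℝ (Euc n)).hasFDerivAt
      exact ((hb1.differentiable one_ne_zero) _).hasFDerivAt.comp y h0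
    unfold D
    rw [this.fderiv]
    simp only [ContinuousLinearMap.comp_apply, smul_apply,
      ContinuousLinearMap.id_apply, map_smul, smul_eq_mul, abs_mul]
    have h1 : |(m + 1 : ℝ)⁻¹| ≤ 1 := by
      rw [abs_of_pos (hpos m)]; apply inv_le_one_of_one_le₀; linarith [m.cast_nonneg (α := ℝ)]
    have h2 : |fderiv ℝ (b : Euc n → ℝ) ((m + 1 : ℝ)⁻¹ • y) (EuclideanSpace.single i 1)| ≤ K := by
      rw [← norm_eq_abs]
      refine ((fderiv ℝ (b : Euc n → ℝ) _).le_opNorm _).trans ?_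
      simpa using hK _
    calc _ ≤ 1 * K := mul_le_mul h1 h2 (abs_nonneg _) zero_le_one
      _ = K := one_mul K

namespace Cutoffs
variable (c : Cutoffs n)

lemma cont (m : ℕ) : Continuous (c.φ m) := (c.smooth m).continuous

lemma K_nonneg [NeZero n] : 0 ≤ c.K := (abs_nonneg _).trans (c.D_le 0 0 0)

lemma ev_ball (y : Euc n) : ∀ᶠ m : ℕ in atTop, y ∈ ball (0 : Euc n) (m + 1) := by
  filter_upwards [eventually_gt_atTop ⌈‖y‖⌉₊] with m hm
  rw [mem_ball_zero_iff]
  have := Nat.lt_of_ceil_lt hm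
  linarith

lemma tendsto (y : Euc n) : Tendsto (fun m => c.φ m y) atTop (𝓝 1) := by
  apply tendsto_const_nhds.congr'
  filter_upwards [ev_ball y] with m hm
  rw [c.eq_one m y hm]

lemma D_eq_zero {m : ℕ} {y : Euc n} (hy : y ∈ ball (0 : Euc n) (m + 1)) (i : Fin n) :
    D i (c.φ m) y = 0 := by
  have : c.φ m =ᶠ[𝓝 y] fun _ => 1 := by
    filter_upwards [isOpen_ball.mem_nhds hy] with z hz using c.eq_one m z hz
  unfold D; rw [this.fderiv_eq]; simp

lemma D_tendsto (i : Fin n) (y : Euc n) : Tendsto (fun m => D i (c.φ m) y) atTop (𝓝 0) := by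
  apply tendsto_const_nhds.congr'
  filter_upwards [ev_ball y] with m hm
  rw [c.D_eq_zero hm]

end Cutoffs

lemma tsupport_D_subset (i : Fin n) (f : Euc n → ℝ) : HasCompactSupport f → HasCompactSupport (D i f) := by
  intro h
  exact h.fderiv_apply ℝ _

/-- Integration by parts against a compactly supported function. -/
lemma ibp_compact {ψ F : Euc n → ℝ} (hψ : ContDiff ℝ 1 ψ) (hc : HasCompactSupport ψ)
    (hF : ContDiff ℝ 1 F) (i : Fin n) :
    ∫ y, ψ y * D i F y = -∫ y, D i ψ y * F y := by
  have c1 : HasCompactSupport (D i ψ) := tsupport_D_subset i ψ hc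
  refine integral_mul_fderiv_eq_neg_fderiv_mul_of_integrable (μ := (volume : Measure (Euc n)))
    (f := ψ) (g := F) (v := EuclideanSpace.single i 1) ?_ ?_ ?_ ?_ ?_
  · exact ((continuous_D hψ).mul hF.continuous).integrable_of_hasCompactSupport (c1.mul_right)
  · exact (hψ.continuous.mul (continuous_D hF)).integrable_of_hasCompactSupport (hc.mul_right)
  · exact (hψ.continuous.mul hF.continuous).integrable_of_hasCompactSupport (hc.mul_right)
  · exact fun x _ => (hψ.differentiable one_ne_zero) x
  · exact fun x _ => (hF.differentiable one_ne_zero) x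

lemma D_cutoff_gk {s : ℝ} (hs : 0 < s) (i : Fin n) {ψ : Euc n → ℝ} (hψ : ContDiff ℝ 1 ψ) (y : Euc n) :
    D i (fun y => ψ y * gk s y) y = (D i ψ y - ψ y * (y i / s)) * gk s y := by
  rw [D_mul ((hψ.differentiable one_ne_zero) y) (((gk_contDiff s).differentiable one_ne_zero) y),
    D_gk hs]; ring

/-- The Gaussian divergence theorem. -/
lemma av_div {s : ℝ} (hs : 0 < s) {F : Fin n → Euc n → ℝ} (hF : ∀ i, ContDiff ℝ 1 (F i))
    (hG : ∀ i, GI (F i)) (hd : GI (fun y => ∑ i, D i (F i) y)) :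
    av s (fun y => ∑ i, D i (F i) y) = (1 / s) * av s (fun y => ∑ i, F i y * y i) := by
  obtain ⟨c⟩ := exists_cutoffs n
  have key : ∀ m, ∫ y, c.φ m y * ((∑ i, D i (F i) y) * gk s y) =
      ∑ i, -∫ y, (D i (c.φ m) y - c.φ m y * (y i / s)) * (F i y * gk s y) := by
    intro m
    have hψ : ContDiff ℝ 1 (fun y => c.φ m y * gk s y) := (c.smooth m).mul (gk_contDiff s)
    have hψc : HasCompactSupport (fun y => c.φ m y * gk s y) := (c.supp m).mul_right
    have e : ∀ y, c.φ m y * ((∑ i, D i (F i) y) * gk s y) =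
        ∑ i, (c.φ m y * gk s y) * D i (F i) y := by
      intro y; rw [← Finset.mul_sum]; ring
    simp_rw [e]
    rw [integral_finsetSum]
    · refine Finset.sum_congr rfl fun i _ => ?_
      rw [ibp_compact hψ hψc (hF i)]
      congr 2; ext y
      rw [D_cutoff_gk hs i (c.smooth m)]; ring
    · intro i _
      exact (hψ.continuous.mul (continuous_D (hF i))).integrable_of_hasCompactSupport hψc.mul_right
  have lim1 : Tendsto (fun m => ∫ y, c.φ m y * ((∑ i, D i (F i) y) * gk s y)) atTop
      (𝓝 (av s (fun y => ∑ i, D i (F i) y))) := by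
    unfold av
    refine tendsto_integral_of_dominated_convergence (fun y => ‖(∑ i, D i (F i) y) * gk s y‖) ?_
      (hd.int s hs).norm ?_ ?_
    · intro m; exact ((c.cont m).mul (hd.cont.mul (gk_cont s))).aestronglyMeasurable
    · intro m; refine Eventually.of_forall fun y => ?_
      rw [norm_mul, norm_eq_abs, abs_of_nonneg (c.nonneg m y)]
      exact mul_le_of_le_one_left (norm_nonneg _) (c.le_one m y)
    · refine Eventually.of_forall fun y => ?_
      simpa using (c.tendsto y).mul_const ((∑ i, D i (F i) y) * gk s y)
  have hGy : ∀ i, GI (fun y => F i y * y i) := fun i => (hG i).mul_PG (PG.coord i)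
  have lim2 : ∀ i, Tendsto (fun m => ∫ y, (D i (c.φ m) y - c.φ m y * (y i / s)) * (F i y * gk s y))
      atTop (𝓝 (∫ y, -(1 / s) * ((F i y * y i) * gk s y))) := by
    intro i
    refine tendsto_integral_of_dominated_convergence
      (fun y => c.K * ‖F i y * gk s y‖ + (1 / s) * ‖(F i y * y i) * gk s y‖) ?_
      (((((hG i).int s hs).norm).const_mul _).add ((((hGy i).int s hs).norm).const_mul _)) ?_ ?_
    · intro m
      exact (((continuous_D (c.smooth m)).sub ((c.cont m).mul (by fun_prop))).mul
        ((hG i).cont.mul (gk_cont s))).aestronglyMeasurable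
    · intro m; refine Eventually.of_forall fun y => ?_
      have p := gk_pos hs y
      simp only [norm_mul, norm_eq_abs, abs_of_pos p]
      have h1 : |D i (c.φ m) y - c.φ m y * (y i / s)| ≤ c.K + (1 / s) * |y i| := by
        refine (abs_sub _ _).trans (add_le_add (c.D_le i m y) ?_)
        rw [abs_mul, abs_div, abs_of_pos hs, abs_of_nonneg (c.nonneg m y)]
        calc c.φ m y * (|y i| / s) ≤ 1 * (|y i| / s) := by
              gcongr; exact c.le_one m y
          _ = _ := by ring
      calc |D i (c.φ m) y - c.φ m y * (y i / s)| * (|F i y| * gk s y)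
          ≤ (c.K + (1 / s) * |y i|) * (|F i y| * gk s y) := by gcongr
        _ = _ := by ring
    · refine Eventually.of_forall fun y => ?_
      have := ((c.D_tendsto i y).sub ((c.tendsto y).mul_const (y i / s))).mul_const (F i y * gk s y)
      convert this using 2; ring
  have lim3 := tendsto_finsetSum Finset.univ (fun i _ => (lim2 i).neg)
  simp_rw [key] at lim1
  rw [tendsto_nhds_unique lim1 lim3, av_sum hs _ fun i _ => hGy i, Finset.mul_sum]
  refine Finset.sum_congr rfl fun i _ => ?_
  rw [integral_const_mul]; unfold av; ring

/-- Caccioppoli inequality: if `f Δf ≥ 0` and `f` has polynomial growth, then `∇f` is square integrable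
against every Gaussian. -/
lemma G2_D_of_lap {f : Euc n → ℝ} (hf : ContDiff ℝ 2 f) (h2 : PG f)
    (hl : ∀ y, 0 ≤ f y * lap f y) (i : Fin n) : G2 (D i f) := by
  obtain ⟨c⟩ := exists_cutoffs n
  have hf1 : ContDiff ℝ 1 f := hf.of_le (by norm_num)
  have hD1 : ∀ i, ContDiff ℝ 1 (D i f) := fun i => contDiff_D (k := 1) (by exact_mod_cast hf)
  have hcont : ∀ i, Continuous (D i f) := fun i => (hD1 i).continuous
  refine ⟨hcont i, (hcont i).pow 2, fun s hs => ?_⟩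
  have hW : GI (fun y => ∑ i, f y ^ 2 * (2 * |c.K| + |y i| / s) ^ 2) := by
    refine GI.sum _ fun i _ => PG.GI ((h2.pow 2).mul (PG.pow ?_ 2))
    refine (PG.const _).add ?_
    have := (PG.const (1 / s)).mul (PG.coord i)
    refine this.mono (by fun_prop) fun y => ?_
    rw [abs_mul, abs_of_pos (by positivity : 0 < 1 / s), abs_div, abs_abs, abs_of_pos hs]
    apply le_of_eq; ring
  have key : ∀ m, ∫ y, (c.φ m y ^ 2 * gk s y) * ∑ i, D i f y ^ 2 ≤
      av s (fun y => ∑ i, f y ^ 2 * (2 * |c.K| + |y i| / s) ^ 2) := by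
    intro m
    have hψ0 : ContDiff ℝ 1 (fun y => c.φ m y ^ 2) := (c.smooth m).pow 2
    have hψ : ContDiff ℝ 1 (fun y => c.φ m y ^ 2 * gk s y) := hψ0.mul (gk_contDiff s)
    have hs2 : HasCompactSupport (fun y => c.φ m y ^ 2) := by
      have := (c.supp m).mul_right (f' := c.φ m)
      simp only [sq]; exact this
    have hψc : HasCompactSupport (fun y => c.φ m y ^ 2 * gk s y) := hs2.mul_right
    have hcs : ∀ g : Euc n → ℝ, Continuous g → Integrable (fun y => (c.φ m y ^ 2 * gk s y) * g y) :=
      fun g hg => (hψ.continuous.mul hg).integrable_of_hasCompactSupport hψc.mul_right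
    have hlc : Continuous (lap f) := by
      have : lap f = fun x => ∑ i, D i (D i f) x := rfl
      rw [this]; exact continuous_finsetSum _ fun i _ => continuous_D (hD1 i)
    have h0 : ∀ i, ∫ y, (c.φ m y ^ 2 * gk s y) * D i (fun y => f y * D i f y) y =
        -∫ y, ((2 * c.φ m y * D i (c.φ m) y - c.φ m y ^ 2 * (y i / s)) * gk s y) * (f y * D i f y) := by
      intro i
      rw [ibp_compact hψ hψc (hf1.mul (hD1 i))]
      congr 2; ext y
      rw [D_cutoff_gk hs i hψ0, D_sq ((c.smooth m).differentiable one_ne_zero y)]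
    have hint2 : ∀ i, Integrable (fun y => ((2 * c.φ m y * D i (c.φ m) y - c.φ m y ^ 2 * (y i / s)) * gk s y) * (f y * D i f y)) := by
      intro i
      have e : (fun y => ((2 * c.φ m y * D i (c.φ m) y - c.φ m y ^ 2 * (y i / s)) * gk s y) * (f y * D i f y))
        = fun y => c.φ m y * (((2 * D i (c.φ m) y - c.φ m y * (y i / s)) * gk s y) * (f y * D i f y)) := by
        ext y; ring
      rw [e]
      refine Continuous.integrable_of_hasCompactSupport ?_ (c.supp m).mul_right
      have := continuous_D (i := i) (c.smooth m)
      have := c.cont m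
      have := gk_cont (n := n) s
      have := hcont i
      have := hf.continuous
      fun_prop
    have hsum : ∫ y, (c.φ m y ^ 2 * gk s y) * (∑ i, D i f y ^ 2 + f y * lap f y) =
        ∑ i, -∫ y, ((2 * c.φ m y * D i (c.φ m) y - c.φ m y ^ 2 * (y i / s)) * gk s y) * (f y * D i f y) := by
      simp_rw [← h0]
      rw [← integral_finsetSum]
      · congr 1; ext y
        rw [← Finset.mul_sum, lap_eq, Finset.mul_sum, ← Finset.sum_add_distrib]
        congr 1
        refine Finset.sum_congr rfl fun i _ => ?_
        rw [D_mul ((hf1.differentiable one_ne_zero) y) (((hD1 i).differentiable one_ne_zero) y)]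
        ring
      · intro i _
        exact hcs _ (continuous_D (hf1.mul (hD1 i)))
    have hle : ∫ y, (c.φ m y ^ 2 * gk s y) * ∑ i, D i f y ^ 2 ≤
        ∑ i, -∫ y, ((2 * c.φ m y * D i (c.φ m) y - c.φ m y ^ 2 * (y i / s)) * gk s y) * (f y * D i f y) := by
      rw [← hsum]
      refine integral_mono (hcs _ (continuous_finsetSum _ fun i _ => (hcont i).pow 2))
        (hcs _ ((continuous_finsetSum _ fun i _ => (hcont i).pow 2).add (hf.continuous.mul hlc))) fun y => ?_
      refine mul_le_mul_of_nonneg_left ?_ (mul_nonneg (sq_nonneg _) (gk_pos hs y).le)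
      linarith [hl y]
    have hle2 : ∑ i, -∫ y, ((2 * c.φ m y * D i (c.φ m) y - c.φ m y ^ 2 * (y i / s)) * gk s y) * (f y * D i f y)
        ≤ (1 / 2) * (∫ y, (c.φ m y ^ 2 * gk s y) * ∑ i, D i f y ^ 2) + (1 / 2) * av s (fun y => ∑ i, f y ^ 2 * (2 * |c.K| + |y i| / s) ^ 2) := by
      simp_rw [← integral_neg]
      have hint3 : ∀ i ∈ Finset.univ, Integrable (fun y => -(((2 * c.φ m y * D i (c.φ m) y -
          c.φ m y ^ 2 * (y i / s)) * gk s y) * (f y * D i f y))) := fun i _ => (hint2 i).neg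
      have hint4 : Integrable (fun y => (c.φ m y ^ 2 * gk s y) * ∑ i, D i f y ^ 2) :=
        hcs _ (continuous_finsetSum _ fun i _ => (hcont i).pow 2)
      rw [← integral_finsetSum _ hint3, ← integral_const_mul, av, ← integral_const_mul,
        ← integral_add (hint4.const_mul _)
          ((hW.int s hs).const_mul _)]
      refine integral_mono (integrable_finsetSum _ hint3)
        ((hint4.const_mul _).add
          ((hW.int s hs).const_mul _)) fun y => ?_
      have p := gk_pos hs y
      have e1 : 1 / 2 * (c.φ m y ^ 2 * gk s y * ∑ i, D i f y ^ 2) +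
          1 / 2 * ((∑ i, f y ^ 2 * (2 * |c.K| + |y i| / s) ^ 2) * gk s y) =
          ∑ i, gk s y * (1 / 2 * (c.φ m y * D i f y) ^ 2 + 1 / 2 * (f y * (2 * |c.K| + |y i| / s)) ^ 2) := by
        simp only [mul_add, mul_pow, Finset.sum_add_distrib, Finset.mul_sum, Finset.sum_mul]
        congr 1 <;> refine Finset.sum_congr rfl fun i _ => ?_ <;> ring
      simp only [e1]
      refine Finset.sum_le_sum fun i _ => ?_
      have a0 := c.nonneg m y
      have a1 := c.le_one m y
      have a2 : |2 * D i (c.φ m) y - c.φ m y * (y i / s)| ≤ 2 * |c.K| + |y i| / s := by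
        refine (abs_sub _ _).trans (add_le_add ?_ ?_)
        · rw [abs_mul, abs_two]; linarith [c.D_le i m y, le_abs_self c.K]
        · rw [abs_mul, abs_div, abs_of_pos hs, abs_of_nonneg a0]
          exact mul_le_of_le_one_left (by positivity) a1
      set A := 2 * D i (c.φ m) y - c.φ m y * (y i / s) with hA
      have e2 : -((2 * c.φ m y * D i (c.φ m) y - c.φ m y ^ 2 * (y i / s)) * gk s y * (f y * D i f y))
        = gk s y * (-(c.φ m y * D i f y) * (f y * A)) := by rw [hA]; ring
      rw [e2]
      refine mul_le_mul_of_nonneg_left ?_ p.le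
      have e3 : (f y * A) ^ 2 ≤ (f y * (2 * |c.K| + |y i| / s)) ^ 2 := by
        rw [mul_pow, mul_pow]
        refine mul_le_mul_of_nonneg_left ?_ (sq_nonneg _)
        rw [← sq_abs A]; exact pow_le_pow_left₀ (abs_nonneg _) a2 2
      nlinarith [sq_nonneg (c.φ m y * D i f y + f y * A)]
    linarith
  have hr : Tendsto (fun m : ℕ => (m + 1 : ℝ)) atTop atTop :=
    tendsto_atTop_add_const_right _ _ tendsto_natCast_atTop_atTop
  have hcover := aecover_ball (μ := (volume : Measure (Euc n))) (x := 0) hr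
  have hcs : Continuous (fun y => ∑ j, D j f y ^ 2) := continuous_finsetSum _ fun i _ => (hcont i).pow 2
  refine hcover.integrable_of_integral_bounded_of_nonneg_ae
    (av s (fun y => ∑ i, f y ^ 2 * (2 * |c.K| + |y i| / s) ^ 2)) ?_ ?_ ?_
  · intro m
    exact ((((hcont i).pow 2).mul (gk_cont s)).locallyIntegrable.integrableOn_isCompact
      (isCompact_closedBall (0 : Euc n) (m + 1))).mono_set ball_subset_closedBall
  · exact Eventually.of_forall fun y => mul_nonneg (sq_nonneg _) (gk_pos hs y).le
  · refine Eventually.of_forall fun m => le_trans ?_ (key m)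
    have hI : Integrable (fun y => (c.φ m y ^ 2 * gk s y) * ∑ i, D i f y ^ 2) := by
      have e : (fun y => (c.φ m y ^ 2 * gk s y) * ∑ i, D i f y ^ 2) =
          fun y => c.φ m y * ((c.φ m y * gk s y) * ∑ i, D i f y ^ 2) := by ext y; ring
      rw [e]
      exact ((c.cont m).mul (((c.cont m).mul (gk_cont s)).mul hcs)).integrable_of_hasCompactSupport
        (c.supp m).mul_right
    refine le_trans ?_ (setIntegral_le_integral (s := ball (0 : Euc n) (m + 1)) hI
      (Eventually.of_forall fun y => mul_nonneg (mul_nonneg (sq_nonneg _) (gk_pos hs y).le)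
        (Finset.sum_nonneg fun i _ => sq_nonneg _)))
    refine setIntegral_mono_on ?_ hI.integrableOn measurableSet_ball ?_
    · exact ((((hcont i).pow 2).mul (gk_cont s)).locallyIntegrable.integrableOn_isCompact
        (isCompact_closedBall (0 : Euc n) (m + 1))).mono_set ball_subset_closedBall
    · intro y hy
      rw [c.eq_one m y hy]
      have : D i f y ^ 2 ≤ ∑ j, D j f y ^ 2 :=
        Finset.single_le_sum (f := fun j => D j f y ^ 2) (fun _ _ => sq_nonneg _) (Finset.mem_univ i)
      nlinarith [gk_pos hs y]

end TR

/-! ### Mehler correlations -/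

namespace TR
open Real Filter Topology

variable {n : ℕ}

/-- The product Gaussian density on `ℝⁿ × ℝⁿ`. -/
noncomputable def gg (s : ℝ) (p : Euc n × Euc n) : ℝ := gk s p.1 * gk s p.2

lemma gg_cont (s : ℝ) : Continuous (gg s : Euc n × Euc n → ℝ) :=
  ((gk_cont s).comp continuous_fst).mul ((gk_cont s).comp continuous_snd)

lemma gg_pos {s : ℝ} (hs : 0 < s) (p : Euc n × Euc n) : 0 < gg s p :=
  mul_pos (gk_pos hs _) (gk_pos hs _)

/-- Orthogonal `2 × 2` matrices, acting blockwise, preserve Lebesgue measure. -/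
lemma measurePreserving_orth {a b c d : ℝ} (h1 : a ^ 2 + b ^ 2 = 1) (h2 : c ^ 2 + d ^ 2 = 1)
    (h3 : a * c + b * d = 0) (k1 : a ^ 2 + c ^ 2 = 1) (k2 : b ^ 2 + d ^ 2 = 1)
    (k3 : a * b + c * d = 0) :
    MeasurePreserving (fun p : Euc n × Euc n => (a • p.1 + b • p.2, c • p.1 + d • p.2))
      volume volume := by
  let L : WithLp 2 (Euc n × Euc n) ≃ₗ[ℝ] WithLp 2 (Euc n × Euc n) :=
    { toFun := fun p => WithLp.toLp 2 (a • p.fst + b • p.snd, c • p.fst + d • p.snd)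
      invFun := fun p => WithLp.toLp 2 (a • p.fst + c • p.snd, b • p.fst + d • p.snd)
      map_add' := by
        intro p q; refine WithLp.ofLp_injective 2 (Prod.ext ?_ ?_) <;> ext i <;> simp <;> ring
      map_smul' := by
        intro r p; refine WithLp.ofLp_injective 2 (Prod.ext ?_ ?_) <;> ext i <;> simp <;> ring
      left_inv := by
        intro p; refine WithLp.ofLp_injective 2 (Prod.ext ?_ ?_) <;> ext i
        · simp
          linear_combination (p.fst i) * k1 + (p.snd i) * k3
        · simp
          linear_combination (p.fst i) * k3 + (p.snd i) * k2
      right_inv := by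
        intro p; refine WithLp.ofLp_injective 2 (Prod.ext ?_ ?_) <;> ext i
        · simp
          linear_combination (p.fst i) * h1 + (p.snd i) * h3
        · simp
          linear_combination (p.fst i) * h3 + (p.snd i) * h2 }
  let Li : WithLp 2 (Euc n × Euc n) ≃ₗᵢ[ℝ] WithLp 2 (Euc n × Euc n) :=
    { L with
      norm_map' := by
        intro p
        have : ‖L p‖ ^ 2 = ‖p‖ ^ 2 := by
          rw [WithLp.prod_norm_sq_eq_of_L2, WithLp.prod_norm_sq_eq_of_L2]
          change ‖a • p.fst + b • p.snd‖ ^ 2 + ‖c • p.fst + d • p.snd‖ ^ 2 = _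
          simp only [norm_add_sq_real, norm_smul, inner_smul_left, inner_smul_right, mul_pow, norm_eq_abs,
            sq_abs, conj_trivial]
          linear_combination (‖p.fst‖ ^ 2) * k1 + (‖p.snd‖ ^ 2) * k2 + 2 * (inner ℝ p.fst p.snd) * k3
        exact (sq_eq_sq₀ (norm_nonneg _) (norm_nonneg _)).mp this }
  have m1 := (WithLp.volume_preserving_toLp (Euc n) (Euc n))
  have m2 := Li.measurePreserving
  have m3 := (WithLp.volume_preserving_ofLp (Euc n) (Euc n))
  exact m3.comp (m2.comp m1)

lemma norm_sq_coord (y : Euc n) : ‖y‖ ^ 2 = ∑ i, y i ^ 2 := by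
  rw [EuclideanSpace.norm_sq_eq]; simp

lemma gg_orth {a b c d : ℝ} (s : ℝ) (k1 : a ^ 2 + c ^ 2 = 1) (k2 : b ^ 2 + d ^ 2 = 1)
    (k3 : a * b + c * d = 0) (p : Euc n × Euc n) :
    gg s (a • p.1 + b • p.2, c • p.1 + d • p.2) = gg s p := by
  unfold gg gk
  have : ‖a • p.1 + b • p.2‖ ^ 2 + ‖c • p.1 + d • p.2‖ ^ 2 = ‖p.1‖ ^ 2 + ‖p.2‖ ^ 2 := by
    simp only [norm_add_sq_real, norm_smul, inner_smul_left, inner_smul_right, mul_pow, norm_eq_abs,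
            sq_abs, conj_trivial]
    linear_combination (‖p.1‖ ^ 2) * k1 + (‖p.2‖ ^ 2) * k2 + 2 * (inner ℝ p.1 p.2) * k3
  have e : ∀ x y : ℝ, (2 * π * s) ^ (-(n / 2 : ℝ)) * exp (-x / (2 * s)) * ((2 * π * s) ^ (-(n / 2 : ℝ)) * exp (-y / (2 * s)))
      = (2 * π * s) ^ (-(n / 2 : ℝ)) * (2 * π * s) ^ (-(n / 2 : ℝ)) * exp (-(x + y) / (2 * s)) := by
    intro x y
    rw [show -(x + y) / (2 * s) = -x / (2 * s) + -y / (2 * s) by ring, exp_add]; ring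
  rw [e, e, this]

lemma integral_orth {a b c d : ℝ} (s : ℝ) (h1 : a ^ 2 + b ^ 2 = 1) (h2 : c ^ 2 + d ^ 2 = 1)
    (h3 : a * c + b * d = 0) (k1 : a ^ 2 + c ^ 2 = 1) (k2 : b ^ 2 + d ^ 2 = 1)
    (k3 : a * b + c * d = 0) {h : Euc n × Euc n → ℝ} (hh : Continuous h) :
    ∫ p : Euc n × Euc n, h (a • p.1 + b • p.2, c • p.1 + d • p.2) * gg s p =
      ∫ p : Euc n × Euc n, h p * gg s p := by
  have mp := measurePreserving_orth (n := n) h1 h2 h3 k1 k2 k3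
  have hc : Continuous (fun p => h p * gg s p) := hh.mul (gg_cont s)
  have := MeasureTheory.integral_map (μ := (volume : Measure (Euc n × Euc n))) mp.measurable.aemeasurable
    (f := fun p => h p * gg s p) hc.aestronglyMeasurable
  rw [mp.map_eq] at this
  rw [this]
  congr 1; ext p
  rw [gg_orth s k1 k2 k3]

lemma gg_integrable {s : ℝ} (hs : 0 < s) {h : Euc n × Euc n → ℝ} (hh : Continuous h) {C : ℝ}
    (hb : ∀ p, |h p| ≤ C * ((1 + ‖p.1‖ ^ 2) * (1 + ‖p.2‖ ^ 2))) :
    Integrable (fun p => h p * gg s p) := by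
  have h1 : GI (fun y : Euc n => 1 + ‖y‖ ^ 2) := ((PG.const 1).add PG.norm_sq).GI
  have h2 := ((h1.int s hs).mul_prod (h1.int s hs)).const_mul C
  refine h2.mono (hh.mul (gg_cont s)).aestronglyMeasurable (Eventually.of_forall fun p => ?_)
  have p1 := gg_pos hs p
  rw [norm_mul, norm_eq_abs, norm_eq_abs, abs_of_pos p1]
  calc |h p| * gg s p ≤ C * ((1 + ‖p.1‖ ^ 2) * (1 + ‖p.2‖ ^ 2)) * gg s p :=
        mul_le_mul_of_nonneg_right (hb p) p1.le
    _ = C * ((1 + ‖p.1‖ ^ 2) * gk s p.1 * ((1 + ‖p.2‖ ^ 2) * gk s p.2)) := by unfold gg; ring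
    _ ≤ _ := le_abs_self _

lemma gg_integrable_bdd {s : ℝ} (hs : 0 < s) {h : Euc n × Euc n → ℝ} (hh : Continuous h) {C : ℝ}
    (hb : ∀ p, |h p| ≤ C) : Integrable (fun p => h p * gg s p) := by
  refine gg_integrable hs hh (C := C) fun p => (hb p).trans ?_
  have hC : 0 ≤ C := (abs_nonneg _).trans (hb p)
  apply le_mul_of_one_le_right hC
  nlinarith [sq_nonneg ‖p.1‖, sq_nonneg ‖p.2‖, mul_nonneg (sq_nonneg ‖p.1‖) (sq_nonneg ‖p.2‖)]

/-- The Mehler correlation `E[g(X) g(cos θ X - sin θ Y)]` of two independent Gaussian vectors `X, Y` of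
variance `s`. It interpolates between `E[g²]` at `θ = 0` and `E[g]²` at `θ = π/2`. -/
noncomputable def corr (s : ℝ) (g : Euc n → ℝ) (θ : ℝ) : ℝ :=
  ∫ p : Euc n × Euc n, (g p.1 * g (cos θ • p.1 + (-sin θ) • p.2)) * gg s p

section corr
variable {s : ℝ} {g : Euc n → ℝ}

lemma gg_prod (f g : Euc n → ℝ) :
    ∫ p : Euc n × Euc n, (f p.1 * g p.2) * gg s p = av s f * av s g := by
  unfold av
  rw [← integral_prod_mul]
  congr 1; ext p; unfold gg; ring

lemma corr_reflect (hg : Continuous g) (θ : ℝ) :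
    corr s g θ = ∫ p : Euc n × Euc n, (g p.1 * g (cos θ • p.1 + sin θ • p.2)) * gg s p := by
  unfold corr
  have := integral_orth (n := n) (a := 1) (b := 0) (c := 0) (d := -1) s (by norm_num) (by norm_num)
    (by norm_num) (by norm_num) (by norm_num) (by norm_num)
    (h := fun p => g p.1 * g (cos θ • p.1 + sin θ • p.2)) (by fun_prop)
  simpa using this

lemma corr_sq (hs : 0 < s) (hg : Continuous g) (θ : ℝ) :
    ∫ p : Euc n × Euc n, (g (cos θ • p.1 + (-sin θ) • p.2)) ^ 2 * gg s p = av s (fun y => g y ^ 2) := by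
  have e := sin_sq_add_cos_sq θ
  have := integral_orth (n := n) (a := cos θ) (b := -sin θ) (c := sin θ) (d := cos θ) s
    (by linarith) (by linarith) (by ring) (by linarith) (by linarith) (by ring)
    (h := fun p => g p.1 ^ 2) (by fun_prop)
  have h2 := gg_prod (n := n) (s := s) (fun y => g y ^ 2) (fun _ => 1)
  simp only [mul_one, av_const hs] at h2
  simpa [h2] using this

lemma corr_sq' (hs : 0 < s) (hg : Continuous g) (θ : ℝ) :
    ∫ p : Euc n × Euc n, (g (sin θ • p.1 + cos θ • p.2)) ^ 2 * gg s p = av s (fun y => g y ^ 2) := by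
  have := corr_sq hs hg (θ - π / 2)
  simpa [cos_sub_pi_div_two, sin_sub_pi_div_two] using this

lemma corr_indep (hg : Continuous g) (θ : ℝ) :
    ∫ p : Euc n × Euc n, (g (cos θ • p.1 + (-sin θ) • p.2) * g (sin θ • p.1 + cos θ • p.2)) * gg s p
      = av s g ^ 2 := by
  have e := sin_sq_add_cos_sq θ
  have := integral_orth (n := n) (a := cos θ) (b := -sin θ) (c := sin θ) (d := cos θ) s
    (by linarith) (by linarith) (by ring) (by linarith) (by linarith) (by ring)
    (h := fun p => g p.1 * g p.2) (by fun_prop)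
  rw [this, gg_prod]; ring

lemma sq_fst (hs : 0 < s) : ∫ p : Euc n × Euc n, (g p.1) ^ 2 * gg s p = av s (fun y => g y ^ 2) := by
  have h2 := gg_prod (n := n) (s := s) (fun y => g y ^ 2) (fun _ => 1)
  simpa only [mul_one, av_const hs] using h2

lemma corr_le (hs : 0 < s) (hg : Continuous g) {M : ℝ} (hM : ∀ y, |g y| ≤ M) (θ : ℝ) :
    corr s g θ ≤ av s (fun y => g y ^ 2) := by
  have hM0 : 0 ≤ M := (abs_nonneg _).trans (hM 0)
  have b2 : ∀ x y, |g x * g y| ≤ M ^ 2 := fun x y => by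
    rw [abs_mul, sq]; exact mul_le_mul (hM x) (hM y) (abs_nonneg _) hM0
  have i1 := gg_integrable_bdd hs (h := fun p : Euc n × Euc n => g p.1 * g (cos θ • p.1 + (-sin θ) • p.2))
    (by fun_prop) (fun p => b2 _ _)
  have i2 := gg_integrable_bdd hs (h := fun p : Euc n × Euc n => g p.1 ^ 2)
    (by fun_prop) (fun p => by rw [sq]; exact b2 _ _)
  have i3 := gg_integrable_bdd hs (h := fun p : Euc n × Euc n => g (cos θ • p.1 + (-sin θ) • p.2) ^ 2)
    (by fun_prop) (fun p => by rw [sq]; exact b2 _ _)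
  have h := integral_mono (i1.const_mul 2) (i2.add i3) (fun p => by
    have := gg_pos hs p
    simp only [Pi.add_apply]
    nlinarith [sq_nonneg (g p.1 - g (cos θ • p.1 + (-sin θ) • p.2))])
  rw [integral_const_mul, integral_add' i2 i3, corr_sq hs hg, sq_fst hs] at h
  unfold corr; linarith

/-- The correlations at `θ` and `π/2 - θ` cannot both be close to `E[g²]`: up to a reflection they compare
`g(X)` with `g` at two Gaussian vectors that are independent of each other, so a fixed fraction of the
variance of `g` is lost in the sum. -/
lemma corr_add_le (hs : 0 < s) (hg : Continuous g) {M : ℝ} (hM : ∀ y, |g y| ≤ M) (θ : ℝ) :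
    corr s g θ + corr s g (π / 2 - θ) ≤ 2 * av s (fun y => g y ^ 2)
      - 1 / 2 * (av s (fun y => g y ^ 2) - av s g ^ 2) := by
  have hM0 : 0 ≤ M := (abs_nonneg _).trans (hM 0)
  have b2 : ∀ x y, |g x * g y| ≤ M ^ 2 := fun x y => by
    rw [abs_mul, sq]; exact mul_le_mul (hM x) (hM y) (abs_nonneg _) hM0
  rw [corr_reflect hg (π / 2 - θ), cos_pi_div_two_sub, sin_pi_div_two_sub, ← corr_indep hg θ]
  unfold corr
  have i1 := gg_integrable_bdd hs (h := fun p : Euc n × Euc n => g p.1 * g (cos θ • p.1 + (-sin θ) • p.2))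
    (by fun_prop) (fun p => b2 _ _)
  have i2 := gg_integrable_bdd hs (h := fun p : Euc n × Euc n => g p.1 * g (sin θ • p.1 + cos θ • p.2))
    (by fun_prop) (fun p => b2 _ _)
  have i3 := gg_integrable_bdd hs (h := fun p : Euc n × Euc n => g (cos θ • p.1 + (-sin θ) • p.2) * g (sin θ • p.1 + cos θ • p.2))
    (by fun_prop) (fun p => b2 _ _)
  have j1 := gg_integrable_bdd hs (h := fun p : Euc n × Euc n => g p.1 ^ 2)
    (by fun_prop) (fun p => by rw [sq]; exact b2 _ _)
  have j2 := gg_integrable_bdd hs (h := fun p : Euc n × Euc n => g (cos θ • p.1 + (-sin θ) • p.2) ^ 2)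
    (by fun_prop) (fun p => by rw [sq]; exact b2 _ _)
  have j3 := gg_integrable_bdd hs (h := fun p : Euc n × Euc n => g (sin θ • p.1 + cos θ • p.2) ^ 2)
    (by fun_prop) (fun p => by rw [sq]; exact b2 _ _)
  have h := integral_mono ((i1.const_mul 4).add (i2.const_mul 4))
    ((((j1.const_mul 4).add j2).add j3).add (i3.const_mul 2)) (fun p => by
    have := gg_pos hs p
    simp only [Pi.add_apply]
    nlinarith [mul_nonneg this.le (sq_nonneg (2 * g p.1 - g (cos θ • p.1 + (-sin θ) • p.2) - g (sin θ • p.1 + cos θ • p.2)))])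
  rw [integral_add' (i1.const_mul 4) (i2.const_mul 4),
    integral_add' (((j1.const_mul 4).add j2).add j3) (i3.const_mul 2),
    integral_add' ((j1.const_mul 4).add j2) j3,
    integral_add' (j1.const_mul 4) j2] at h
  simp only [integral_const_mul] at h
  rw [corr_sq hs hg, sq_fst hs, corr_sq' hs hg] at h
  linarith

/-- One-component Gaussian integration by parts. -/
lemma av_ibp (hs : 0 < s) (hg : ContDiff ℝ 1 g) (hG : GI g) (i : Fin n) (hd : GI (D i g)) :
    av s (fun y => g y * y i) = s * av s (D i g) := by
  classical
  have e1 : ∀ y, ∑ j, D j (if j = i then g else fun _ => 0) y = D i g y := by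
    intro y
    rw [Finset.sum_eq_single i]
    · simp
    · intro j _ hj; simp [hj, D_const]
    · simp
  have e2 : ∀ y : Euc n, ∑ j, (if j = i then g else fun _ => 0) y * y j = g y * y i := by
    intro y
    rw [Finset.sum_eq_single i]
    · simp
    · intro j _ hj; simp [hj]
    · simp
  have := av_div hs (F := fun j => if j = i then g else fun _ => 0) (fun j => by
    by_cases h : j = i
    · simpa [h] using hg
    · simpa [h] using contDiff_const) (fun j => by
    by_cases h : j = i
    · simpa [h] using hG
    · simpa [h] using GI.const 0) (by simpa only [e1] using hd)
  simp only [e1, e2] at this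
  rw [show (fun y => D i g y) = D i g from rfl] at this
  rw [this]; field_simp

lemma bdd_of_compact {f : Euc n → ℝ} (hf : Continuous f) (hc : HasCompactSupport f) :
    ∃ M, 0 ≤ M ∧ ∀ y, |f y| ≤ M := by
  obtain ⟨M, hM⟩ := hf.bounded_above_of_compact_support hc
  exact ⟨M, (norm_nonneg _).trans (hM 0), hM⟩

lemma PG_of_bdd {f : Euc n → ℝ} (hf : Continuous f) {M : ℝ} (hM : ∀ y, |f y| ≤ M) : PG f :=
  ⟨hf, M, (abs_nonneg _).trans (hM 0), 0, fun y => by simpa using hM y⟩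

lemma abs_coord_le (y : Euc n) (i : Fin n) : |y i| ≤ ‖y‖ := by
  simpa using PiLp.norm_apply_le y i

lemma norm_le_one_add_sq (x : Euc n) : ‖x‖ ≤ 1 + ‖x‖ ^ 2 := by nlinarith [sq_nonneg (‖x‖ - 1), norm_nonneg x]

/-- The derivative of the Mehler correlation is again a Mehler correlation, that of the gradient. -/
lemma corr_hasDerivAt (hs : 0 < s) {w : Euc n → ℝ} (hw : ContDiff ℝ 1 w) (hc : HasCompactSupport w)
    (θ : ℝ) : HasDerivAt (corr s w) (-(s * sin θ * ∑ i, corr s (D i w) θ)) θ := by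
  obtain ⟨M, hM0, hM⟩ := bdd_of_compact hw.continuous hc
  have hDb : ∃ K, ∀ x, ‖fderiv ℝ w x‖ ≤ K :=
    (hw.continuous_fderiv one_ne_zero).bounded_above_of_compact_support (hc.fderiv ℝ)
  obtain ⟨K, hK⟩ := hDb
  have hK0 : 0 ≤ K := (norm_nonneg _).trans (hK 0)
  have hDK : ∀ i y, |D i w y| ≤ K := fun i y => by
    rw [← norm_eq_abs]
    refine ((fderiv ℝ w y).le_opNorm _).trans ?_
    simpa using hK y
  have hDc : ∀ i, Continuous (D i w) := fun i => continuous_D hw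
  have hder : ∀ (p : Euc n × Euc n) (t : ℝ), HasDerivAt (fun t => w (cos t • p.1 + sin t • p.2))
      (fderiv ℝ w (cos t • p.1 + sin t • p.2) (-sin t • p.1 + cos t • p.2)) t := by
    intro p t
    have h1 : HasDerivAt (fun t => cos t • p.1 + sin t • p.2) (-sin t • p.1 + cos t • p.2) t :=
      ((hasDerivAt_cos t).smul_const p.1).add ((hasDerivAt_sin t).smul_const p.2)
    exact ((hw.differentiable one_ne_zero) _).hasFDerivAt.comp_hasDerivAt t h1
  have hgrow : ∀ (p : Euc n × Euc n) (t : ℝ), ‖-sin t • p.1 + cos t • p.2‖ ≤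
      2 * ((1 + ‖p.1‖ ^ 2) * (1 + ‖p.2‖ ^ 2)) := by
    intro p t
    have a1 : ‖-sin t • p.1 + cos t • p.2‖ ≤ ‖p.1‖ + ‖p.2‖ := by
      refine (norm_add_le _ _).trans (add_le_add ?_ ?_) <;> rw [norm_smul]
      · exact mul_le_of_le_one_left (norm_nonneg _) (by simpa using abs_sin_le_one t)
      · exact mul_le_of_le_one_left (norm_nonneg _) (by simpa using abs_cos_le_one t)
    nlinarith [norm_le_one_add_sq p.1, norm_le_one_add_sq p.2, sq_nonneg ‖p.1‖, sq_nonneg ‖p.2‖, mul_nonneg (sq_nonneg ‖p.1‖) (sq_nonneg ‖p.2‖)]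
  have hfin := hasDerivAt_integral_of_dominated_loc_of_deriv_le (μ := (volume : Measure (Euc n × Euc n)))
    (x₀ := θ) (s := univ)
    (F := fun t p => (w p.1 * w (cos t • p.1 + sin t • p.2)) * gg s p)
    (F' := fun t p => (w p.1 * fderiv ℝ w (cos t • p.1 + sin t • p.2) (-sin t • p.1 + cos t • p.2)) * gg s p)
    (bound := fun p => (M * (K * (2 * ((1 + ‖p.1‖ ^ 2) * (1 + ‖p.2‖ ^ 2))))) * gg s p) univ_mem
    (Eventually.of_forall fun t => ((by have := hw.continuous; fun_prop : Continuous fun p : Euc n × Euc n => w p.1 * w (cos t • p.1 + sin t • p.2)).mul (gg_cont s)).aestronglyMeasurable)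
    (gg_integrable_bdd hs (by have := hw.continuous; fun_prop) (C := M * M) fun p => by
      rw [abs_mul]; exact mul_le_mul (hM _) (hM _) (abs_nonneg _) hM0)
    ((((hw.continuous.comp continuous_fst).mul (((hw.continuous_fderiv one_ne_zero).comp (by fun_prop)).clm_apply (by fun_prop)))).mul (gg_cont s)).aestronglyMeasurable
    ?_ ?_ ?_
  rotate_left
  · refine Eventually.of_forall fun p t _ => ?_
    have p1 := gg_pos hs p
    rw [norm_mul, norm_mul, norm_eq_abs, norm_eq_abs (gg s p), abs_of_pos p1]
    refine mul_le_mul_of_nonneg_right ?_ p1.le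
    refine mul_le_mul (hM _) ?_ (norm_nonneg _) hM0
    exact ((fderiv ℝ w _).le_opNorm _).trans (mul_le_mul (hK _) (hgrow p t) (norm_nonneg _) hK0)
  · refine gg_integrable hs (by fun_prop) (C := M * (K * 2)) fun p => ?_
    rw [abs_of_nonneg (by positivity)]; apply le_of_eq; ring
  · refine Eventually.of_forall fun p t _ => ?_
    exact ((hder p t).const_mul (w p.1)).mul_const _
  have e0 : corr s w = fun t => ∫ p : Euc n × Euc n, (w p.1 * w (cos t • p.1 + sin t • p.2)) * gg s p := by
    ext t; exact corr_reflect hw.continuous t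
  rw [e0]
  refine hfin.2.congr_deriv ?_
  -- the rotation turns the second argument into an independent variable, so that Gaussian integration
  -- by parts applies
  have e := sin_sq_add_cos_sq θ
  have hrot := integral_orth (n := n) (a := cos θ) (b := sin θ) (c := -sin θ) (d := cos θ) s
    (by linarith) (by linarith) (by ring) (by linarith) (by linarith) (by ring)
    (h := fun p => ∑ i, w (cos θ • p.1 + (-sin θ) • p.2) * D i w p.1 * p.2 i)
    (continuous_finsetSum _ fun i _ => by have := hw.continuous; have := hDc i; fun_prop)
  have e1 : ∀ p : Euc n × Euc n,
      w p.1 * fderiv ℝ w (cos θ • p.1 + sin θ • p.2) (-sin θ • p.1 + cos θ • p.2) =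
      ∑ i, w (cos θ • (cos θ • p.1 + sin θ • p.2) + (-sin θ) • (-sin θ • p.1 + cos θ • p.2)) *
        D i w (cos θ • p.1 + sin θ • p.2) * (-sin θ • p.1 + cos θ • p.2) i := by
    intro p
    have a1 : cos θ • (cos θ • p.1 + sin θ • p.2) + (-sin θ) • (-sin θ • p.1 + cos θ • p.2) = p.1 := by
      have : cos θ • (cos θ • p.1 + sin θ • p.2) + (-sin θ) • (-sin θ • p.1 + cos θ • p.2) =
        (sin θ ^ 2 + cos θ ^ 2) • p.1 := by module
      rw [this, e, one_smul]
    rw [a1]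
    set z := -sin θ • p.1 + cos θ • p.2
    have a2 : z = ∑ i, z i • EuclideanSpace.single i (1 : ℝ) := by
      have := (EuclideanSpace.basisFun (Fin n) ℝ).sum_repr z
      simpa using this.symm
    conv_lhs => rw [a2]
    rw [map_sum, Finset.mul_sum]
    refine Finset.sum_congr rfl fun i _ => ?_
    rw [map_smul, smul_eq_mul]; unfold D; ring
  simp only [e1]
  rw [hrot]
  have e2 : ∀ p : Euc n × Euc n, (∑ i, w (cos θ • p.1 + (-sin θ) • p.2) * D i w p.1 * p.2 i) * gg s p =
      ∑ i, (w (cos θ • p.1 + (-sin θ) • p.2) * D i w p.1 * p.2 i) * gg s p := fun p => Finset.sum_mul _ _ _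
  simp only [e2]
  have int1 : ∀ i, Integrable (fun p : Euc n × Euc n => (w (cos θ • p.1 + (-sin θ) • p.2) * D i w p.1 * p.2 i) * gg s p) := by
    intro i
    refine gg_integrable hs (by have := hw.continuous; have := hDc i; fun_prop) (C := M * K) fun p => ?_
    rw [abs_mul, abs_mul]
    refine mul_le_mul (mul_le_mul (hM _) (hDK i _) (abs_nonneg _) hM0) ?_ (abs_nonneg _) (by positivity)
    refine (abs_coord_le _ _).trans ((norm_le_one_add_sq _).trans ?_)
    nlinarith [sq_nonneg ‖p.1‖, sq_nonneg ‖p.2‖, mul_nonneg (sq_nonneg ‖p.1‖) (sq_nonneg ‖p.2‖)]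
  have int2 : ∀ i, Integrable (fun p : Euc n × Euc n => (D i w p.1 * D i w (cos θ • p.1 + (-sin θ) • p.2)) * gg s p) := by
    intro i
    refine gg_integrable_bdd hs (by have := hDc i; fun_prop) (C := K * K) fun p => ?_
    rw [abs_mul]; exact mul_le_mul (hDK i _) (hDK i _) (abs_nonneg _) hK0
  rw [integral_finsetSum _ fun i _ => int1 i, Finset.mul_sum, ← Finset.sum_neg_distrib]
  refine Finset.sum_congr rfl fun i _ => ?_
  unfold corr
  rw [← integral_const_mul, ← integral_neg]
  have int3 : Integrable (fun p : Euc n × Euc n => -(s * sin θ *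
      (D i w p.1 * D i w (cos θ • p.1 + (-sin θ) • p.2) * gg s p))) := ((int2 i).const_mul _).neg
  rw [Measure.volume_eq_prod, integral_prod _ (int1 i), integral_prod _ int3]
  congr 1; ext x
  -- integrate by parts in the second variable
  set a := cos θ • x
  have hg1 : ContDiff ℝ 1 (fun y : Euc n => w (a + (-sin θ) • y)) := hw.comp (by fun_prop)
  have hDg : ∀ y, D i (fun y : Euc n => w (a + (-sin θ) • y)) y = -sin θ * D i w (a + (-sin θ) • y) := by
    intro y
    have h0 : HasFDerivAt (fun y : Euc n => a + (-sin θ) • y) ((-sin θ) • ContinuousLinearMap.id ℝ (Euc n)) y :=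
      (((-sin θ) • ContinuousLinearMap.id ℝ (Euc n)).hasFDerivAt).const_add a
    have := (((hw.differentiable one_ne_zero) (a + (-sin θ) • y)).hasFDerivAt.comp y h0).fderiv
    unfold D
    rw [show (fun y : Euc n => w (a + (-sin θ) • y)) = w ∘ (fun y : Euc n => a + (-sin θ) • y) from rfl, this]
    simp
  have hDg' : D i (fun y : Euc n => w (a + (-sin θ) • y)) = fun y => -sin θ * D i w (a + (-sin θ) • y) := funext hDg
  have hb := av_ibp hs hg1 (PG_of_bdd hg1.continuous (fun y => hM _)).GI i (by
    rw [hDg']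
    exact (PG_of_bdd (f := fun y => D i w (a + (-sin θ) • y)) (by have := hDc i; fun_prop) (fun y => hDK i _)).GI.const_mul _)
  rw [hDg'] at hb
  unfold av at hb
  have l1 : ∫ y, (w (a + (-sin θ) • y) * D i w x * y i) * gg s (x, y) =
      (D i w x * gk s x) * ∫ y, w (a + (-sin θ) • y) * y i * gk s y := by
    rw [← integral_const_mul]; congr 1; ext y; simp only [gg]; ring
  have l2 : ∫ y, -(s * sin θ * ((D i w x * D i w (a + (-sin θ) • y)) * gg s (x, y))) =
      (D i w x * gk s x) * (s * ∫ y, -sin θ * D i w (a + (-sin θ) • y) * gk s y) := by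
    rw [← integral_const_mul, ← integral_const_mul]; congr 1; ext y; simp only [gg]; ring
  calc _ = _ := l1
    _ = _ := by rw [hb]
    _ = _ := l2.symm

end corr
end TR

/-! ### The Gaussian Poincaré inequality with surplus -/

namespace TR
open Real Filter Topology

variable {n : ℕ} {s : ℝ}

lemma corr_zero (hs : 0 < s) (w : Euc n → ℝ) : corr s w 0 = av s (fun y => w y ^ 2) := by
  rw [← sq_fst hs]; unfold corr; simp [sq]

lemma corr_pi_div_two {w : Euc n → ℝ} (hw : Continuous w) : corr s w (π / 2) = av s w ^ 2 := by
  rw [corr_reflect hw, sq, ← gg_prod]; simp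

/-- The Poincaré inequality with surplus, for compactly supported functions: the variance of `w` is the
integral over `[0, π/2]` of minus the derivative of its Mehler correlation, and pairing `θ` with `π/2 - θ`
in that integral produces the surplus through `corr_add_le`. -/
lemma poincare_compact (hs : 0 < s) {w : Euc n → ℝ} (hw : ContDiff ℝ 1 w) (hc : HasCompactSupport w) :
    av s (fun y => w y ^ 2) - av s w ^ 2 +
      s / 8 * ∑ i, (av s (fun y => D i w y ^ 2) - av s (D i w) ^ 2) ≤
      s * ∑ i, av s (fun y => D i w y ^ 2) := by
  set Q := ∑ i, av s (fun y => D i w y ^ 2) with hQ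
  set V := ∑ i, (av s (fun y => D i w y ^ 2) - av s (D i w) ^ 2) with hV
  have hDc : ∀ i, Continuous (D i w) := fun i => continuous_D hw
  have hDs : ∀ i, HasCompactSupport (D i w) := fun i => tsupport_D_subset i w hc
  have hG : ∀ i, G2 (D i w) := fun i => by
    obtain ⟨M, _, hM⟩ := bdd_of_compact (hDc i) (hDs i)
    exact (PG_of_bdd (hDc i) hM).G2
  have hV0 : 0 ≤ V := Finset.sum_nonneg fun i _ => sub_nonneg.mpr (av_sq_le hs (hG i))
  set S : ℝ → ℝ := fun θ => ∑ i, corr s (D i w) θ with hS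
  have S1 : ∀ θ, S θ ≤ Q := fun θ => Finset.sum_le_sum fun i _ => by
    obtain ⟨M, _, hM⟩ := bdd_of_compact (hDc i) (hDs i)
    exact corr_le hs (hDc i) hM θ
  have S2 : ∀ θ, S θ + S (π / 2 - θ) ≤ 2 * Q - 1 / 2 * V := by
    intro θ
    rw [hS, hQ, hV]
    simp only [Finset.mul_sum, ← Finset.sum_add_distrib, ← Finset.sum_sub_distrib]
    refine Finset.sum_le_sum fun i _ => ?_
    obtain ⟨M, _, hM⟩ := bdd_of_compact (hDc i) (hDs i)
    exact corr_add_le hs (hDc i) hM θ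
  set Φ : ℝ → ℝ := fun θ => corr s w θ - corr s w (π / 2 - θ) +
    s * ((sin θ - cos θ) * Q + 1 / 2 * cos θ * V) with hΦ
  have hd : ∀ θ, HasDerivAt Φ (-(s * sin θ * S θ) - (s * cos θ * S (π / 2 - θ)) +
      s * ((cos θ + sin θ) * Q - 1 / 2 * sin θ * V)) θ := by
    intro θ
    have h1 := corr_hasDerivAt hs hw hc θ
    have h2 := (corr_hasDerivAt hs hw hc (π / 2 - θ)).comp θ ((hasDerivAt_id θ).const_sub (π / 2))
    have h3 : HasDerivAt (fun θ => s * ((sin θ - cos θ) * Q + 1 / 2 * cos θ * V))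
        (s * ((cos θ + sin θ) * Q - 1 / 2 * sin θ * V)) θ := by
      have := ((((hasDerivAt_sin θ).sub (hasDerivAt_cos θ)).mul_const Q).add
        (((hasDerivAt_cos θ).const_mul (1 / 2)).mul_const V)).const_mul s
      refine this.congr_deriv ?_
      ring
    refine ((h1.sub h2).add h3).congr_deriv ?_
    rw [sin_pi_div_two_sub]; simp only [hS]; ring
  have hmono : MonotoneOn Φ (Icc 0 (π / 4)) := by
    refine monotoneOn_of_deriv_nonneg (convex_Icc _ _) (fun θ _ => (hd θ).continuousAt.continuousWithinAt)
      (fun θ _ => (hd θ).differentiableAt.differentiableWithinAt) fun θ hθ => ?_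
    rw [interior_Icc] at hθ
    rw [(hd θ).deriv]
    have hs0 : 0 ≤ sin θ := sin_nonneg_of_nonneg_of_le_pi hθ.1.le (by linarith [hθ.2, pi_pos])
    have hsc : sin θ ≤ cos θ := by
      rw [← cos_pi_div_two_sub]
      apply cos_le_cos_of_nonneg_of_le_pi hθ.1.le (by linarith [hθ.1, pi_pos]) (by linarith [hθ.2])
    have a1 := mul_le_mul_of_nonneg_left (S2 θ) hs0
    have a2 := mul_le_mul_of_nonneg_left (S1 (π / 2 - θ)) (sub_nonneg.mpr hsc)
    have : 0 ≤ s * ((cos θ + sin θ) * Q - 1 / 2 * sin θ * V - sin θ * S θ - cos θ * S (π / 2 - θ)) := by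
      apply mul_nonneg hs.le; nlinarith
    linarith
  have hfin := hmono (left_mem_Icc.mpr (by positivity)) (right_mem_Icc.mpr (by positivity))
    (by positivity : (0 : ℝ) ≤ π / 4)
  simp only [hΦ] at hfin
  rw [show π / 2 - π / 4 = π / 4 by ring, sub_zero, corr_zero hs, corr_pi_div_two hw.continuous, sin_zero, cos_zero,
    sin_pi_div_four, cos_pi_div_four] at hfin
  have hsq : √2 ≤ 3 / 2 := by
    rw [Real.sqrt_le_left (by norm_num)]; norm_num
  have : s * V * √2 ≤ s * V * (3 / 2) := mul_le_mul_of_nonneg_left hsq (by positivity)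
  nlinarith

/-- Dominated convergence for Gaussian averages. -/
lemma av_tendsto (hs : 0 < s) {F : ℕ → Euc n → ℝ} {f b : Euc n → ℝ} (hF : ∀ m, Continuous (F m))
    (hb : GI b) (hle : ∀ m y, |F m y| ≤ b y) (hl : ∀ y, Tendsto (fun m => F m y) atTop (𝓝 (f y))) :
    Tendsto (fun m => av s (F m)) atTop (𝓝 (av s f)) := by
  unfold av
  refine tendsto_integral_of_dominated_convergence (fun y => b y * gk s y)
    (fun m => ((hF m).mul (gk_cont s)).aestronglyMeasurable) (hb.int s hs) (fun m => ?_) ?_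
  · refine Eventually.of_forall fun y => ?_
    rw [norm_mul, norm_eq_abs, norm_eq_abs, abs_of_pos (gk_pos hs y)]
    exact mul_le_mul_of_nonneg_right (hle m y) (gk_pos hs y).le
  · exact Eventually.of_forall fun y => (hl y).mul_const _

/-- Gaussian Poincaré inequality with surplus: the deficit dominates `s/8` times the variance of `∇w`.
The usual inequality has zero surplus exactly for affine functions. -/
lemma poincare_gap (hs : 0 < s) {w : Euc n → ℝ} (hw : ContDiff ℝ 1 w) (h2 : G2 w)
    (hD : ∀ i, G2 (D i w)) :
    av s (fun y => w y ^ 2) - av s w ^ 2 +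
      s / 8 * ∑ i, (av s (fun y => D i w y ^ 2) - av s (D i w) ^ 2) ≤
      s * ∑ i, av s (fun y => D i w y ^ 2) := by
  obtain ⟨c⟩ := exists_cutoffs n
  set W : ℕ → Euc n → ℝ := fun m y => c.φ m y * w y with hW
  have hWd : ∀ m, ContDiff ℝ 1 (W m) := fun m => (c.smooth m).mul hw
  have hWc : ∀ m, HasCompactSupport (W m) := fun m => (c.supp m).mul_right
  have hDW : ∀ i m y, D i (W m) y = D i (c.φ m) y * w y + c.φ m y * D i w y := fun i m y =>
    D_mul ((c.smooth m).differentiable one_ne_zero y) (hw.differentiable one_ne_zero y)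
  have key := fun m => poincare_compact hs (hWd m) (hWc m)
  have lW : ∀ y, Tendsto (fun m => W m y) atTop (𝓝 (w y)) := fun y => by
    simpa using (c.tendsto y).mul_const (w y)
  have lD : ∀ i y, Tendsto (fun m => D i (W m) y) atTop (𝓝 (D i w y)) := fun i y => by
    simp only [hDW]
    simpa using ((c.D_tendsto i y).mul_const (w y)).add ((c.tendsto y).mul_const (D i w y))
  have bW : ∀ m y, |W m y| ≤ |w y| := fun m y => by
    rw [hW, abs_mul, abs_of_nonneg (c.nonneg m y)]
    exact mul_le_of_le_one_left (abs_nonneg _) (c.le_one m y)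
  have bD : ∀ i m y, |D i (W m) y| ≤ c.K * |w y| + |D i w y| := fun i m y => by
    rw [hDW]
    refine (abs_add_le _ _).trans (add_le_add ?_ ?_)
    · rw [abs_mul]; exact mul_le_mul_of_nonneg_right (c.D_le i m y) (abs_nonneg _)
    · rw [abs_mul, abs_of_nonneg (c.nonneg m y)]
      exact mul_le_of_le_one_left (abs_nonneg _) (c.le_one m y)
  have habs : ∀ {f : Euc n → ℝ}, G2 f → G2 (fun y => |f y|) := fun hf => hf.mono hf.cont.abs (by simp)
  have gD : ∀ i, G2 (fun y => c.K * |w y| + |D i w y|) := fun i =>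
    ((habs h2).const_mul _).add (habs (hD i))
  have t1 : Tendsto (fun m => av s (W m)) atTop (𝓝 (av s w)) :=
    av_tendsto hs (fun m => (hWd m).continuous) h2.GI.abs bW lW
  have t2 : Tendsto (fun m => av s (fun y => W m y ^ 2)) atTop (𝓝 (av s (fun y => w y ^ 2))) :=
    av_tendsto hs (fun m => (hWd m).continuous.pow 2) h2.sq
      (fun m y => by
        rw [abs_pow, ← sq_abs (w y)]; exact pow_le_pow_left₀ (abs_nonneg _) (bW m y) 2)
      (fun y => (lW y).pow 2)
  have t3 : ∀ i, Tendsto (fun m => av s (D i (W m))) atTop (𝓝 (av s (D i w))) := fun i =>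
    av_tendsto hs (fun m => continuous_D (hWd m)) (gD i).GI (bD i) (lD i)
  have t4 : ∀ i, Tendsto (fun m => av s (fun y => D i (W m) y ^ 2)) atTop (𝓝 (av s (fun y => D i w y ^ 2))) :=
    fun i => av_tendsto hs (fun m => (continuous_D (hWd m)).pow 2) (gD i).sq
      (fun m y => by rw [abs_pow]; exact pow_le_pow_left₀ (abs_nonneg _) (bD i m y) 2)
      (fun y => (lD i y).pow 2)
  refine le_of_tendsto_of_tendsto'
    ((t2.sub (t1.pow 2)).add ((tendsto_finsetSum Finset.univ fun i _ => (t4 i).sub ((t3 i).pow 2)).const_mul (s / 8)))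
    ((tendsto_finsetSum Finset.univ fun i _ => t4 i).const_mul s) key

lemma poincare (hs : 0 < s) {w : Euc n → ℝ} (hw : ContDiff ℝ 1 w) (h2 : G2 w)
    (hD : ∀ i, G2 (D i w)) :
    av s (fun y => w y ^ 2) - av s w ^ 2 ≤ s * ∑ i, av s (fun y => D i w y ^ 2) := by
  have := poincare_gap hs hw h2 hD
  have h0 : 0 ≤ ∑ i, (av s (fun y => D i w y ^ 2) - av s (D i w) ^ 2) :=
    Finset.sum_nonneg fun i _ => sub_nonneg.mpr (av_sq_le hs (hD i))
  have : 0 ≤ s / 8 * ∑ i, (av s (fun y => D i w y ^ 2) - av s (D i w) ^ 2) := by positivity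
  linarith

end TR

/-! ### Solutions and the derivative of the energy in the scale -/

namespace TR
open Real Filter Topology
variable {n : ℕ}

/-- The squared length `|∇f|²` of the gradient. -/
noncomputable def gs (f : Euc n → ℝ) (y : Euc n) : ℝ := ∑ i, D i f y ^ 2

/-- The radial derivative `y · ∇f(y)`. -/
noncomputable def rad (f : Euc n → ℝ) (y : Euc n) : ℝ := ∑ i, D i f y * y i

/-- A positive entire solution of the system `Δu = uv²`, `Δv = vu²` with linear growth. -/
structure Sol (u v : Euc n → ℝ) : Prop where
  cu : ContDiff ℝ 2 u
  cv : ContDiff ℝ 2 v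
  pu : ∀ x, 0 < u x
  pv : ∀ x, 0 < v x
  eu : ∀ x, lap u x = u x * v x ^ 2
  ev : ∀ x, lap v x = v x * u x ^ 2
  gr : ∃ C, 0 < C ∧ ∀ x, u x + v x ≤ C * (1 + ‖x‖)

lemma gs_nonneg (f : Euc n → ℝ) (y) : 0 ≤ gs f y := Finset.sum_nonneg fun _ _ => sq_nonneg _

namespace Sol
variable {u v : Euc n → ℝ}

lemma symm (h : Sol u v) : Sol v u :=
  ⟨h.cv, h.cu, h.pv, h.pu, h.ev, h.eu, by
    obtain ⟨C, hC, hg⟩ := h.gr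
    exact ⟨C, hC, fun x => by linarith [hg x]⟩⟩

lemma pgu (h : Sol u v) : PG u := by
  obtain ⟨C, hC, hg⟩ := h.gr
  refine ⟨h.cu.continuous, 2 * C, by positivity, 1, fun y => ?_⟩
  rw [abs_of_pos (h.pu y), pow_one]
  have h1 := hg y
  have h2 := h.pv y
  nlinarith [sq_nonneg (‖y‖ - 1)]

lemma pgv (h : Sol u v) : PG v := h.symm.pgu

lemma c1 (h : Sol u v) : ContDiff ℝ 1 u := h.cu.of_le (by norm_num)

lemma cD (h : Sol u v) (i : Fin n) : ContDiff ℝ 1 (D i u) := contDiff_D (k := 1) (by exact_mod_cast h.cu)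

lemma g2D (h : Sol u v) (i : Fin n) : G2 (D i u) :=
  G2_D_of_lap h.cu h.pgu (fun y => by
    rw [h.eu]; have := h.pu y; have := h.pv y; positivity) i

lemma gigs (h : Sol u v) : GI (gs u) := GI.sum _ fun i _ => (h.g2D i).sq

lemma g2rad (h : Sol u v) : G2 (rad u) := G2.sum _ fun i _ => (h.g2D i).mul_PG (PG.coord i)

lemma pgP (h : Sol u v) : PG (fun y => u y ^ 2 * v y ^ 2) := (h.pgu.pow 2).mul (h.pgv.pow 2)

end Sol

lemma coord_contDiff (i : Fin n) : ContDiff ℝ 1 (fun y : Euc n => y i) := by fun_prop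

lemma D_mul_coord {f : Euc n → ℝ} (hf : ContDiff ℝ 1 f) (y : Euc n) :
    ∑ i, D i (fun y => f y * y i) y = rad f y + n * f y := by
  have : ∀ i, D i (fun y => f y * y i) y = D i f y * y i + f y := fun i => by
    rw [D_mul (hf.differentiable one_ne_zero y) ((coord_contDiff i).differentiable one_ne_zero y), D_coord]
    simp
  simp only [this, Finset.sum_add_distrib, rad]; simp

lemma av_norm_sq {s : ℝ} (hs : 0 < s) {f : Euc n → ℝ} (hf : ContDiff ℝ 1 f) (hg : GI f) (hr : GI (rad f)) :
    av s (fun y => f y * ‖y‖ ^ 2) = s * av s (rad f) + n * s * av s f := by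
  have h1 := av_div hs (F := fun i y => f y * y i) (fun i => hf.mul (coord_contDiff i))
    (fun i => hg.mul_PG (PG.coord i)) (by
      simp only [D_mul_coord hf]; exact hr.add (hg.const_mul _))
  simp only [D_mul_coord hf] at h1
  rw [av_add hs hr (hg.const_mul _), av_const_mul] at h1
  have h2 : (fun y => ∑ i, f y * y i * y i) = fun y : Euc n => f y * ‖y‖ ^ 2 := by
    ext y; rw [norm_sq_coord, Finset.mul_sum]; exact Finset.sum_congr rfl fun i _ => by ring
  rw [h2] at h1
  field_simp at h1; linarith

lemma av_hasDerivAt_rad {s : ℝ} (hs : 0 < s) {f : Euc n → ℝ} (hf : ContDiff ℝ 1 f) (hg : GI f) (hr : GI (rad f)) :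
    HasDerivAt (fun s => av s f) (1 / (2 * s) * av s (rad f)) s := by
  refine (av_hasDerivAt hs hg).congr_deriv ?_
  have h1 := av_norm_sq hs hf hg hr
  have : (fun y => f y * (‖y‖^2/(2*s^2) - n/(2*s))) = fun y => (1/(2*s^2)) * (f y * ‖y‖^2) - (n/(2*s)) * f y := by
    ext y; ring
  rw [this, av_sub hs ((hg.mul_PG PG.norm_sq).const_mul _) (hg.const_mul _), av_const_mul, av_const_mul, h1]
  field_simp; ring

namespace Sol
variable {u v : Euc n → ℝ}

lemma rad_sq (h : Sol u v) : rad (fun y => u y ^ 2) = fun y => 2 * (u y * rad u y) := by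
  ext y
  simp only [rad, D_sq (h.c1.differentiable one_ne_zero y), Finset.mul_sum]
  exact Finset.sum_congr rfl fun i _ => by ring

lemma av_u_rad (h : Sol u v) {s : ℝ} (hs : 0 < s) :
    av s (fun y => u y * rad u y) = s * (av s (gs u) + av s (fun y => u y ^ 2 * v y ^ 2)) := by
  have hd : ∀ y, ∑ i, D i (fun y => u y * D i u y) y = gs u y + u y ^ 2 * v y ^ 2 := fun y => by
    have : ∀ i, D i (fun y => u y * D i u y) y = D i u y ^ 2 + u y * D i (D i u) y := fun i => by
      rw [D_mul (h.c1.differentiable one_ne_zero y) ((h.cD i).differentiable one_ne_zero y)]; ring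
    simp only [this, Finset.sum_add_distrib, gs]
    rw [← Finset.mul_sum, ← lap_eq, h.eu]; ring
  have h1 := av_div hs (F := fun i y => u y * D i u y) (fun i => h.c1.mul (h.cD i))
    (fun i => h.pgu.G2.mul (h.g2D i)) (by
      simp only [hd]; exact h.gigs.add h.pgP.GI)
  simp only [hd] at h1
  rw [av_add hs h.gigs h.pgP.GI] at h1
  rw [h1]
  have : (fun y => ∑ i, u y * D i u y * y i) = fun y => u y * rad u y := by
    ext y; simp [rad, Finset.mul_sum, mul_assoc]
  rw [this]; field_simp

lemma hasDerivAt_sq (h : Sol u v) {s : ℝ} (hs : 0 < s) :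
    HasDerivAt (fun s => av s (fun y => u y ^ 2)) (av s (gs u) + av s (fun y => u y ^ 2 * v y ^ 2)) s := by
  refine (av_hasDerivAt_rad hs (h.c1.pow 2) (h.pgu.pow 2).GI ?_).congr_deriv ?_
  · rw [h.rad_sq]; exact (h.pgu.G2.mul h.g2rad).const_mul _
  · rw [h.rad_sq, av_const_mul, h.av_u_rad hs]; field_simp

lemma av_rad (h : Sol u v) {s : ℝ} (hs : 0 < s) :
    av s (rad u) = s * av s (fun y => u y * v y ^ 2) := by
  have hd : ∀ y, ∑ i, D i (D i u) y = u y * v y ^ 2 := fun y => by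
    rw [← lap_eq, h.eu]
  have h1 := av_div hs (F := fun i => D i u) h.cD
    (fun i => (h.g2D i).GI) (by
      simp only [hd]; exact (h.pgu.mul (h.pgv.pow 2)).GI)
  simp only [hd] at h1
  rw [h1]
  have : (fun y => ∑ i, D i u y * y i) = rad u := by
    ext y; simp [rad]
  rw [this]; field_simp

lemma hasDerivAt_av (h : Sol u v) {s : ℝ} (hs : 0 < s) :
    HasDerivAt (fun s => av s u) (1 / 2 * av s (fun y => u y * v y ^ 2)) s := by
  refine (av_hasDerivAt_rad hs h.c1 h.pgu.GI h.g2rad.GI).congr_deriv ?_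
  rw [h.av_rad hs]; field_simp

/-- The energy density `|∇u|² + |∇v|² + u²v²`. -/
noncomputable def en (u v : Euc n → ℝ) (y : Euc n) : ℝ := gs u y + gs v y + u y ^ 2 * v y ^ 2

lemma gs_c1 (h : Sol u v) : ContDiff ℝ 1 (gs u) := by
  unfold gs; exact ContDiff.sum fun i _ => (h.cD i).pow 2

lemma rad_c1 (h : Sol u v) : ContDiff ℝ 1 (rad u) := by
  unfold rad; exact ContDiff.sum fun i _ => (h.cD i).mul (coord_contDiff i)

lemma en_c1 (h : Sol u v) : ContDiff ℝ 1 (en u v) :=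
  (h.gs_c1.add h.symm.gs_c1).add ((h.c1.pow 2).mul (h.symm.c1.pow 2))

lemma en_gi (h : Sol u v) : GI (en u v) := (h.gigs.add h.symm.gigs).add h.pgP.GI

lemma D_gs (h : Sol u v) (i : Fin n) (y : Euc n) : D i (gs u) y = ∑ j, 2 * D j u y * D i (D j u) y := by
  unfold gs
  rw [D_sum _ fun j _ => ((h.cD j).pow 2).differentiable one_ne_zero y]
  exact Finset.sum_congr rfl fun j _ => D_sq ((h.cD j).differentiable one_ne_zero y)

lemma D_rad (h : Sol u v) (i : Fin n) (y : Euc n) : D i (rad u) y = D i u y + ∑ j, D i (D j u) y * y j := by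
  unfold rad
  rw [D_sum _ fun j _ => ((h.cD j).mul (coord_contDiff j)).differentiable one_ne_zero y]
  have : ∀ j, D i (fun y => D j u y * y j) y = D i (D j u) y * y j + (if i = j then D j u y else 0) := fun j => by
    rw [D_mul ((h.cD j).differentiable one_ne_zero y) ((coord_contDiff j).differentiable one_ne_zero y), D_coord]
    simp
  simp only [this, Finset.sum_add_distrib]
  simp; ring

lemma div_rad_grad (h : Sol u v) (y : Euc n) :
    ∑ i, D i (fun y => rad u y * D i u y) y =
      gs u y + 1 / 2 * rad (gs u) y + rad u y * (u y * v y ^ 2) := by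
  have h1 : ∀ i, D i (fun y => rad u y * D i u y) y =
      D i u y ^ 2 + ∑ j, D i (D j u) y * y j * D i u y + rad u y * D i (D i u) y := fun i => by
    rw [D_mul (h.rad_c1.differentiable one_ne_zero y) ((h.cD i).differentiable one_ne_zero y), h.D_rad,
      add_mul, Finset.sum_mul]; ring
  have h2 : rad (gs u) y = 2 * ∑ i, ∑ j, D i (D j u) y * y j * D i u y := by
    simp only [rad, h.D_gs, Finset.mul_sum, Finset.sum_mul]
    rw [Finset.sum_comm]
    refine Finset.sum_congr rfl fun i _ => Finset.sum_congr rfl fun j _ => ?_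
    rw [D_comm h.cu]; ring
  simp only [h1, Finset.sum_add_distrib, h2]
  rw [← Finset.mul_sum, ← lap_eq, h.eu]
  simp only [gs]; ring

lemma rad_en (h : Sol u v) (y : Euc n) : rad (en u v) y = rad (gs u) y + rad (gs v) y +
    2 * (rad u y * (u y * v y ^ 2)) + 2 * (rad v y * (v y * u y ^ 2)) := by
  have hu := h.c1.differentiable one_ne_zero y
  have hv := h.symm.c1.differentiable one_ne_zero y
  have h1 : ∀ i, D i (en u v) y = D i (gs u) y + D i (gs v) y + 2 * (D i u y * (u y * v y ^ 2)) +
      2 * (D i v y * (v y * u y ^ 2)) := fun i => by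
    unfold en
    have hgu := h.gs_c1.differentiable one_ne_zero y
    have hgv := h.symm.gs_c1.differentiable one_ne_zero y
    rw [D_add (hgu.fun_add hgv) ((hu.fun_pow 2).fun_mul (hv.fun_pow 2)), D_add hgu hgv, D_mul (hu.fun_pow 2) (hv.fun_pow 2),
      D_sq hu, D_sq hv]; ring
  simp only [rad, h1, Finset.mul_sum, Finset.sum_mul, ← Finset.sum_add_distrib]
  exact Finset.sum_congr rfl fun i _ => by ring

/-- A Pohozaev-type identity, obtained from the divergence theorem for the stress tensor
`en δᵢⱼ - 2 ∂ᵢu ∂ⱼu - 2 ∂ᵢv ∂ⱼv` contracted with `y`. -/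
lemma av_stress (h : Sol u v) {s : ℝ} (hs : 0 < s) :
    s * (n * av s (en u v) - 2 * av s (gs u) - 2 * av s (gs v)) =
      av s (fun y => en u v y * ‖y‖ ^ 2) - 2 * av s (fun y => rad u y ^ 2) - 2 * av s (fun y => rad v y ^ 2) := by
  have hd : ∀ y, ∑ i, D i (fun y => en u v y * y i - 2 * (rad u y * D i u y) - 2 * (rad v y * D i v y)) y =
      n * en u v y - 2 * gs u y - 2 * gs v y := fun y => by
    have a1 := fun i => (h.en_c1.mul (coord_contDiff i)).differentiable one_ne_zero y
    have a2 := fun i => (h.rad_c1.mul (h.cD i)).differentiable one_ne_zero y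
    have a3 := fun i => (h.symm.rad_c1.mul (h.symm.cD i)).differentiable one_ne_zero y
    have : ∀ i, D i (fun y => en u v y * y i - 2 * (rad u y * D i u y) - 2 * (rad v y * D i v y)) y =
      D i (fun y => en u v y * y i) y - 2 * D i (fun y => rad u y * D i u y) y
        - 2 * D i (fun y => rad v y * D i v y) y := fun i => by
      rw [D_sub ((a1 i).fun_sub ((a2 i).const_mul 2)) ((a3 i).const_mul 2), D_sub (a1 i) ((a2 i).const_mul 2),
        D_const_mul (a2 i), D_const_mul (a3 i)]
    simp only [this, Finset.sum_sub_distrib, ← Finset.mul_sum]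
    rw [D_mul_coord h.en_c1, h.div_rad_grad, h.symm.div_rad_grad, h.rad_en]; ring
  have h1 := av_div hs (F := fun i y => en u v y * y i - 2 * (rad u y * D i u y) - 2 * (rad v y * D i v y))
    (fun i => ((h.en_c1.mul (coord_contDiff i)).sub (contDiff_const.mul (h.rad_c1.mul (h.cD i)))).sub
      (contDiff_const.mul (h.symm.rad_c1.mul (h.symm.cD i))))
    (fun i => ((h.en_gi.mul_PG (PG.coord i)).sub ((h.g2rad.mul (h.g2D i)).const_mul 2)).sub
      ((h.symm.g2rad.mul (h.symm.g2D i)).const_mul 2)) (by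
      simp only [hd]; exact ((h.en_gi.const_mul _).sub (h.gigs.const_mul 2)).sub (h.symm.gigs.const_mul 2))
  simp only [hd] at h1
  rw [av_sub hs ((h.en_gi.const_mul _).sub (h.gigs.const_mul 2)) (h.symm.gigs.const_mul 2),
    av_sub hs (h.en_gi.const_mul _) (h.gigs.const_mul 2), av_const_mul, av_const_mul, av_const_mul] at h1
  rw [h1]
  have : (fun y : Euc n => ∑ i, (en u v y * y i - 2 * (rad u y * D i u y) - 2 * (rad v y * D i v y)) * y i) =
    fun y => en u v y * ‖y‖ ^ 2 - 2 * rad u y ^ 2 - 2 * rad v y ^ 2 := by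
    ext y; rw [norm_sq_coord]
    have e1 : rad u y ^ 2 = ∑ i, rad u y * D i u y * y i := by
      simp only [mul_assoc, ← Finset.mul_sum, ← rad.eq_def]; ring
    have e2 : rad v y ^ 2 = ∑ i, rad v y * D i v y * y i := by
      simp only [mul_assoc, ← Finset.mul_sum, ← rad.eq_def]; ring
    rw [e1, e2]
    simp only [Finset.mul_sum, ← Finset.sum_sub_distrib]
    exact Finset.sum_congr rfl fun i _ => by ring
  rw [this, av_sub hs ((h.en_gi.mul_PG PG.norm_sq).sub (h.g2rad.sq.const_mul 2)) (h.symm.g2rad.sq.const_mul 2),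
    av_sub hs (h.en_gi.mul_PG PG.norm_sq) (h.g2rad.sq.const_mul 2), av_const_mul, av_const_mul]
  field_simp

lemma hasDerivAt_en (h : Sol u v) {s : ℝ} (hs : 0 < s) :
    HasDerivAt (fun s => av s (en u v)) (1 / s ^ 2 * (av s (fun y => rad u y ^ 2) + av s (fun y => rad v y ^ 2))
      - 1 / s * (av s (gs u) + av s (gs v))) s := by
  refine (av_hasDerivAt hs h.en_gi).congr_deriv ?_
  have h1 := h.av_stress hs
  have : (fun y => en u v y * (‖y‖^2/(2*s^2) - n/(2*s))) =
      fun y => (1/(2*s^2)) * (en u v y * ‖y‖^2) - (n/(2*s)) * en u v y := by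
    ext y; ring
  rw [this, av_sub hs ((h.en_gi.mul_PG PG.norm_sq).const_mul _) (h.en_gi.const_mul _), av_const_mul, av_const_mul]
  have : av s (fun y => en u v y * ‖y‖ ^ 2) = s * (n * av s (en u v) - 2 * av s (gs u) - 2 * av s (gs v)) +
    2 * av s (fun y => rad u y ^ 2) + 2 * av s (fun y => rad v y ^ 2) := by linarith
  rw [this]
  field_simp; ring

end Sol
end TR

/-! ### The Almgren frequency -/

namespace TR
open Real Filter Topology
variable {n : ℕ}

lemma le_of_deriv {f f' : ℝ → ℝ} {a b : ℝ} (hab : a ≤ b) (h : ∀ x ∈ Icc a b, HasDerivAt f (f' x) x)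
    (h0 : ∀ x ∈ Icc a b, 0 ≤ f' x) : f a ≤ f b := by
  have hm : MonotoneOn f (Icc a b) := by
    refine monotoneOn_of_hasDerivWithinAt_nonneg (f' := f') (convex_Icc a b)
      (fun x hx => (h x hx).continuousAt.continuousWithinAt)
      (fun x hx => (h x (interior_subset hx)).hasDerivWithinAt) (fun x hx => h0 x (interior_subset hx))
  exact hm (left_mem_Icc.2 hab) (right_mem_Icc.2 hab) hab

lemma lim_le_of_deriv {f f' : ℝ → ℝ} {b l : ℝ} (hb : 0 < b) (h : ∀ x, 0 < x → x ≤ b → HasDerivAt f (f' x) x)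
    (h0 : ∀ x, 0 < x → x ≤ b → 0 ≤ f' x) (hl : Tendsto (fun m : ℕ => f (1 / ((m : ℝ) + 1))) atTop (𝓝 l)) :
    l ≤ f b := by
  refine le_of_tendsto hl ?_
  have : ∀ᶠ m : ℕ in atTop, 1 / ((m : ℝ) + 1) < b :=
    (tendsto_one_div_add_atTop_nhds_zero_nat).eventually_lt_const hb
  filter_upwards [this] with m hm
  have hp : 0 < 1 / ((m : ℝ) + 1) := by positivity
  exact le_of_deriv hm.le (fun x hx => h x (hp.trans_le hx.1) hx.2) (fun x hx => h0 x (hp.trans_le hx.1) hx.2)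

lemma gk_scale {s : ℝ} (hs : 0 < s) (z : Euc n) :
    gk s (√s • z) = (√s ^ n)⁻¹ * gk 1 z := by
  unfold gk
  have h1 : ‖√s • z‖ ^ 2 = s * ‖z‖ ^ 2 := by
    rw [norm_smul, mul_pow, Real.norm_eq_abs, sq_abs, Real.sq_sqrt hs.le]
  have h2 : (√s ^ n)⁻¹ = s ^ (-(n / 2 : ℝ)) := by
    rw [Real.rpow_neg hs.le, Real.sqrt_eq_rpow, ← Real.rpow_natCast, ← Real.rpow_mul hs.le]
    congr 2; ring
  rw [h1, h2, Real.mul_rpow (by positivity) hs.le]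
  have : -(s * ‖z‖ ^ 2) / (2 * s) = - ‖z‖ ^ 2 / (2 * 1) := by field_simp
  rw [this]; simp; ring

lemma av_scale {s : ℝ} (hs : 0 < s) (f : Euc n → ℝ) : av s f = av 1 (fun z => f (√s • z)) := by
  unfold av
  have h := Measure.integral_comp_smul (volume : Measure (Euc n)) (fun y => f y * gk s y) (√s)
  have hp : 0 < √s ^ n := by positivity
  simp only [finrank_euclideanSpace, Fintype.card_fin, gk_scale hs, abs_of_pos (inv_pos.2 hp), smul_eq_mul] at h
  have e : (fun x : Euc n => f (√s • x) * ((√s ^ n)⁻¹ * gk 1 x)) =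
      fun x => (√s ^ n)⁻¹ * (f (√s • x) * gk 1 x) := by ext; ring
  rw [e, integral_const_mul] at h
  exact (mul_left_cancel₀ (inv_pos.2 hp).ne' h).symm

lemma av_lim_zero {f : Euc n → ℝ} (hf : PG f) :
    Tendsto (fun m : ℕ => av (1 / ((m : ℝ) + 1)) f) atTop (𝓝 (f 0)) := by
  obtain ⟨C, hC, k, hk⟩ := hf.bound
  have e : ∀ m : ℕ, av (1 / ((m : ℝ) + 1)) f = av 1 (fun z => f (√(1 / ((m : ℝ) + 1)) • z)) :=
    fun m => av_scale (by positivity) f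
  simp only [e]
  rw [show f 0 = av 1 (fun _ : Euc n => f 0) from (av_const one_pos _).symm]
  have hb : PG (fun z : Euc n => C * (1 + ‖z‖ ^ 2) ^ k) :=
    (PG.const C).mul (((PG.const 1).add PG.norm_sq).pow k)
  refine av_tendsto one_pos (fun m => ?_) hb.GI (fun m y => ?_) (fun y => ?_)
  · have := hf.cont; fun_prop
  · refine (hk _).trans ?_
    gcongr
    have : √(1 / ((m : ℝ) + 1)) ≤ 1 := by
      refine Real.sqrt_le_iff.2 ⟨by norm_num, ?_⟩
      rw [one_pow, div_le_one (by positivity)]; simp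
    rw [norm_smul, Real.norm_eq_abs, abs_of_nonneg (Real.sqrt_nonneg _)]
    exact mul_le_of_le_one_left (norm_nonneg _) this
  · have h1 : Tendsto (fun m : ℕ => √(1 / ((m : ℝ) + 1)) • y) atTop (𝓝 0) := by
      have := (Real.continuous_sqrt.tendsto 0).comp tendsto_one_div_add_atTop_nhds_zero_nat
      simpa using this.smul_const y
    exact (hf.cont.tendsto 0).comp h1

/-- The translate of `f` that moves the point `x` to the origin. -/
def tr (x : Euc n) (f : Euc n → ℝ) : Euc n → ℝ := fun y => f (x + y)

lemma D_tr (x : Euc n) (f : Euc n → ℝ) (i : Fin n) : D i (tr x f) = tr x (D i f) := by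
  ext y; unfold D tr; rw [fderiv_comp_add_left]

namespace Sol
variable {u v : Euc n → ℝ}

lemma lap_tr (x : Euc n) (f : Euc n → ℝ) (y) : lap (tr x f) y = lap f (x + y) := by
  simp only [lap_eq, D_tr]; rfl

lemma tr (h : Sol u v) (x : Euc n) : Sol (tr x u) (tr x v) := by
  refine ⟨h.cu.comp (contDiff_const.add contDiff_id), h.cv.comp (contDiff_const.add contDiff_id),
    fun y => h.pu _, fun y => h.pv _, fun y => ?_, fun y => ?_, ?_⟩
  · rw [lap_tr]; exact h.eu _
  · rw [lap_tr]; exact h.ev _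
  · obtain ⟨C, hC, hg⟩ := h.gr
    refine ⟨C * (1 + ‖x‖), by positivity, fun y => (hg _).trans ?_⟩
    have := norm_add_le x y
    have := norm_nonneg x
    have := norm_nonneg y
    rw [mul_assoc]
    gcongr
    nlinarith

/-- The Gaussian height `H(s)`, the average of `u² + v²`. -/
noncomputable def Hh (u v : Euc n → ℝ) (s : ℝ) : ℝ := av s (fun y => u y ^ 2) + av s (fun y => v y ^ 2)

/-- The Gaussian average of `u²v²`. -/
noncomputable def PP (u v : Euc n → ℝ) (s : ℝ) : ℝ := av s (fun y => u y ^ 2 * v y ^ 2)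

/-- The Almgren frequency `N(s) = s E(s) / H(s)`. -/
noncomputable def Nn (u v : Euc n → ℝ) (s : ℝ) : ℝ := s * av s (en u v) / Hh u v s

/-- The homogeneity defect `A(s)`: normalised average of `(y·∇u - N u)² + (y·∇v - N v)²`. -/
noncomputable def Aa (u v : Euc n → ℝ) (s : ℝ) : ℝ :=
  (av s (fun y => (rad u y - Nn u v s * u y) ^ 2) + av s (fun y => (rad v y - Nn u v s * v y) ^ 2)) / Hh u v s

variable {s : ℝ}

lemma Hu_pos (h : Sol u v) (hs : 0 < s) : 0 < av s (fun y => u y ^ 2) :=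
  av_pos hs (h.pgu.pow 2).GI fun y => pow_pos (h.pu y) 2

lemma H_pos (h : Sol u v) (hs : 0 < s) : 0 < Hh u v s := add_pos (h.Hu_pos hs) (h.symm.Hu_pos hs)

lemma H_symm : Hh v u = Hh u v := by ext s; unfold Hh; ring

lemma PP_symm : PP v u = PP u v := by
  ext s; unfold PP; congr 1; ext y; ring

lemma P_nonneg (hs : 0 < s) : 0 ≤ PP u v s := av_nonneg hs fun y => by positivity

lemma gs_av_nonneg (hs : 0 < s) : 0 ≤ av s (gs u) := av_nonneg hs fun _ => gs_nonneg _ _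

lemma A_nonneg (h : Sol u v) (hs : 0 < s) : 0 ≤ Aa u v s :=
  div_nonneg (add_nonneg (av_nonneg hs fun _ => sq_nonneg _) (av_nonneg hs fun _ => sq_nonneg _)) (h.H_pos hs).le

lemma av_en (h : Sol u v) (hs : 0 < s) : av s (en u v) = av s (gs u) + av s (gs v) + PP u v s := by
  unfold en PP
  rw [av_add hs (h.gigs.add h.symm.gigs) h.pgP.GI, av_add hs h.gigs h.symm.gigs]

lemma NH (h : Sol u v) (hs : 0 < s) : Nn u v s * Hh u v s = s * av s (en u v) := by
  unfold Nn; field_simp [(h.H_pos hs).ne']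

lemma N_nonneg (h : Sol u v) (hs : 0 < s) : 0 ≤ Nn u v s := by
  refine div_nonneg (mul_nonneg hs.le ?_) (h.H_pos hs).le
  rw [h.av_en hs]
  exact add_nonneg (add_nonneg (gs_av_nonneg hs) (gs_av_nonneg hs)) (P_nonneg hs)

lemma H_deriv (h : Sol u v) (hs : 0 < s) :
    HasDerivAt (Hh u v) (av s (en u v) + PP u v s) s := by
  refine ((h.hasDerivAt_sq hs).add (h.symm.hasDerivAt_sq hs)).congr_deriv ?_
  rw [h.av_en hs]
  have := congrFun (PP_symm (u := u) (v := v)) s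
  unfold PP at this ⊢
  rw [this]; ring

lemma H_deriv' (h : Sol u v) (hs : 0 < s) :
    HasDerivAt (Hh u v) ((Nn u v s * Hh u v s + s * PP u v s) / s) s := by
  refine (h.H_deriv hs).congr_deriv ?_
  rw [h.NH hs]; field_simp

lemma av_defect (h : Sol u v) (hs : 0 < s) (c : ℝ) :
    av s (fun y => (rad u y - c * u y) ^ 2) =
      av s (fun y => rad u y ^ 2) - 2 * c * (s * (av s (gs u) + PP u v s)) + c ^ 2 * av s (fun y => u y ^ 2) := by
  have : (fun y => (rad u y - c * u y) ^ 2) =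
      fun y => rad u y ^ 2 - (2 * c) * (u y * rad u y) + c ^ 2 * u y ^ 2 := by ext y; ring
  rw [this, av_add hs (h.g2rad.sq.sub ((h.pgu.G2.mul h.g2rad).const_mul _)) ((h.pgu.pow 2).GI.const_mul _),
    av_sub hs h.g2rad.sq ((h.pgu.G2.mul h.g2rad).const_mul _), av_const_mul, av_const_mul, h.av_u_rad hs]
  rfl

lemma AH (h : Sol u v) (hs : 0 < s) : Aa u v s * Hh u v s =
    av s (fun y => rad u y ^ 2) + av s (fun y => rad v y ^ 2) - Nn u v s ^ 2 * Hh u v s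
      - 2 * Nn u v s * (s * PP u v s) := by
  have h1 := h.av_defect hs (Nn u v s)
  have h2 := h.symm.av_defect hs (Nn u v s)
  rw [PP_symm] at h2
  have h3 := h.NH hs
  rw [h.av_en hs] at h3
  have : Aa u v s * Hh u v s = av s (fun y => (rad u y - Nn u v s * u y) ^ 2) +
      av s (fun y => (rad v y - Nn u v s * v y) ^ 2) := by
    unfold Aa; field_simp [(h.H_pos hs).ne']
  rw [this, h1, h2]
  have h4 : Hh u v s = av s (fun y => u y ^ 2) + av s (fun y => v y ^ 2) := rfl
  rw [h4] at h3 ⊢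
  linear_combination 2 * Nn u v s * h3

/-- Almgren's monotonicity formula. -/
lemma N_deriv (h : Sol u v) (hs : 0 < s) :
    HasDerivAt (Nn u v) ((Aa u v s + (1 + Nn u v s) * (s * PP u v s / Hh u v s)) / s) s := by
  have hH := h.H_pos hs
  have h1 := ((hasDerivAt_id s).mul (h.hasDerivAt_en hs)).div (h.H_deriv' hs) hH.ne'
  refine (h1.congr_deriv ?_)
  have hA := h.AH hs
  have hN := h.NH hs
  have hE : av s (en u v) = Nn u v s * Hh u v s / s := by rw [hN]; field_simp
  have hg : av s (gs u) + av s (gs v) = Nn u v s * Hh u v s / s - PP u v s := by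
    rw [← hE, h.av_en hs]; ring
  have hR : av s (fun y => rad u y ^ 2) + av s (fun y => rad v y ^ 2) = Aa u v s * Hh u v s +
    Nn u v s ^ 2 * Hh u v s + 2 * Nn u v s * (s * PP u v s) := by linarith
  simp only [id, Pi.mul_apply, hg, hR]
  rw [hE]
  field_simp
  ring

lemma N_mono (h : Sol u v) {s t : ℝ} (hs : 0 < s) (hst : s ≤ t) : Nn u v s ≤ Nn u v t := by
  refine le_of_deriv hst (fun x hx => h.N_deriv (hs.trans_le hx.1)) fun x hx => ?_
  have hx := hs.trans_le hx.1
  have := h.A_nonneg hx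
  have := h.N_nonneg hx
  have := P_nonneg (u := u) (v := v) hx
  have := h.H_pos hx
  positivity

lemma rad_const (c : ℝ) : rad (fun _ : Euc n => c) = fun _ => 0 := by
  ext y; simp [rad, D_const]

lemma av_norm_sq_one (hs : 0 < s) : av s (fun y : Euc n => ‖y‖ ^ 2) = n * s := by
  have := av_norm_sq (n := n) hs (f := fun _ => 1) contDiff_const (GI.const 1) (by rw [rad_const]; exact GI.const 0)
  rw [rad_const, av_const hs, av_const hs] at this
  simpa using this

lemma H_le (h : Sol u v) : ∃ K, 0 < K ∧ ∀ s, 0 < s → Hh u v s ≤ K * (1 + s) := by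
  obtain ⟨C, hC, hg⟩ := h.gr
  refine ⟨2 * C ^ 2 * (1 + n), by positivity, fun s hs => ?_⟩
  have h1 : Hh u v s ≤ 2 * C ^ 2 * (1 + n * s) := by
    unfold Hh
    rw [← av_add hs (h.pgu.pow 2).GI (h.pgv.pow 2).GI]
    have : av s (fun y : Euc n => 2 * C ^ 2 * (1 + ‖y‖ ^ 2)) = 2 * C ^ 2 * (1 + n * s) := by
      rw [av_const_mul, av_add hs (GI.const 1) PG.norm_sq.GI, av_const hs, av_norm_sq_one hs]
    rw [← this]
    refine av_mono hs ((h.pgu.pow 2).GI.add (h.pgv.pow 2).GI)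
      (((GI.const 1).add PG.norm_sq.GI).const_mul _) fun y => ?_
    have a1 := h.pu y
    have a2 := h.pv y
    calc u y ^ 2 + v y ^ 2 ≤ (u y + v y) ^ 2 := by nlinarith
      _ ≤ (C * (1 + ‖y‖)) ^ 2 := by gcongr; exact hg y
      _ ≤ _ := by nlinarith [mul_nonneg (sq_nonneg C) (sq_nonneg (1 - ‖y‖))]
  refine h1.trans ?_
  have hn : (0 : ℝ) ≤ n := Nat.cast_nonneg n
  rw [mul_assoc (2 * C ^ 2)]
  gcongr
  nlinarith

lemma log_H_deriv (h : Sol u v) (hs : 0 < s) :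
    HasDerivAt (fun s => log (Hh u v s)) ((Nn u v s + s * PP u v s / Hh u v s) / s) s := by
  have hH := h.H_pos hs
  refine ((h.H_deriv' hs).log hH.ne').congr_deriv ?_
  field_simp

/-- The linear growth bounds the frequency: if `N > 1` at some scale, monotonicity keeps it above a constant
larger than one afterwards, and `H` would grow faster than linearly in `s`. -/
lemma N_le_one (h : Sol u v) (hs : 0 < s) : Nn u v s ≤ 1 := by
  by_contra hc
  push Not at hc
  obtain ⟨K, hK, hHK⟩ := h.H_le
  set δ := Nn u v s - 1 with hδ
  have hδ0 : 0 < δ := by linarith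
  have key : ∀ t, s ≤ t → log (Hh u v s) - (1 + δ) * log s ≤ log (Hh u v t) - (1 + δ) * log t := fun t hst => by
    refine le_of_deriv (f := fun t => log (Hh u v t) - (1 + δ) * log t) hst (fun x hx =>
      (h.log_H_deriv (hs.trans_le hx.1)).sub ((Real.hasDerivAt_log (hs.trans_le hx.1).ne').const_mul _)) fun x hx => ?_
    have hx0 := hs.trans_le hx.1
    have h1 := h.N_mono hs hx.1
    have h2 : 0 ≤ x * PP u v x / Hh u v x :=
      div_nonneg (mul_nonneg hx0.le (P_nonneg hx0)) (h.H_pos hx0).le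
    rw [← div_eq_mul_inv, ← sub_div]
    exact div_nonneg (by linarith) hx0.le
  have lim : Tendsto (fun t : ℝ => δ * log t) atTop atTop := tendsto_log_atTop.const_mul_atTop hδ0
  obtain ⟨t, ht, hts, ht1⟩ := ((lim.eventually_gt_atTop (log (2 * K) - (log (Hh u v s) - (1 + δ) * log s))).and
    ((eventually_ge_atTop s).and (eventually_ge_atTop 1))).exists
  have h1 := key t hts
  have ht0 : 0 < t := by linarith
  have h2 : log (Hh u v t) ≤ log (2 * K) + log t := by
    rw [← Real.log_mul (by positivity) ht0.ne']
    refine Real.log_le_log (h.H_pos ht0) ((hHK t ht0).trans ?_)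
    nlinarith
  nlinarith

/-- `H(t)/t` is almost nonincreasing, since `N - log (H/t)` is nondecreasing and `0 ≤ N ≤ 1`. -/
lemma F1 (h : Sol u v) {s t : ℝ} (hs : 0 < s) (hst : s ≤ t) :
    Hh u v t / t ≤ exp 1 * (Hh u v s / s) := by
  have ht := hs.trans_le hst
  have key : Nn u v s - (log (Hh u v s) - log s) ≤ Nn u v t - (log (Hh u v t) - log t) := by
    refine le_of_deriv (f := fun t => Nn u v t - (log (Hh u v t) - log t)) hst (fun x hx =>
      (h.N_deriv (hs.trans_le hx.1)).sub ((h.log_H_deriv (hs.trans_le hx.1)).sub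
        (Real.hasDerivAt_log (hs.trans_le hx.1).ne'))) fun x hx => ?_
    have hx0 := hs.trans_le hx.1
    have h1 := h.N_le_one hx0
    have h2 : 0 ≤ x * PP u v x / Hh u v x :=
      div_nonneg (mul_nonneg hx0.le (P_nonneg hx0)) (h.H_pos hx0).le
    have h3 := h.A_nonneg hx0
    have h4 := h.N_nonneg hx0
    rw [← one_div, ← sub_div, ← sub_div]
    refine div_nonneg ?_ hx0.le
    nlinarith
  have h1 := h.N_le_one ht
  have h2 := h.N_nonneg hs
  have e1 := Real.log_div (h.H_pos hs).ne' hs.ne'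
  have e2 := Real.log_div (h.H_pos ht).ne' ht.ne'
  have p1 := div_pos (h.H_pos hs) hs
  have p2 := div_pos (h.H_pos ht) ht
  rw [← Real.log_le_log_iff p2 (by positivity), Real.log_mul (exp_pos _).ne' p1.ne', Real.log_exp]
  linarith

lemma H_mono (h : Sol u v) {s t : ℝ} (hs : 0 < s) (hst : s ≤ t) : Hh u v s ≤ Hh u v t := by
  refine le_of_deriv hst (fun x hx => h.H_deriv' (hs.trans_le hx.1)) fun x hx => ?_
  have hx := hs.trans_le hx.1
  have := h.N_nonneg hx
  have := P_nonneg (u := u) (v := v) hx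
  have := h.H_pos hx
  positivity

lemma Hu_mono (h : Sol u v) {s t : ℝ} (hs : 0 < s) (hst : s ≤ t) :
    av s (fun y => u y ^ 2) ≤ av t (fun y => u y ^ 2) := by
  refine le_of_deriv (f := fun s => av s (fun y => u y ^ 2)) hst (fun x hx => h.hasDerivAt_sq (hs.trans_le hx.1)) fun x hx => ?_
  exact add_nonneg (gs_av_nonneg (hs.trans_le hx.1)) (P_nonneg (hs.trans_le hx.1))

/-- Subharmonicity of `u` gives the mean value inequality. -/
lemma le_av (h : Sol u v) (hs : 0 < s) : u 0 ≤ av s u :=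
  lim_le_of_deriv (f := fun s => av s u) hs (fun _ hx _ => h.hasDerivAt_av hx)
    (fun x hx _ => mul_nonneg (by norm_num) (av_nonneg hx fun y => by have := h.pu y; positivity))
    (av_lim_zero h.pgu)

lemma sq_le_av (h : Sol u v) (hs : 0 < s) : u 0 ^ 2 ≤ av s (fun y => u y ^ 2) :=
  (pow_le_pow_left₀ (h.pu 0).le (h.le_av hs) 2).trans (av_sq_le hs h.pgu.G2)

end Sol
end TR

/-! ### Pointwise bounds and growth of the product of the heights -/

namespace TR
open Real Filter Topology
variable {n : ℕ}

/-- A Gaussian centred at `x` is dominated by a wider Gaussian centred at the origin. -/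
lemma gk_shift {s t : ℝ} (hs : 0 < s) (hst : s < t) (x z : Euc n) :
    gk s (z - x) ≤ (t / s) ^ (n / 2 : ℝ) * exp (‖x‖ ^ 2 / (2 * (t - s))) * gk t z := by
  have ht := hs.trans hst
  have hd : 0 < t - s := sub_pos.2 hst
  unfold gk
  have e1 : (2 * π * s) ^ (-(n / 2 : ℝ)) = (t / s) ^ (n / 2 : ℝ) * (2 * π * t) ^ (-(n / 2 : ℝ)) := by
    rw [Real.rpow_neg (by positivity), Real.rpow_neg (by positivity), ← div_eq_mul_inv,
      ← Real.div_rpow (by positivity) (by positivity), ← Real.inv_rpow (by positivity)]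
    congr 1; field_simp
  have e2 : -‖z - x‖ ^ 2 / (2 * s) ≤ ‖x‖ ^ 2 / (2 * (t - s)) + -‖z‖ ^ 2 / (2 * t) := by
    have h1 : ‖z‖ ≤ ‖z - x‖ + ‖x‖ := by simpa using norm_add_le (z - x) x
    have h2 : ‖z‖ ^ 2 ≤ (‖z - x‖ + ‖x‖) ^ 2 := by gcongr
    set a := ‖z - x‖
    set b := ‖x‖
    have h3 : a ^ 2 / (2 * s) + b ^ 2 / (2 * (t - s)) - (a + b) ^ 2 / (2 * t) =
        ((t - s) * a - s * b) ^ 2 / (2 * s * t * (t - s)) := by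
      field_simp; ring
    have h4 : 0 ≤ ((t - s) * a - s * b) ^ 2 / (2 * s * t * (t - s)) := by positivity
    have h5 : ‖z‖ ^ 2 / (2 * t) ≤ (a + b) ^ 2 / (2 * t) := by gcongr
    rw [neg_div, neg_div]; linarith
  rw [e1]
  calc _ ≤ (t / s) ^ (n / 2 : ℝ) * (2 * π * t) ^ (-(n / 2 : ℝ)) *
        exp (‖x‖ ^ 2 / (2 * (t - s)) + -‖z‖ ^ 2 / (2 * t)) := by gcongr
    _ = _ := by rw [Real.exp_add]; ring

lemma av_shift {s t : ℝ} (hs : 0 < s) (hst : s < t) (x : Euc n) {f : Euc n → ℝ} (hf : GI f)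
    (hft : GI (tr x f)) (h0 : ∀ y, 0 ≤ f y) :
    av s (tr x f) ≤ (t / s) ^ (n / 2 : ℝ) * exp (‖x‖ ^ 2 / (2 * (t - s))) * av t f := by
  have e : av s (tr x f) = ∫ z, f z * gk s (z - x) := by
    unfold av tr
    rw [← integral_sub_right_eq_self _ x]
    congr 1; ext z; simp
  have hi : Integrable (fun z => f z * gk s (z - x)) := by
    have := (hft.int s hs).comp_sub_right x
    refine this.congr (Eventually.of_forall fun z => ?_)
    simp [tr]
  rw [e]; unfold av
  rw [← integral_const_mul]
  refine integral_mono hi ((hf.int t (hs.trans hst)).const_mul _) fun z => ?_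
  have := mul_le_mul_of_nonneg_left (gk_shift hs hst x z) (h0 z)
  dsimp only; linarith

lemma av_exp {t : ℝ} (ht : 0 < t) (f : Euc n → ℝ) :
    av t (fun y => f y * exp (‖y‖ ^ 2 / (4 * t))) = 2 ^ (n / 2 : ℝ) * av (2 * t) f := by
  unfold av
  rw [← integral_const_mul]
  congr 1; ext y
  unfold gk
  have e1 : (2 * π * t) ^ (-(n / 2 : ℝ)) = 2 ^ (n / 2 : ℝ) * (2 * π * (2 * t)) ^ (-(n / 2 : ℝ)) := by
    rw [Real.rpow_neg (by positivity), Real.rpow_neg (by positivity), ← div_eq_mul_inv,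
      ← Real.div_rpow (by positivity) (by positivity), ← Real.inv_rpow (by positivity)]
    congr 1; field_simp
  have e2 : exp (‖y‖ ^ 2 / (4 * t)) * exp (-‖y‖ ^ 2 / (2 * t)) = exp (-‖y‖ ^ 2 / (2 * (2 * t))) := by
    rw [← Real.exp_add]; congr 1; field_simp; ring
  rw [e1, ← e2]; ring

lemma int_exp {t : ℝ} (ht : 0 < t) {f : Euc n → ℝ} (hf : GI f) :
    Integrable (fun y => f y * exp (‖y‖ ^ 2 / (4 * t)) * gk t y) := by
  refine ((hf.int (2 * t) (by positivity)).const_mul (2 ^ (n / 2 : ℝ))).congr (Eventually.of_forall fun y => ?_)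
  have e1 : (2 * π * t) ^ (-(n / 2 : ℝ)) = 2 ^ (n / 2 : ℝ) * (2 * π * (2 * t)) ^ (-(n / 2 : ℝ)) := by
    rw [Real.rpow_neg (by positivity), Real.rpow_neg (by positivity), ← div_eq_mul_inv,
      ← Real.div_rpow (by positivity) (by positivity), ← Real.inv_rpow (by positivity)]
    congr 1; field_simp
  have e2 : exp (‖y‖ ^ 2 / (4 * t)) * exp (-‖y‖ ^ 2 / (2 * t)) = exp (-‖y‖ ^ 2 / (2 * (2 * t))) := by
    rw [← Real.exp_add]; congr 1; field_simp; ring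
  simp only [gk]
  rw [e1, ← e2]; ring

/-- The dimensional constant in the pointwise bound by the Gaussian height. -/
noncomputable def C3 (n : ℕ) : ℝ := 2 ^ (n / 2 : ℝ) * exp (1 / 2) * (exp 1 * 2)

lemma C3_pos : 0 < C3 n := by unfold C3; positivity

lemma one_le_C3 : 1 ≤ C3 n := by
  unfold C3
  have h1 : (1 : ℝ) ≤ 2 ^ (n / 2 : ℝ) := Real.one_le_rpow (by norm_num) (by positivity)
  have h2 : (1 : ℝ) ≤ exp (1 / 2) := Real.one_le_exp (by norm_num)
  have h3 : (1 : ℝ) ≤ exp 1 * 2 := by have := Real.one_le_exp (x := 1) (by norm_num); linarith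
  exact one_le_mul_of_one_le_of_one_le (one_le_mul_of_one_le_of_one_le h1 h2) h3

/-- The fourth-moment type constant `av₁ (1 + |z|²)²`. -/
noncomputable def K2 (n : ℕ) : ℝ := av 1 (fun z : Euc n => (1 + ‖z‖ ^ 2) ^ 2)

lemma K2_pos : 0 < K2 n := av_pos one_pos (((PG.const 1).add PG.norm_sq).pow 2).GI fun y => by positivity

namespace Sol
variable {u v : Euc n → ℝ} {s : ℝ}

lemma Hu_tr_le (h : Sol u v) {s t : ℝ} (hs : 0 < s) (hst : s < t) (x : Euc n) :
    av s (fun y => TR.tr x u y ^ 2) ≤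
      (t / s) ^ (n / 2 : ℝ) * exp (‖x‖ ^ 2 / (2 * (t - s))) * av t (fun y => u y ^ 2) :=
  av_shift hs hst x (f := fun y => u y ^ 2) (h.pgu.pow 2).GI ((h.tr x).pgu.pow 2).GI fun _ => sq_nonneg _

/-- Pointwise bound of the solution by the Gaussian height, from the mean value inequality at `y` at a scale
comparable to `s + |y|²` and the almost monotonicity of `H/s`. -/
lemma F3 (h : Sol u v) (hs : 0 < s) (y : Euc n) :
    u y ^ 2 + v y ^ 2 ≤ C3 n * (1 + ‖y‖ ^ 2 / s) * Hh u v s := by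
  set R := 1 + ‖y‖ ^ 2 / s with hR
  have hR1 : 1 ≤ R := by rw [hR]; linarith [show 0 ≤ ‖y‖ ^ 2 / s by positivity]
  have hRs : 0 < R * s := by positivity
  have hy : ‖y‖ ^ 2 ≤ R * s := by rw [hR]; field_simp; linarith
  have e1 : exp (‖y‖ ^ 2 / (2 * (2 * (R * s) - R * s))) ≤ exp (1 / 2) := by
    apply Real.exp_le_exp.2
    rw [div_le_div_iff₀ (by linarith) (by norm_num)]; linarith
  have e2 : 2 * (R * s) / (R * s) = 2 := by field_simp
  have k : ∀ {u v : Euc n → ℝ}, Sol u v → u y ^ 2 ≤ 2 ^ (n / 2 : ℝ) * exp (1 / 2) * av (2 * (R * s)) (fun y => u y ^ 2) := by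
    intro u v h
    have a1 := (h.tr y).sq_le_av hRs
    have a2 := h.Hu_tr_le hRs (t := 2 * (R * s)) (by linarith) y
    rw [e2] at a2
    have a3 := h.Hu_pos (s := 2 * (R * s)) (by positivity)
    simp only [TR.tr, add_zero] at a1 a2
    refine (a1.trans a2).trans ?_
    gcongr
  have h1 := k h
  have h2 := k h.symm
  have h3 := h.F1 hs (t := 2 * (R * s)) (by nlinarith)
  have h4 : Hh u v (2 * (R * s)) ≤ exp 1 * 2 * R * Hh u v s := by
    rw [div_le_iff₀ (by positivity)] at h3
    refine h3.trans (le_of_eq ?_)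
    field_simp
  calc u y ^ 2 + v y ^ 2 ≤ 2 ^ (n / 2 : ℝ) * exp (1 / 2) * Hh u v (2 * (R * s)) := by unfold Hh; linarith
    _ ≤ 2 ^ (n / 2 : ℝ) * exp (1 / 2) * (exp 1 * 2 * R * Hh u v s) := by gcongr
    _ = _ := by unfold C3; ring

lemma pgR (s : ℝ) : PG (fun y : Euc n => 1 + ‖y‖ ^ 2 / s) := by
  have := (PG.const (n := n) 1).add ((PG.const (n := n) (1 / s)).mul PG.norm_sq)
  refine this.mono (by fun_prop) fun y => le_of_eq ?_
  congr 1; ring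

lemma av_R2 (hs : 0 < s) : av s (fun y : Euc n => (1 + ‖y‖ ^ 2 / s) ^ 2) = K2 n := by
  rw [av_scale hs]; unfold K2
  congr 1; ext z
  rw [norm_smul, mul_pow, Real.norm_eq_abs, sq_abs, Real.sq_sqrt hs.le]
  field_simp

lemma av_cube_le (h : Sol u v) (hs : 0 < s) :
    av s (fun y => u y ^ 3) ^ 2 ≤ C3 n ^ 2 * Hh u v s ^ 2 * (av s (fun y => u y ^ 2) * K2 n) := by
  have h1 : av s (fun y => u y ^ 3) ≤ (C3 n * Hh u v s) * av s (fun y => u y * (1 + ‖y‖ ^ 2 / s)) := by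
    rw [← av_const_mul]
    refine av_mono hs (h.pgu.pow 3).GI ((h.pgu.mul (pgR s)).GI.const_mul _) fun y => ?_
    have := h.F3 hs y
    have := h.pu y
    have : u y ^ 2 ≤ C3 n * (1 + ‖y‖ ^ 2 / s) * Hh u v s := by nlinarith [sq_nonneg (v y)]
    have := mul_le_mul_of_nonneg_left this (h.pu y).le
    nlinarith
  have h2 := av_cs hs h.pgu.G2 (pgR (n := n) s).G2
  rw [av_R2 hs] at h2
  have h0 : 0 ≤ av s (fun y => u y ^ 3) := av_nonneg hs fun y => by have := h.pu y; positivity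
  calc _ ≤ ((C3 n * Hh u v s) * av s (fun y => u y * (1 + ‖y‖ ^ 2 / s))) ^ 2 := by gcongr
    _ = (C3 n ^ 2 * Hh u v s ^ 2) * av s (fun y => u y * (1 + ‖y‖ ^ 2 / s)) ^ 2 := by ring
    _ ≤ _ := by gcongr

lemma sq_le_cube (h : Sol u v) (hs : 0 < s) :
    av s (fun y => u y ^ 2) ^ 2 ≤ av s u * av s (fun y => u y ^ 3) := by
  set a := av s (fun y => u y ^ 3)
  set b := av s u
  have ha : 0 < a := av_pos hs (h.pgu.pow 3).GI fun y => pow_pos (h.pu y) 3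
  have hb : 0 < b := av_pos hs h.pgu.GI h.pu
  have hc := h.Hu_pos hs
  set c := av s (fun y => u y ^ 2)
  have : ∀ l, 0 < l → 2 * l * c ≤ l ^ 2 * a + b := fun l hl => by
    have : av s (fun y => (2 * l) * u y ^ 2) ≤ av s (fun y => l ^ 2 * u y ^ 3 + u y) :=
      av_mono hs ((h.pgu.pow 2).GI.const_mul _) (((h.pgu.pow 3).GI.const_mul _).add h.pgu.GI) fun y => by
        have := mul_nonneg (h.pu y).le (sq_nonneg (l * u y - 1)); nlinarith
    rwa [av_const_mul, av_add hs ((h.pgu.pow 3).GI.const_mul _) h.pgu.GI, av_const_mul] at this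
  have h1 := this (c / a) (by positivity)
  have e : 2 * (c / a) * c - (c / a) ^ 2 * a = c ^ 2 / a := by field_simp; ring
  have : c ^ 2 / a ≤ b := by linarith
  rwa [div_le_iff₀ ha] at this

/-- Lower bound for the mean in terms of the quadratic mean: `H_u³ ≤ C ū² H²`. -/
lemma cubic (h : Sol u v) (hs : 0 < s) :
    av s (fun y => u y ^ 2) ^ 3 ≤ C3 n ^ 2 * K2 n * (av s u ^ 2 * Hh u v s ^ 2) := by
  have h1 := h.sq_le_cube hs
  have h2 := h.av_cube_le hs
  have hc := h.Hu_pos hs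
  set c := av s (fun y => u y ^ 2)
  set a := av s (fun y => u y ^ 3)
  set b := av s u
  have h3 : (c ^ 2) ^ 2 ≤ (b * a) ^ 2 := by gcongr
  have h4 : c ^ 4 ≤ b ^ 2 * (C3 n ^ 2 * Hh u v s ^ 2 * (c * K2 n)) := by
    calc c ^ 4 = (c ^ 2) ^ 2 := by ring
      _ ≤ b ^ 2 * a ^ 2 := by rw [← mul_pow]; exact h3
      _ ≤ _ := by gcongr
  refine le_of_mul_le_mul_left ?_ hc
  linarith

lemma var_le (h : Sol u v) (hs : 0 < s) : av s (fun y => u y ^ 2) - av s u ^ 2 ≤ s * av s (gs u) := by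
  have := poincare hs h.c1 h.pgu.G2 h.g2D
  have e : av s (gs u) = ∑ i, av s (fun y => D i u y ^ 2) := av_sum hs _ fun i _ => (h.g2D i).sq
  rw [e]; exact this

lemma cov {f g : Euc n → ℝ} (hs : 0 < s) (hf : G2 f) (hg : G2 g) :
    (av s (fun y => f y * g y) - av s f * av s g) ^ 2 ≤
      (av s (fun y => f y ^ 2) - av s f ^ 2) * (av s (fun y => g y ^ 2) - av s g ^ 2) := by
  have gc : ∀ c : ℝ, G2 (fun _ : Euc n => c) := fun c => (PG.const c).G2
  have key : ∀ {f g : Euc n → ℝ}, G2 f → G2 g →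
      av s (fun y => (f y - av s f) * (g y - av s g)) = av s (fun y => f y * g y) - av s f * av s g := by
    intro f g hf hg
    have : (fun y => (f y - av s f) * (g y - av s g)) =
      fun y => (f y * g y - av s g * f y) - (av s f * g y - av s f * av s g) := by ext y; ring
    rw [this, av_sub hs ((hf.mul hg).sub (hf.GI.const_mul _)) ((hg.GI.const_mul _).sub (GI.const _)),
      av_sub hs (hf.mul hg) (hf.GI.const_mul _), av_sub hs (hg.GI.const_mul _) (GI.const _),
      av_const_mul, av_const_mul, av_const hs]; ring
  have h1 := av_cs hs (hf.sub (gc (av s f))) (hg.sub (gc (av s g)))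
  have e1 := key hf hf
  have e2 := key hg hg
  simp only [← sq] at e1 e2
  rwa [key hf hg, e1, e2] at h1

/-- If the logarithmic growth rates of `∫u²` and `∫v²` at scale `s` add up to less than `1/4`, then `u` and
`v` are both nearly constant in quadratic mean; the average of `u²v²` is then large unless `s H < 2`. -/
lemma K' (h : Sol u v) (hs : 0 < s)
    (hX : s * (av s (gs u) + PP u v s) / av s (fun y => u y ^ 2) +
      s * (av s (gs v) + PP u v s) / av s (fun y => v y ^ 2) < 1 / 4) : s * Hh u v s < 2 := by
  have hu := h.Hu_pos hs
  have hv := h.symm.Hu_pos hs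
  have hP := P_nonneg (u := u) (v := v) hs
  have gu := gs_av_nonneg (u := u) hs
  have gv := gs_av_nonneg (u := v) hs
  have v1 := h.var_le hs
  have v2 := h.symm.var_le hs
  have c := cov hs h.pgu.G2 h.pgv.G2
  have hau : 0 < av s u := av_pos hs h.pgu.GI h.pu
  have hav : 0 < av s v := av_pos hs h.pgv.GI h.pv
  have hsq := av_sq_le hs (h.pgu.mul h.pgv).G2
  have vu0 := av_sq_le hs h.pgu.G2
  have vv0 := av_sq_le hs h.pgv.G2
  have eP : av s (fun y => (u y * v y) ^ 2) = PP u v s := by unfold PP; congr 1; ext y; ring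
  rw [eP] at hsq
  have huv : 0 < av s (fun y => u y * v y) := av_pos hs (h.pgu.mul h.pgv).GI fun y => mul_pos (h.pu y) (h.pv y)
  unfold Hh
  set Hu := av s (fun y => u y ^ 2)
  set Hv := av s (fun y => v y ^ 2)
  set P := PP u v s
  set a := av s u
  set b := av s v
  set m := av s (fun y => u y * v y)
  have x1 : 0 ≤ s * (av s (gs u) + P) / Hu := by positivity
  have x2 : 0 ≤ s * (av s (gs v) + P) / Hv := by positivity
  have x3 : s * (av s (gs u) + P) < 1 / 4 * Hu := by rw [← div_lt_iff₀ hu]; linarith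
  have x4 : s * (av s (gs v) + P) < 1 / 4 * Hv := by rw [← div_lt_iff₀ hv]; linarith
  have y1 : Hu - a ^ 2 ≤ 1 / 4 * Hu := by nlinarith
  have y2 : Hv - b ^ 2 ≤ 1 / 4 * Hv := by nlinarith
  have c2 : (m - a * b) ^ 2 ≤ (√(Hu * Hv) / 4) ^ 2 := by
    rw [div_pow, Real.sq_sqrt (by positivity)]
    calc _ ≤ _ := c
      _ ≤ (1 / 4 * Hu) * (1 / 4 * Hv) := by gcongr
      _ = _ := by ring
  have c3 := (abs_le_of_sq_le_sq' c2 (by positivity)).1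
  have c4 : 3 / 4 * √(Hu * Hv) ≤ a * b := by
    refine le_of_sq_le_sq ?_ (by positivity) |>.trans le_rfl
    rw [mul_pow, Real.sq_sqrt (by positivity), mul_pow]
    calc _ = (3 / 4 * Hu) * (3 / 4 * Hv) := by ring
      _ ≤ a ^ 2 * b ^ 2 := by gcongr <;> linarith
  have c5 : 1 / 2 * √(Hu * Hv) ≤ m := by linarith
  have c6 : 1 / 4 * (Hu * Hv) ≤ P := by
    calc 1 / 4 * (Hu * Hv) = (1 / 2 * √(Hu * Hv)) ^ 2 := by
          rw [mul_pow, Real.sq_sqrt (by positivity)]; ring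
      _ ≤ m ^ 2 := by gcongr
      _ ≤ P := hsq
  have d1 : s * Hv < 1 := by
    have : s * (1 / 4 * (Hu * Hv)) < 1 / 4 * Hu := by nlinarith
    nlinarith
  have d2 : s * Hu < 1 := by
    have : s * (1 / 4 * (Hu * Hv)) < 1 / 4 * Hv := by nlinarith
    nlinarith
  linarith

/-- The product of the two quadratic means grows at least like a small power of `s` (an
Alt–Caffarelli–Friedman type estimate), once `u(0)v(0)s ≥ 1`. -/
lemma lemD (h : Sol u v) (hs : 0 < s) : u 0 * v 0 * s < 1 ∨
    (u 0 * v 0) ^ 9 * s ≤ (av s (fun y => u y ^ 2) * av s (fun y => v y ^ 2)) ^ 4 := by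
  by_cases hc : u 0 * v 0 * s < 1
  · exact Or.inl hc
  right
  push Not at hc
  have hm : 0 < u 0 * v 0 := mul_pos (h.pu 0) (h.pv 0)
  set m := u 0 * v 0 with hmdef
  have hms : 1 / m ≤ s := by rw [div_le_iff₀ hm]; linarith
  have hm1 : 0 < 1 / m := by positivity
  set Hu := fun s => av s (fun y => u y ^ 2) with hHu
  set Hv := fun s => av s (fun y => v y ^ 2) with hHv
  have key : log (Hu (1 / m)) + log (Hv (1 / m)) - 1 / 4 * log (1 / m) ≤ log (Hu s) + log (Hv s) - 1 / 4 * log s := by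
    refine le_of_deriv (f := fun s => log (Hu s) + log (Hv s) - 1 / 4 * log s) hms (fun x hx =>
      (((h.hasDerivAt_sq (hm1.trans_le hx.1)).log (h.Hu_pos (hm1.trans_le hx.1)).ne').add
        ((h.symm.hasDerivAt_sq (hm1.trans_le hx.1)).log (h.symm.Hu_pos (hm1.trans_le hx.1)).ne')).sub
        ((Real.hasDerivAt_log (hm1.trans_le hx.1).ne').const_mul _)) fun x hx => ?_
    have hx0 := hm1.trans_le hx.1
    have hk : ¬ (x * Hh u v x < 2) := by
      have h1 := h.sq_le_av hx0
      have h2 := h.symm.sq_le_av hx0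
      have h3 : 2 * m ≤ Hh u v x := by unfold Hh; nlinarith [sq_nonneg (u 0 - v 0)]
      have h4 : 1 ≤ m * x := by have := hx.1; rw [div_le_iff₀ hm] at this; linarith
      nlinarith
    have hk2 := mt (h.K' hx0) hk
    push Not at hk2
    have eP := congrFun (PP_symm (u := u) (v := v)) x
    unfold PP at eP hk2
    rw [eP]
    have : (av x (gs u) + av x (fun y => u y ^ 2 * v y ^ 2)) / av x (fun y => u y ^ 2) +
        (av x (gs v) + av x (fun y => u y ^ 2 * v y ^ 2)) / av x (fun y => v y ^ 2) ≥ 1 / 4 * x⁻¹ := by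
      have e : x * (av x (gs u) + av x (fun y => u y ^ 2 * v y ^ 2)) / av x (fun y => u y ^ 2) +
        x * (av x (gs v) + av x (fun y => u y ^ 2 * v y ^ 2)) / av x (fun y => v y ^ 2) =
        x * ((av x (gs u) + av x (fun y => u y ^ 2 * v y ^ 2)) / av x (fun y => u y ^ 2) +
        (av x (gs v) + av x (fun y => u y ^ 2 * v y ^ 2)) / av x (fun y => v y ^ 2)) := by ring
      rw [e] at hk2
      rw [ge_iff_le, ← div_eq_mul_inv, div_le_iff₀ hx0]; linarith
    linarith
  have hu1 := h.sq_le_av hm1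
  have hv1 := h.symm.sq_le_av hm1
  have pu := h.Hu_pos hs
  have pv := h.symm.Hu_pos hs
  have l1 : log (m ^ 2) ≤ log (Hu (1 / m)) + log (Hv (1 / m)) := by
    rw [← Real.log_mul (h.Hu_pos hm1).ne' (h.symm.Hu_pos hm1).ne']
    refine Real.log_le_log (by positivity) ?_
    rw [hmdef, mul_pow]
    exact mul_le_mul hu1 hv1 (by positivity) (h.Hu_pos hm1).le
  rw [← Real.log_le_log_iff (by positivity) (by positivity), Real.log_mul (by positivity) hs.ne', Real.log_pow,
    Real.log_pow, Real.log_mul pu.ne' pv.ne']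
  rw [Real.log_pow] at l1
  rw [one_div, Real.log_inv, ← one_div] at key
  push_cast at *
  linarith

end Sol
end TR

/-! ### Segregation and truncations -/

namespace TR
open Real Filter Topology
variable {n : ℕ}

/-- The positive part squared, a `C¹` function. -/
def mx (x : ℝ) : ℝ := max x 0 ^ 2

lemma mx_deriv (x : ℝ) : HasDerivAt mx (2 * max x 0) x := by
  rcases lt_trichotomy x 0 with hx | hx | hx
  · have : mx =ᶠ[𝓝 x] fun _ => 0 := by
      filter_upwards [gt_mem_nhds hx] with y hy
      simp [mx, max_eq_right hy.le]
    refine HasDerivAt.congr_of_eventuallyEq ?_ this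
    simpa [max_eq_right hx.le] using hasDerivAt_const x (0 : ℝ)
  · subst hx
    have : mx =O[𝓝 (0 : ℝ)] fun x => ‖x - 0‖ ^ 2 := by
      refine Asymptotics.IsBigO.of_bound 1 (Eventually.of_forall fun y => ?_)
      simp only [mx, sub_zero, norm_pow, norm_norm, one_mul]
      gcongr
      rw [Real.norm_eq_abs, Real.norm_eq_abs, abs_of_nonneg (le_max_right _ _)]
      exact max_le (le_abs_self y) (abs_nonneg y)
    have := (this.hasFDerivAt (by norm_num)).hasDerivAt
    simpa using this
  · have : mx =ᶠ[𝓝 x] fun y => y ^ 2 := by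
      filter_upwards [lt_mem_nhds hx] with y hy
      simp [mx, max_eq_left hy.le]
    refine HasDerivAt.congr_of_eventuallyEq ?_ this
    simpa [max_eq_left hx.le] using hasDerivAt_pow 2 x

lemma mx_contDiff : ContDiff ℝ 1 mx := by
  rw [contDiff_one_iff_deriv]
  refine ⟨fun x => (mx_deriv x).differentiableAt, ?_⟩
  have : deriv mx = fun x => 2 * max x 0 := by ext x; exact (mx_deriv x).deriv
  rw [this]; fun_prop

/-- The `C¹` truncation `(s - M)₊² / s` on `s > 0`, which vanishes for `s ≤ M`. -/
noncomputable def ps (M s : ℝ) : ℝ := mx (s - M) / s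

/-- The derivative of `ps M`. -/
noncomputable def ps' (M s : ℝ) : ℝ := max (s - M) 0 / s * (2 - max (s - M) 0 / s)

section
variable {M s : ℝ}

lemma ps_deriv (hs : 0 < s) : HasDerivAt (ps M) (ps' M s) s := by
  have h1 : HasDerivAt (fun s => mx (s - M)) (2 * max (s - M) 0) s := by
    exact (mx_deriv (s - M)).comp_sub_const s M
  refine (h1.div (hasDerivAt_id s) hs.ne').congr_deriv ?_
  simp only [ps', mx, id]
  field_simp

lemma ratio_mem (hM : 0 ≤ M) (hs : 0 < s) : 0 ≤ max (s - M) 0 / s ∧ max (s - M) 0 / s ≤ 1 := by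
  refine ⟨by positivity, ?_⟩
  rw [div_le_one hs]; exact max_le (by linarith) hs.le

lemma ps'_mem (hM : 0 ≤ M) (hs : 0 < s) : 0 ≤ ps' M s ∧ ps' M s ≤ 1 := by
  obtain ⟨h1, h2⟩ := ratio_mem hM hs
  unfold ps'
  exact ⟨mul_nonneg h1 (by linarith), by nlinarith [sq_nonneg (max (s - M) 0 / s - 1)]⟩

lemma ps_nonneg (hs : 0 < s) : 0 ≤ ps M s := by unfold ps mx; positivity

lemma ps_le (hM : 0 ≤ M) (hs : 0 < s) : ps M s ≤ s := by
  unfold ps mx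
  rw [div_le_iff₀ hs, ← sq]
  have : max (s - M) 0 ≤ s := max_le (by linarith) hs.le
  gcongr

lemma le_ps (hM : 0 ≤ M) (hs : 0 < s) : s - 2 * M ≤ ps M s := by
  unfold ps mx
  rw [le_div_iff₀ hs]
  rcases le_total (s - M) 0 with h | h
  · rw [max_eq_right h]; nlinarith
  · rw [max_eq_left h]; nlinarith [sq_nonneg M]

lemma ps_zero (h : s ≤ M) : ps M s = 0 := by simp [ps, mx, max_eq_right (sub_nonpos.2 h)]

lemma ps'_zero (h : s ≤ M) : ps' M s = 0 := by simp [ps', max_eq_right (sub_nonpos.2 h)]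
end

/-- The truncation of `f` at the level `θ⁴ √H_f(t)`. -/
noncomputable def tru (t θ : ℝ) (f : Euc n → ℝ) (y : Euc n) : ℝ := ps (θ ^ 4 * √(av t (fun y => f y ^ 2))) (f y)

/-- The dimensional constant of the tail estimates. -/
noncomputable def Kt (n : ℕ) : ℝ := 2 ^ (n / 2 : ℝ) * (exp 1 * 2)

lemma Kt_pos : 0 < Kt n := by unfold Kt; positivity

lemma sq_le_of_quad {X A B : ℝ} (hA : 0 < A) (h : ∀ l : ℝ, 2 * l * X ≤ l ^ 2 * A + B) : X ^ 2 ≤ A * B := by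
  have h1 := h (X / A)
  have e : 2 * (X / A) * X - (X / A) ^ 2 * A = X ^ 2 / A := by field_simp; ring
  have : X ^ 2 / A ≤ B := by linarith
  rw [div_le_iff₀ hA] at this; linarith

namespace Sol
variable {u v : Euc n → ℝ} {s t θ : ℝ}

/-- Segregation: for `|x|² ≤ t log L` the product `u v` is smaller by the factor `L` than the quadratic means
at scale `t` allow. This is `lemD` centred at `x`, at a scale smaller than `t`. -/
lemma uv_small (h : Sol u v) {L : ℝ} (hL : 2 ≤ L) (ht : 0 < t) (hLt : L ^ (4 * n + 18) ≤ u 0 * v 0 * t)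
    (x : Euc n) (hx : ‖x‖ ^ 2 ≤ t * log L) :
    u x * v x ≤ √(av t (fun y => u y ^ 2) * av t (fun y => v y ^ 2)) / L := by
  have hL0 : 0 < L := by linarith
  have hL1 : 1 ≤ L := by linarith
  have hs : 0 < t / L := by positivity
  have hst : t / L < t := by rw [div_lt_iff₀ hL0]; nlinarith
  have hts : t / 2 ≤ t - t / L := by
    have : t / L ≤ t / 2 := by gcongr
    linarith
  have k : ∀ {u v : Euc n → ℝ}, Sol u v → av (t / L) (fun y => TR.tr x u y ^ 2) ≤
      L ^ (n / 2 : ℝ) * L * av t (fun y => u y ^ 2) := by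
    intro u v h
    refine (h.Hu_tr_le hs hst x).trans ?_
    have e1 : t / (t / L) = L := by field_simp
    have e2 : exp (‖x‖ ^ 2 / (2 * (t - t / L))) ≤ L := by
      rw [← Real.le_log_iff_exp_le hL0, div_le_iff₀ (by linarith)]
      have := Real.log_nonneg hL1
      nlinarith
    have := h.Hu_pos ht
    rw [e1]; gcongr
  have ku := k h
  have kv := k h.symm
  have pu := h.Hu_pos ht
  have pv := h.symm.Hu_pos ht
  have d := (h.tr x).lemD hs
  have pux := (h.tr x).Hu_pos hs
  have pvx := (h.tr x).symm.Hu_pos hs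
  have e0 : TR.tr x u 0 * TR.tr x v 0 = u x * v x := by simp [TR.tr]
  rw [e0] at d
  have hm : 0 < u x * v x := mul_pos (h.pu x) (h.pv x)
  have q1 := h.sq_le_av ht
  have q2 := h.symm.sq_le_av ht
  have p0 := h.pu 0
  have q0 := h.pv 0
  set m := u x * v x
  set g := √(av t (fun y => u y ^ 2) * av t (fun y => v y ^ 2)) with hg
  have hg2 : g ^ 2 = av t (fun y => u y ^ 2) * av t (fun y => v y ^ 2) := Real.sq_sqrt (by positivity)
  have hg0 : 0 < g := by positivity
  have hgm : u 0 * v 0 ≤ g := by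
    refine Real.le_sqrt_of_sq_le ?_
    rw [mul_pow]; gcongr
  have hLt' : L ^ (4 * n + 18) ≤ g * t := hLt.trans (by gcongr)
  have hprod : av (t / L) (fun y => TR.tr x u y ^ 2) * av (t / L) (fun y => TR.tr x v y ^ 2) ≤ L ^ (n + 2) * g ^ 2 := by
    have e3 : (L ^ (n / 2 : ℝ)) * (L ^ (n / 2 : ℝ)) = L ^ n := by
      rw [← Real.rpow_add hL0, add_halves, Real.rpow_natCast]
    calc _ ≤ (L ^ (n / 2 : ℝ) * L * av t (fun y => u y ^ 2)) * (L ^ (n / 2 : ℝ) * L * av t (fun y => v y ^ 2)) := by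
          gcongr
      _ = ((L ^ (n / 2 : ℝ)) * (L ^ (n / 2 : ℝ))) * L ^ 2 *
          (av t (fun y => u y ^ 2) * av t (fun y => v y ^ 2)) := by ring
      _ = _ := by rw [e3, hg2]; ring
  rw [le_div_iff₀ hL0]
  rcases d with d | d
  · have d' : m * t < L := by
      have : m * t / L < 1 := by rw [mul_div_assoc]; exact d
      rwa [div_lt_one hL0] at this
    have : L ^ 2 ≤ g * t := (pow_le_pow_right₀ hL1 (by omega)).trans hLt'
    have : m * L * t ≤ g * t := by nlinarith
    exact le_of_mul_le_mul_right this ht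
  · have d1 : m ^ 9 * (t / L) ≤ (L ^ (n + 2) * g ^ 2) ^ 4 := d.trans (by gcongr)
    have d2 : m ^ 9 * t ≤ L ^ (4 * n + 9) * g ^ 8 := by
      have : m ^ 9 * t = m ^ 9 * (t / L) * L := by field_simp
      rw [this]
      calc _ ≤ (L ^ (n + 2) * g ^ 2) ^ 4 * L := by gcongr
        _ = _ := by ring
    have d3 : (m * L) ^ 9 * t ≤ g ^ 9 * t := by
      calc (m * L) ^ 9 * t = (m ^ 9 * t) * L ^ 9 := by ring
        _ ≤ (L ^ (4 * n + 9) * g ^ 8) * L ^ 9 := by gcongr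
        _ = L ^ (4 * n + 18) * g ^ 8 := by ring
        _ ≤ (g * t) * g ^ 8 := by gcongr
        _ = _ := by ring
    have d4 := le_of_mul_le_mul_right d3 ht
    exact le_of_pow_le_pow_left₀ (by norm_num) hg0.le d4

/-- The conditions on the scale `t` and the small parameter `θ` under which the truncations separate. -/
structure Adm (u v : Euc n → ℝ) (t θ : ℝ) : Prop where
  t0 : 0 < t
  θ0 : 0 < θ
  θ1 : θ ≤ 1 / 2
  big : (1 / θ ^ 8) ^ (4 * n + 18) ≤ u 0 * v 0 * t

lemma Adm.symm (a : Adm u v t θ) : Adm v u t θ := ⟨a.t0, a.θ0, a.θ1, by rw [mul_comm (v 0)]; exact a.big⟩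


lemma lev_nonneg (_ : Sol u v) (_ : Adm u v t θ) : 0 ≤ θ ^ 4 * √(av t (fun y => u y ^ 2)) := by positivity

lemma tru_nonneg (h : Sol u v) (_ : Adm u v t θ) (y) : 0 ≤ tru t θ u y := ps_nonneg (h.pu y)
lemma tru_le (h : Sol u v) (a : Adm u v t θ) (y) : tru t θ u y ≤ u y := ps_le (h.lev_nonneg a) (h.pu y)

lemma le_tru (h : Sol u v) (a : Adm u v t θ) (y) : u y - 2 * (θ * √(av t (fun y => u y ^ 2))) ≤ tru t θ u y := by
  refine le_trans ?_ (le_ps (h.lev_nonneg a) (h.pu y))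
  have : θ ^ 4 ≤ θ := by
    have := a.θ0; have := a.θ1
    exact pow_le_of_le_one (by linarith) (by linarith) (by norm_num)
  have : θ ^ 4 * √(av t (fun y => u y ^ 2)) ≤ θ * √(av t (fun y => u y ^ 2)) := by gcongr
  linarith

lemma tru_c1 (h : Sol u v) (_ : Adm u v t θ) : ContDiff ℝ 1 (tru t θ u) :=
  (mx_contDiff.comp (h.c1.sub contDiff_const)).div h.c1 fun y => (h.pu y).ne'

lemma D_tru (h : Sol u v) (_ : Adm u v t θ) (i : Fin n) (y) : D i (tru t θ u) y = ps' (θ ^ 4 * √(av t (fun y => u y ^ 2))) (u y) * D i u y :=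
  D_comp (φ := ps _) (ps_deriv (h.pu y)) (h.c1.differentiable one_ne_zero y)

lemma D_tru_le (h : Sol u v) (a : Adm u v t θ) (i : Fin n) (y) : |D i (tru t θ u) y| ≤ |D i u y| := by
  rw [h.D_tru a, abs_mul]
  obtain ⟨h1, h2⟩ := ps'_mem (h.lev_nonneg a) (h.pu y)
  rw [abs_of_nonneg h1]
  exact mul_le_of_le_one_left (abs_nonneg _) h2

lemma tru_pg (h : Sol u v) (a : Adm u v t θ) : PG (tru t θ u) := h.pgu.mono (h.tru_c1 a).continuous fun y => by
  rw [abs_of_nonneg (h.tru_nonneg a y), abs_of_pos (h.pu y)]; exact h.tru_le a y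

lemma tru_g2D (h : Sol u v) (a : Adm u v t θ) (i : Fin n) : G2 (D i (tru t θ u)) := (h.g2D i).mono (continuous_D (h.tru_c1 a)) (h.D_tru_le a i)

lemma gs_tru_le (h : Sol u v) (a : Adm u v t θ) (y) : gs (tru t θ u) y ≤ gs u y :=
  Finset.sum_le_sum fun i _ => sq_le_sq.2 (h.D_tru_le a i y)

/-- At every point one of the components lies below its truncation level, or the point is so far out that
the Gaussian tail compensates. -/
lemma outside (h : Sol u v) (a : Adm u v t θ) (y : Euc n) : (u y ≤ θ ^ 4 * √(av t (fun y => u y ^ 2)) ∨ v y ≤ θ ^ 4 * √(av t (fun y => v y ^ 2))) ∨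
    1 ≤ θ ^ 2 * exp (‖y‖ ^ 2 / (4 * t)) := by
  have ht := a.t0
  have hθ := a.θ0
  have hθ1 := a.θ1
  by_cases hy : ‖y‖ ^ 2 ≤ t * log (1 / θ ^ 8)
  · left
    have h2 : 2 ≤ 1 / θ ^ 8 := by
      rw [le_div_iff₀ (by positivity)]
      have : θ ^ 8 ≤ (1 / 2) ^ 8 := by gcongr
      norm_num at this ⊢; linarith
    have := h.uv_small h2 ht a.big y hy
    by_contra hc
    push Not at hc
    have h3 : (θ ^ 4 * √(av t (fun y => u y ^ 2))) * (θ ^ 4 * √(av t (fun y => v y ^ 2))) < u y * v y :=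
      mul_lt_mul'' hc.1 hc.2 (by positivity) (by positivity)
    rw [Real.sqrt_mul (h.Hu_pos ht).le] at this
    have e : √(av t (fun y => u y ^ 2)) * √(av t (fun y => v y ^ 2)) / (1 / θ ^ 8) =
      (θ ^ 4 * √(av t (fun y => u y ^ 2))) * (θ ^ 4 * √(av t (fun y => v y ^ 2))) := by
      field_simp
    linarith
  · right
    push Not at hy
    rw [one_div, Real.log_inv, Real.log_pow] at hy
    have h1 : -(2 * log θ) ≤ ‖y‖ ^ 2 / (4 * t) := by
      rw [le_div_iff₀ (by positivity)]
      push_cast at hy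
      linarith
    calc 1 = θ ^ 2 * exp (-(2 * log θ)) := by
          rw [Real.exp_neg, show 2 * log θ = log (θ ^ 2) by rw [Real.log_pow]; norm_num,
            Real.exp_log (by positivity)]; field_simp
      _ ≤ _ := by gcongr

/-- The weight `exp(|y|²/(4t))` trades the Gaussian of scale `t` for the one of scale `2t`. -/
lemma av_tail (_ : Sol u v) (a : Adm u v t θ) {f g F : Euc n → ℝ} (hf : GI f) (hg : GI g) (hF : GI F) {l : ℝ}
    (hle : ∀ y, F y ≤ l * (f y * exp (‖y‖ ^ 2 / (4 * t))) + g y) :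
    av t F ≤ l * (2 ^ (n / 2 : ℝ) * av (2 * t) f) + av t g := by
  have ht := a.t0
  rw [← av_exp ht]
  unfold av
  have i1 := int_exp ht hf
  rw [← integral_const_mul, ← integral_add (i1.const_mul _) (hg.int t ht)]
  refine integral_mono (hF.int t ht) ((i1.const_mul _).add (hg.int t ht)) fun y => ?_
  have := mul_le_mul_of_nonneg_right (hle y) (gk_pos ht y).le
  dsimp only; linarith

lemma H_double (h : Sol u v) (a : Adm u v t θ) : Hh u v (2 * t) ≤ exp 1 * 2 * Hh u v t := by
  have ht := a.t0
  have := h.F1 ht (t := 2 * t) (by linarith)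
  rw [div_le_iff₀ (by positivity)] at this
  refine this.trans (le_of_eq ?_); field_simp

/-- The truncations `U, V` have almost disjoint supports, so the average of `UV` is `O(θ)`. -/
lemma cross (h : Sol u v) (a : Adm u v t θ) : av t (fun y => tru t θ u y * tru t θ v y) ^ 2 ≤
    (θ ^ 2 * (Kt n * Hh u v t)) * av t (fun y => v y ^ 2) := by
  have ht := a.t0
  have hθ := a.θ0
  have hH := h.H_pos ht
  have hK := Kt_pos (n := n)
  refine sq_le_of_quad (by positivity) fun l => ?_
  rw [← av_const_mul]
  have := h.av_tail a (l := l ^ 2 * θ ^ 2) (h.pgu.pow 2).GI (h.pgv.pow 2).GI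
    (((h.tru_pg a).mul (h.symm.tru_pg a.symm)).GI.const_mul (2 * l)) (fun y => by
    have u0 := h.tru_nonneg a y
    have v0 := h.symm.tru_nonneg a.symm y
    have u1 := h.tru_le a y
    have v1 := h.symm.tru_le a.symm y
    have e0 : 0 ≤ l ^ 2 * θ ^ 2 * (u y ^ 2 * exp (‖y‖ ^ 2 / (4 * t))) + v y ^ 2 := by positivity
    rcases h.outside a y with (h1 | h1) | h1
    · have : tru t θ u y = 0 := ps_zero h1
      rw [this]; simpa using e0
    · have : tru t θ v y = 0 := ps_zero h1
      rw [this]; simpa using e0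
    · calc 2 * l * (tru t θ u y * tru t θ v y) ≤ l ^ 2 * tru t θ u y ^ 2 + tru t θ v y ^ 2 := by
            nlinarith [sq_nonneg (l * tru t θ u y - tru t θ v y)]
        _ ≤ l ^ 2 * u y ^ 2 * 1 + v y ^ 2 := by rw [mul_one]; gcongr
        _ ≤ l ^ 2 * u y ^ 2 * (θ ^ 2 * exp (‖y‖ ^ 2 / (4 * t))) + v y ^ 2 := by gcongr
        _ = _ := by ring)
  refine this.trans ?_
  have h2 := h.H_double a
  have h3 : av (2 * t) (fun y => u y ^ 2) ≤ exp 1 * 2 * Hh u v t := by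
    have := h.symm.Hu_pos (s := 2 * t) (by positivity)
    unfold Hh at h2 ⊢; linarith
  calc _ ≤ l ^ 2 * θ ^ 2 * (2 ^ (n / 2 : ℝ) * (exp 1 * 2 * Hh u v t)) + av t (fun y => v y ^ 2) := by gcongr
    _ = _ := by unfold Kt; ring

/-- The gradients of the truncations are almost orthogonal, for the same reason as in `cross`. -/
lemma gcross (h : Sol u v) (a : Adm u v t θ) : (t * av t (fun y => ∑ i, D i (tru t θ u) y * D i (tru t θ v) y)) ^ 2 ≤
    (θ ^ 2 * (Kt n * Hh u v t)) * (t * av t (gs v)) := by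
  have ht := a.t0
  have hθ := a.θ0
  have hH := h.H_pos ht
  have hK := Kt_pos (n := n)
  refine sq_le_of_quad (by positivity) fun l => ?_
  have := h.av_tail a (l := l ^ 2 * θ ^ 2) h.gigs h.symm.gigs
    ((GI.sum Finset.univ fun i _ => ((h.tru_g2D a i).mul (h.symm.tru_g2D a.symm i))).const_mul (2 * l)) (fun y => by
    have u1 := h.gs_tru_le a y
    have v1 := h.symm.gs_tru_le a.symm y
    have e1 := gs_nonneg u y
    have e2 := gs_nonneg v y
    have e0 : 0 ≤ l ^ 2 * θ ^ 2 * (gs u y * exp (‖y‖ ^ 2 / (4 * t))) + gs v y := by positivity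
    rcases h.outside a y with (h1 | h1) | h1
    · have : ∀ i, D i (tru t θ u) y = 0 := fun i => by rw [h.D_tru a, ps'_zero h1, zero_mul]
      simpa [this] using e0
    · have : ∀ i, D i (tru t θ v) y = 0 := fun i => by rw [h.symm.D_tru a.symm, ps'_zero h1, zero_mul]
      simpa [this] using e0
    · calc 2 * l * (∑ i, D i (tru t θ u) y * D i (tru t θ v) y) ≤ l ^ 2 * gs (tru t θ u) y + gs (tru t θ v) y := by
            unfold gs
            rw [Finset.mul_sum, Finset.mul_sum, ← Finset.sum_add_distrib]
            refine Finset.sum_le_sum fun i _ => ?_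
            nlinarith [sq_nonneg (l * D i (tru t θ u) y - D i (tru t θ v) y)]
        _ ≤ l ^ 2 * gs u y * 1 + gs v y := by rw [mul_one]; gcongr
        _ ≤ l ^ 2 * gs u y * (θ ^ 2 * exp (‖y‖ ^ 2 / (4 * t))) + gs v y := by gcongr
        _ = _ := by ring)
  rw [av_const_mul] at this
  have h2 := h.H_double a
  have h2t : 0 < 2 * t := by positivity
  have h3 : 2 * t * av (2 * t) (gs u) ≤ Hh u v (2 * t) := by
    have a1 := h.NH h2t
    have a2 := h.N_le_one h2t
    rw [h.av_en h2t] at a1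
    have a3 := P_nonneg (u := u) (v := v) h2t
    have a4 := gs_av_nonneg (u := v) h2t
    have a5 := h.H_pos h2t
    nlinarith [mul_nonneg h2t.le a3, mul_nonneg h2t.le a4]
  have h4 := gs_av_nonneg (u := u) h2t
  have h5 : t * av (2 * t) (gs u) ≤ exp 1 * 2 * Hh u v t := by
    have : 0 ≤ t * av (2 * t) (gs u) := by positivity
    linarith
  calc 2 * l * (t * av t (fun y => ∑ i, D i (tru t θ u) y * D i (tru t θ v) y))
      = t * (2 * l * av t (fun y => ∑ i, D i (tru t θ u) y * D i (tru t θ v) y)) := by ring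
    _ ≤ t * (l ^ 2 * θ ^ 2 * (2 ^ (n / 2 : ℝ) * av (2 * t) (gs u)) + av t (gs v)) := by gcongr
    _ = l ^ 2 * θ ^ 2 * (2 ^ (n / 2 : ℝ) * (t * av (2 * t) (gs u))) + t * av t (gs v) := by ring
    _ ≤ l ^ 2 * θ ^ 2 * (2 ^ (n / 2 : ℝ) * (exp 1 * 2 * Hh u v t)) + t * av t (gs v) := by gcongr
    _ = _ := by unfold Kt; ring

end Sol
end TR

/-! ### Neither component is negligible -/

namespace TR
open Real Filter Topology
variable {n : ℕ}

lemma le_of_deriv' {f f' : ℝ → ℝ} {a b : ℝ} (hab : a ≤ b) (h : ∀ x ∈ Icc a b, HasDerivAt f (f' x) x)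
    (h0 : ∀ x ∈ Ioo a b, 0 ≤ f' x) : f a ≤ f b := by
  have hm : MonotoneOn f (Icc a b) := by
    refine monotoneOn_of_hasDerivWithinAt_nonneg (f' := f') (convex_Icc a b)
      (fun x hx => (h x hx).continuousAt.continuousWithinAt)
      (fun x hx => (h x (interior_subset hx)).hasDerivWithinAt) (fun x hx => h0 x (by rwa [interior_Icc] at hx))
  exact hm (left_mem_Icc.2 hab) (right_mem_Icc.2 hab) hab

/-- A function that does not decrease while it is at most `k` stays above the smaller of `f a` and `k`. -/
lemma barrier {f f' : ℝ → ℝ} {a k t : ℝ} (hat : a ≤ t) (h : ∀ x, a ≤ x → HasDerivAt f (f' x) x)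
    (h0 : ∀ x, a ≤ x → f x ≤ k → 0 ≤ f' x) : min (f a) k ≤ f t := by
  by_contra hc
  push Not at hc
  set S := {s ∈ Icc a t | min (f a) k ≤ f s} with hS
  have hcont : ContinuousOn f (Icc a t) := fun x hx => (h x hx.1).continuousAt.continuousWithinAt
  have hcl : IsClosed S := by
    have := hcont.preimage_isClosed_of_isClosed isClosed_Icc (isClosed_Ici (a := min (f a) k))
    exact this
  have hcomp : IsCompact S := isCompact_Icc.of_isClosed_subset hcl fun x hx => hx.1
  obtain ⟨s, hs, hmax⟩ := hcomp.exists_isGreatest ⟨a, ⟨left_mem_Icc.2 hat, min_le_left _ _⟩⟩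
  have : f s ≤ f t := le_of_deriv' hs.1.2 (fun x hx => h x (hs.1.1.trans hx.1)) fun x hx => by
    refine h0 x (hs.1.1.trans hx.1.le) ?_
    by_contra hk
    push Not at hk
    have : x ∈ S := ⟨⟨hs.1.1.trans hx.1.le, hx.2.le⟩, (min_le_right _ _).trans hk.le⟩
    exact absurd (hmax this) (not_le.2 hx.1)
  linarith [hs.2]

/-- The exponent `κ = 1/(32n+145)`, chosen so that `θ = t^(-κ)` satisfies the largeness condition of `Adm`
for large `t`: that condition asks for `θ^(-(32n+144))` to be at most `u(0)v(0)t`. -/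
noncomputable def ka (n : ℕ) : ℝ := 1 / (32 * n + 145)

/-- The small parameter `θ(t) = t^(-κ)` at scale `t`. Since `θ(t)/t` is integrable at infinity, errors
`O(θ)` in logarithmic derivatives add up to a bounded amount over all scales. -/
noncomputable def th (n : ℕ) (t : ℝ) : ℝ := t ^ (-ka n)

lemma ka_pos : 0 < ka n := by unfold ka; positivity

lemma th_pos {t : ℝ} (ht : 0 < t) : 0 < th n t := Real.rpow_pos_of_pos ht _

lemma th_deriv {t : ℝ} (ht : 0 < t) : HasDerivAt (th n) (-(ka n * (th n t / t))) t := by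
  refine (Real.hasDerivAt_rpow_const (p := -ka n) (Or.inl ht.ne')).congr_deriv ?_
  unfold th; rw [Real.rpow_sub_one ht.ne']; ring

lemma th_lim : Tendsto (th n) atTop (𝓝 0) := tendsto_rpow_neg_atTop ka_pos

lemma th_le_one {t : ℝ} (ht : 1 ≤ t) : th n t ≤ 1 :=
  Real.rpow_le_one_of_one_le_of_nonpos ht (by linarith [ka_pos (n := n)])

namespace Sol
variable {u v : Euc n → ℝ} {s t θ : ℝ}

lemma exists_adm (h : Sol u v) {θ₀ : ℝ} (hθ : 0 < θ₀) :
    ∃ t₀, 1 ≤ t₀ ∧ ∀ t, t₀ ≤ t → Adm u v t (th n t) ∧ th n t ≤ θ₀ := by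
  have hm : 0 < u 0 * v 0 := mul_pos (h.pu 0) (h.pv 0)
  have ev := ((th_lim (n := n)).eventually_le_const hθ).and
    (((th_lim (n := n)).eventually_le_const hm).and
      ((th_lim (n := n)).eventually_le_const (show (0 : ℝ) < 1 / 2 by norm_num)))
  obtain ⟨t₁, ht₁⟩ := eventually_atTop.1 ev
  refine ⟨max t₁ 1, le_max_right _ _, fun t ht => ?_⟩
  obtain ⟨e1, e2, e3⟩ := ht₁ t ((le_max_left _ _).trans ht)
  have ht0 : 0 < t := lt_of_lt_of_le one_pos ((le_max_right _ _).trans ht)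
  refine ⟨⟨ht0, th_pos ht0, e3, ?_⟩, e1⟩
  have e : (1 / th n t ^ 8) ^ (4 * n + 18) = t * th n t := by
    have e4 : (1 / th n t ^ 8) = t ^ (8 * ka n) := by
      unfold th
      rw [← Real.rpow_natCast, ← Real.rpow_mul ht0.le, one_div, ← Real.rpow_neg ht0.le]
      congr 1; push_cast; ring
    rw [e4, ← Real.rpow_natCast, ← Real.rpow_mul ht0.le]
    unfold th
    nth_rewrite 2 [← Real.rpow_one t]
    rw [← Real.rpow_add ht0]
    congr 1
    unfold ka; push_cast; field_simp; ring
  rw [e, mul_comm]; gcongr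

lemma av_tru_le (h : Sol u v) (a : Adm u v t θ) : av t (tru t θ u) ≤ av t u :=
  av_mono a.t0 (h.tru_pg a).GI h.pgu.GI (h.tru_le a)

lemma av_tru_nonneg (h : Sol u v) (a : Adm u v t θ) : 0 ≤ av t (tru t θ u) :=
  av_nonneg a.t0 (h.tru_nonneg a)

lemma le_av_tru (h : Sol u v) (a : Adm u v t θ) :
    av t u - 2 * (θ * √(av t (fun y => u y ^ 2))) ≤ av t (tru t θ u) := by
  have := av_mono a.t0 (h.pgu.GI.sub (GI.const (2 * (θ * √(av t (fun y => u y ^ 2)))))) (h.tru_pg a).GI (h.le_tru a)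
  rwa [av_sub a.t0 h.pgu.GI (GI.const _), av_const a.t0] at this

lemma av_tru_sq_le (h : Sol u v) (a : Adm u v t θ) :
    av t (fun y => tru t θ u y ^ 2) ≤ av t (fun y => u y ^ 2) :=
  av_mono a.t0 ((h.tru_pg a).pow 2).GI (h.pgu.pow 2).GI fun y =>
    pow_le_pow_left₀ (h.tru_nonneg a y) (h.tru_le a y) 2

lemma le_sqrt_Hu (h : Sol u v) (ht : 0 < t) : av t u ≤ √(av t (fun y => u y ^ 2)) :=
  Real.le_sqrt_of_sq_le (av_sq_le ht h.pgu.G2)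

lemma le_av_tru_sq (h : Sol u v) (a : Adm u v t θ) :
    (1 - 4 * θ) * av t (fun y => u y ^ 2) ≤ av t (fun y => tru t θ u y ^ 2) := by
  have ht := a.t0
  have hθ := a.θ0
  set M := √(av t (fun y => u y ^ 2)) with hM
  have hM2 : M ^ 2 = av t (fun y => u y ^ 2) := Real.sq_sqrt (h.Hu_pos ht).le
  have hM0 : 0 ≤ M := Real.sqrt_nonneg _
  have h1 : av t (fun y => u y ^ 2 - (4 * (θ * M)) * u y) ≤ av t (fun y => tru t θ u y ^ 2) := by
    refine av_mono ht ((h.pgu.pow 2).GI.sub (h.pgu.GI.const_mul _)) ((h.tru_pg a).pow 2).GI fun y => ?_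
    have a1 := h.le_tru a y
    have a2 := h.tru_nonneg a y
    have a3 := h.tru_le a y
    rw [← hM] at a1
    have hp : 0 ≤ θ * M := by positivity
    have hu := h.pu y
    nlinarith [mul_nonneg hp (sub_nonneg.2 a3), mul_nonneg (sub_nonneg.2 a1) (add_nonneg hu.le a2)]
  rw [av_sub ht (h.pgu.pow 2).GI (h.pgu.GI.const_mul _), av_const_mul] at h1
  have h2 := h.le_sqrt_Hu ht
  rw [← hM] at h2
  have : 4 * (θ * M) * av t u ≤ 4 * (θ * M) * M := by gcongr
  nlinarith

/-- The test function `αU - βV` built from the truncations. -/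
noncomputable def ww (u v : Euc n → ℝ) (t θ α β : ℝ) (y : Euc n) : ℝ := α * tru t θ u y - β * tru t θ v y

lemma ww_c1 (h : Sol u v) (a : Adm u v t θ) (α β : ℝ) : ContDiff ℝ 1 (ww u v t θ α β) :=
  (contDiff_const.mul (h.tru_c1 a)).sub (contDiff_const.mul (h.symm.tru_c1 a.symm))

lemma ww_g2 (h : Sol u v) (a : Adm u v t θ) (α β : ℝ) : G2 (ww u v t θ α β) :=
  ((h.tru_pg a).G2.const_mul α).sub ((h.symm.tru_pg a.symm).G2.const_mul β)

lemma D_ww (h : Sol u v) (a : Adm u v t θ) (α β : ℝ) (i : Fin n) :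
    D i (ww u v t θ α β) = fun y => α * D i (tru t θ u) y - β * D i (tru t θ v) y := by
  ext y
  have d1 := (h.tru_c1 a).differentiable one_ne_zero y
  have d2 := (h.symm.tru_c1 a.symm).differentiable one_ne_zero y
  unfold ww
  rw [D_sub (d1.const_mul α) (d2.const_mul β), D_const_mul d1, D_const_mul d2]

lemma ww_g2D (h : Sol u v) (a : Adm u v t θ) (α β : ℝ) (i : Fin n) : G2 (D i (ww u v t θ α β)) := by
  rw [h.D_ww a]
  exact ((h.tru_g2D a i).const_mul α).sub ((h.symm.tru_g2D a.symm i).const_mul β)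

lemma av_ww (h : Sol u v) (a : Adm u v t θ) (α β : ℝ) :
    av t (ww u v t θ α β) = α * av t (tru t θ u) - β * av t (tru t θ v) := by
  unfold ww
  rw [av_sub a.t0 ((h.tru_pg a).GI.const_mul α) ((h.symm.tru_pg a.symm).GI.const_mul β), av_const_mul, av_const_mul]

lemma av_ww_sq (h : Sol u v) (a : Adm u v t θ) (α β : ℝ) : av t (fun y => ww u v t θ α β y ^ 2) =
    α ^ 2 * av t (fun y => tru t θ u y ^ 2) + β ^ 2 * av t (fun y => tru t θ v y ^ 2)
      - 2 * α * β * av t (fun y => tru t θ u y * tru t θ v y) := by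
  have pU := h.tru_pg a
  have pV := h.symm.tru_pg a.symm
  have : (fun y => ww u v t θ α β y ^ 2) = fun y => (α ^ 2 * tru t θ u y ^ 2 + β ^ 2 * tru t θ v y ^ 2)
      - (2 * α * β) * (tru t θ u y * tru t θ v y) := by ext y; unfold ww; ring
  rw [this, av_sub a.t0 (((pU.pow 2).GI.const_mul _).add ((pV.pow 2).GI.const_mul _)) ((pU.mul pV).GI.const_mul _),
    av_add a.t0 ((pU.pow 2).GI.const_mul _) ((pV.pow 2).GI.const_mul _), av_const_mul, av_const_mul, av_const_mul]

lemma tru_gigs (h : Sol u v) (a : Adm u v t θ) : GI (gs (tru t θ u)) := GI.sum _ fun i _ => (h.tru_g2D a i).sq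

lemma av_ww_gs (h : Sol u v) (a : Adm u v t θ) (α β : ℝ) : av t (gs (ww u v t θ α β)) =
    α ^ 2 * av t (gs (tru t θ u)) + β ^ 2 * av t (gs (tru t θ v))
      - 2 * α * β * av t (fun y => ∑ i, D i (tru t θ u) y * D i (tru t θ v) y) := by
  have gU := h.tru_gigs a
  have gV := h.symm.tru_gigs a.symm
  have gX : GI (fun y => ∑ i, D i (tru t θ u) y * D i (tru t θ v) y) :=
    GI.sum Finset.univ fun i _ => (h.tru_g2D a i).mul (h.symm.tru_g2D a.symm i)
  have : gs (ww u v t θ α β) = fun y => (α ^ 2 * gs (tru t θ u) y + β ^ 2 * gs (tru t θ v) y)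
      - (2 * α * β) * ∑ i, D i (tru t θ u) y * D i (tru t θ v) y := by
    ext y; unfold gs
    simp only [h.D_ww a, Finset.mul_sum, ← Finset.sum_add_distrib, ← Finset.sum_sub_distrib]
    exact Finset.sum_congr rfl fun i _ => by ring
  rw [this, av_sub a.t0 ((gU.const_mul _).add (gV.const_mul _)) (gX.const_mul _),
    av_add a.t0 (gU.const_mul _) (gV.const_mul _), av_const_mul, av_const_mul, av_const_mul]

lemma cross' (h : Sol u v) (a : Adm u v t θ) : av t (fun y => tru t θ u y * tru t θ v y) ≤
    θ * (√(Kt n * Hh u v t) * √(av t (fun y => v y ^ 2))) := by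
  have hθ := a.θ0
  have := mul_pos (Kt_pos (n := n)) (h.H_pos a.t0)
  refine le_of_sq_le_sq ((h.cross a).trans (le_of_eq ?_)) (by positivity) |>.trans le_rfl
  rw [mul_pow, mul_pow, Real.sq_sqrt this.le, Real.sq_sqrt (h.symm.Hu_pos a.t0).le]; ring

lemma gcross' (h : Sol u v) (a : Adm u v t θ) :
    -(θ * (√(Kt n * Hh u v t) * √(t * av t (gs v)))) ≤ t * av t (fun y => ∑ i, D i (tru t θ u) y * D i (tru t θ v) y) := by
  have hθ := a.θ0
  have := mul_pos (Kt_pos (n := n)) (h.H_pos a.t0)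
  have hg := mul_nonneg a.t0.le (gs_av_nonneg (u := v) a.t0)
  refine (abs_le_of_sq_le_sq' ((h.gcross a).trans (le_of_eq ?_)) (by positivity)).1
  rw [mul_pow, mul_pow, Real.sq_sqrt this.le, Real.sq_sqrt hg]; ring

/-- Upper bound for the Dirichlet energy of `αU - βV`. -/
lemma S1 (h : Sol u v) (a : Adm u v t θ) {α β : ℝ} (hα : 0 ≤ α) (hβ : 0 ≤ β) : t * av t (gs (ww u v t θ α β)) ≤
    α ^ 2 * (t * av t (gs u)) + β ^ 2 * (t * av t (gs v)) +
      2 * (α * β) * (θ * (√(Kt n * Hh u v t) * √(t * av t (gs v)))) := by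
  have ht := a.t0
  rw [h.av_ww_gs a]
  have h1 := av_mono ht (h.tru_gigs a) h.gigs (h.gs_tru_le a)
  have h2 := av_mono ht (h.symm.tru_gigs a.symm) h.symm.gigs (h.symm.gs_tru_le a.symm)
  have h3 := h.gcross' a
  have h4 := mul_le_mul_of_nonneg_left h1 (by positivity : 0 ≤ t * α ^ 2)
  have h5 := mul_le_mul_of_nonneg_left h2 (by positivity : 0 ≤ t * β ^ 2)
  have h6 := mul_le_mul_of_nonneg_left h3 (by positivity : 0 ≤ 2 * (α * β))
  linarith

/-- Lower bound for the quadratic mean of `αU - βV`. -/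
lemma S2 (h : Sol u v) (a : Adm u v t θ) {α β : ℝ} (hα : 0 ≤ α) (hβ : 0 ≤ β) :
    (1 - 4 * θ) * (α ^ 2 * av t (fun y => u y ^ 2) + β ^ 2 * av t (fun y => v y ^ 2)) -
      2 * (α * β) * (θ * (√(Kt n * Hh u v t) * √(av t (fun y => v y ^ 2)))) ≤
      av t (fun y => ww u v t θ α β y ^ 2) := by
  rw [h.av_ww_sq a]
  have h1 := h.le_av_tru_sq a
  have h2 := h.symm.le_av_tru_sq a.symm
  have h3 := h.cross' a
  have h4 := mul_le_mul_of_nonneg_left h1 (sq_nonneg α)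
  have h5 := mul_le_mul_of_nonneg_left h2 (sq_nonneg β)
  have h6 := mul_le_mul_of_nonneg_left h3 (by positivity : 0 ≤ 2 * (α * β))
  linarith

lemma e_sum_le (h : Sol u v) (ht : 0 < t) : t * av t (gs u) + t * av t (gs v) + t * PP u v t ≤ Hh u v t := by
  have a1 := h.NH ht
  have a2 := h.N_le_one ht
  rw [h.av_en ht] at a1
  have a5 := h.H_pos ht
  nlinarith

/-- The Poincaré inequality applied to the mean-zero combination of the truncations `U` and `V`. -/
lemma static3 (h : Sol u v) (a : Adm u v t θ) (hev : t * av t (gs v) ≤ av t (fun y => v y ^ 2)) :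
    (av t (tru t θ u) ^ 2 - av t (tru t θ v) ^ 2) * (av t (fun y => v y ^ 2) - t * av t (gs v)) ≤
      θ * (av t (fun y => v y ^ 2) * Hh u v t) * (8 + 4 * √(Kt n)) := by
  have ht := a.t0
  have hθ := a.θ0
  have hα := h.symm.av_tru_nonneg a.symm
  have hβ := h.av_tru_nonneg a
  have s1 := h.S1 a hα hβ
  have s2 := h.S2 a hα hβ
  have p := poincare ht (h.ww_c1 a _ _) (h.ww_g2 a _ _) (h.ww_g2D a (av t (tru t θ v)) (av t (tru t θ u)))
  rw [h.av_ww a] at p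
  have e : av t (gs (ww u v t θ (av t (tru t θ v)) (av t (tru t θ u)))) =
    ∑ i, av t (fun y => D i (ww u v t θ (av t (tru t θ v)) (av t (tru t θ u))) y ^ 2) :=
    av_sum ht _ fun i _ => (h.ww_g2D a _ _ i).sq
  rw [← e] at p
  have b1 : av t (tru t θ u) ^ 2 ≤ av t (fun y => u y ^ 2) := (av_sq_le ht (h.tru_pg a).G2).trans (h.av_tru_sq_le a)
  have b2 : av t (tru t θ v) ^ 2 ≤ av t (fun y => v y ^ 2) :=
    (av_sq_le ht (h.symm.tru_pg a.symm).G2).trans (h.symm.av_tru_sq_le a.symm)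
  have es := h.e_sum_le ht
  have hP := mul_nonneg ht.le (P_nonneg (u := u) (v := v) ht)
  have pu := h.Hu_pos ht
  have pv := h.symm.Hu_pos ht
  have gv := mul_nonneg ht.le (gs_av_nonneg (u := v) ht)
  have hHp := h.H_pos ht
  have hH : Hh u v t = av t (fun y => u y ^ 2) + av t (fun y => v y ^ 2) := rfl
  rw [Real.sqrt_mul Kt_pos.le] at s1 s2
  set X := av t (tru t θ u)
  set Y := av t (tru t θ v)
  set Hu := av t (fun y => u y ^ 2)
  set Hv := av t (fun y => v y ^ 2)
  set eu := t * av t (gs u)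
  set ev := t * av t (gs v)
  set H := Hh u v t
  have c1 : √ev ≤ √Hv := Real.sqrt_le_sqrt hev
  have c2 : Y ≤ √Hv := Real.le_sqrt_of_sq_le b2
  have c3 : X ≤ √H := Real.le_sqrt_of_sq_le (by linarith)
  have sv : √Hv * √Hv = Hv := Real.mul_self_sqrt pv.le
  have sH : √H * √H = H := Real.mul_self_sqrt hHp.le
  have c4 : Y * X * (√(Kt n) * √H * √Hv) ≤ √(Kt n) * (Hv * H) := by
    calc _ ≤ √Hv * √H * (√(Kt n) * √H * √Hv) := by gcongr
      _ = √(Kt n) * ((√Hv * √Hv) * (√H * √H)) := by ring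
      _ = _ := by rw [sv, sH]
  have c5 : Y * X * (√(Kt n) * √H * √ev) ≤ √(Kt n) * (Hv * H) := by
    refine le_trans ?_ c4; gcongr
  have c6 : Y ^ 2 * Hu ≤ Hv * H := by
    exact mul_le_mul b2 (by linarith) pu.le pv.le
  have c7 : X ^ 2 * Hv ≤ Hv * H := by
    rw [mul_comm]; gcongr; linarith
  have d1 : (X ^ 2 - Y ^ 2) * (Hv - ev) ≤ Y ^ 2 * (Hu - eu) + X ^ 2 * (Hv - ev) := by
    nlinarith [mul_nonneg (sq_nonneg Y) (by linarith : 0 ≤ Hu + Hv - eu - ev)]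
  have d2 : Y ^ 2 * (Hu - eu) + X ^ 2 * (Hv - ev) ≤ θ * (4 * (Y ^ 2 * Hu + X ^ 2 * Hv) +
      2 * (Y * X * (√(Kt n) * √H * √Hv)) + 2 * (Y * X * (√(Kt n) * √H * √ev))) := by linarith
  have d3 := d1.trans d2
  apply d3.trans
  calc _ ≤ θ * (4 * (Hv * H + Hv * H) + 2 * (√(Kt n) * (Hv * H)) + 2 * (√(Kt n) * (Hv * H))) := by gcongr
    _ = _ := by ring

/-- A component carrying a fixed share of the height has a mean comparable to `√H`. -/
lemma av_ge_of_half (h : Sol u v) (ht : 0 < t) {η : ℝ} (hη : 0 ≤ η) (hu : η * Hh u v t ≤ av t (fun y => u y ^ 2)) :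
    √(η ^ 3 / (C3 n ^ 2 * K2 n)) * √(Hh u v t) ≤ av t u := by
  have hc := h.cubic ht
  have hH := h.H_pos ht
  have hC : 0 < C3 n ^ 2 * K2 n := mul_pos (pow_pos C3_pos 2) K2_pos
  have hau : 0 ≤ av t u := av_nonneg ht fun y => (h.pu y).le
  rw [← Real.sqrt_mul (by positivity)]
  refine Real.sqrt_le_iff.2 ⟨hau, ?_⟩
  have h1 : (η * Hh u v t) ^ 3 ≤ C3 n ^ 2 * K2 n * (av t u ^ 2 * Hh u v t ^ 2) := le_trans (by gcongr) hc
  rw [div_mul_eq_mul_div, div_le_iff₀ hC]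
  have h2 : (η ^ 3 * Hh u v t) * Hh u v t ^ 2 ≤ (av t u ^ 2 * (C3 n ^ 2 * K2 n)) * Hh u v t ^ 2 := by nlinarith
  exact le_of_mul_le_mul_right h2 (by positivity)

/-- If `v` carries only a small share of the height, then its own frequency is at least `1 - O(θ)`. -/
lemma ev_lower (n : ℕ) : ∃ θ₀ η₀ C : ℝ, 0 < θ₀ ∧ 0 < η₀ ∧ 0 < C ∧ ∀ (u v : Euc n → ℝ) (t θ : ℝ), Sol u v → Adm u v t θ →
    θ ≤ θ₀ → av t (fun y => v y ^ 2) ≤ η₀ * Hh u v t →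
    (1 - C * θ) * av t (fun y => v y ^ 2) ≤ t * av t (gs v) := by
  have hC : 0 < C3 n ^ 2 * K2 n := mul_pos (pow_pos C3_pos 2) K2_pos
  set r := √((1 / 2) ^ 3 / (C3 n ^ 2 * K2 n)) with hr
  have hr0 : 0 < r := by positivity
  refine ⟨r / 4, min (1 / 2) (r ^ 2 / 8), 8 / r ^ 2 * (8 + 4 * √(Kt n)), by positivity, by positivity, by positivity, ?_⟩
  intro u v t θ h a hθ hv
  have ht := a.t0
  have hθ0 := a.θ0
  have hH := h.H_pos ht
  have pv := h.symm.Hu_pos ht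
  have hKt := Real.sqrt_nonneg (Kt n)
  by_cases hev : av t (fun y => v y ^ 2) < t * av t (gs v)
  · refine le_trans ?_ hev.le
    have : 0 ≤ 8 / r ^ 2 * (8 + 4 * √(Kt n)) * θ := by positivity
    nlinarith
  push Not at hev
  have s := h.static3 a hev
  have hH' : Hh u v t = av t (fun y => u y ^ 2) + av t (fun y => v y ^ 2) := rfl
  have v1 : av t (fun y => v y ^ 2) ≤ 1 / 2 * Hh u v t := hv.trans (by gcongr; exact min_le_left _ _)
  have v2 : av t (fun y => v y ^ 2) ≤ r ^ 2 / 8 * Hh u v t := hv.trans (by gcongr; exact min_le_right _ _)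
  have au := h.av_ge_of_half ht (η := 1 / 2) (by norm_num) (by linarith)
  rw [← hr] at au
  have lu := h.le_av_tru a
  have b2 : av t (tru t θ v) ^ 2 ≤ av t (fun y => v y ^ 2) :=
    (av_sq_le ht (h.symm.tru_pg a.symm).G2).trans (h.symm.av_tru_sq_le a.symm)
  have sq1 : √(av t (fun y => u y ^ 2)) ≤ √(Hh u v t) := Real.sqrt_le_sqrt (by linarith)
  have lu2 : r / 2 * √(Hh u v t) ≤ av t (tru t θ u) := by
    have : θ * √(av t (fun y => u y ^ 2)) ≤ r / 4 * √(Hh u v t) := by gcongr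
    linarith
  have lu3 : r ^ 2 / 4 * Hh u v t ≤ av t (tru t θ u) ^ 2 := by
    calc _ = (r / 2 * √(Hh u v t)) ^ 2 := by rw [mul_pow, Real.sq_sqrt hH.le]; ring
      _ ≤ _ := by gcongr
  have lu4 : r ^ 2 / 8 * Hh u v t ≤ av t (tru t θ u) ^ 2 - av t (tru t θ v) ^ 2 := by linarith
  have q : r ^ 2 / 8 * Hh u v t * (av t (fun y => v y ^ 2) - t * av t (gs v)) ≤
      θ * (av t (fun y => v y ^ 2) * Hh u v t) * (8 + 4 * √(Kt n)) :=
    le_trans (mul_le_mul_of_nonneg_right lu4 (by linarith)) s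
  have q2 : Hh u v t * (av t (fun y => v y ^ 2) - t * av t (gs v)) ≤
      Hh u v t * (8 / r ^ 2 * (8 + 4 * √(Kt n)) * θ * av t (fun y => v y ^ 2)) := by
    have : Hh u v t * (av t (fun y => v y ^ 2) - t * av t (gs v)) =
      8 / r ^ 2 * (r ^ 2 / 8 * Hh u v t * (av t (fun y => v y ^ 2) - t * av t (gs v))) := by field_simp
    rw [this]
    calc _ ≤ 8 / r ^ 2 * (θ * (av t (fun y => v y ^ 2) * Hh u v t) * (8 + 4 * √(Kt n))) := by gcongr
      _ = _ := by ring
  have q3 := le_of_mul_le_mul_left q2 hH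
  linarith

/-- Neither component becomes negligible at large scales. -/
lemma step3 (h : Sol u v) : ∃ c t₀ : ℝ, 0 < c ∧ 1 ≤ t₀ ∧ ∀ t, t₀ ≤ t → c * Hh u v t ≤ av t (fun y => v y ^ 2) := by
  obtain ⟨θ₀, η₀, C, hθ₀, hη₀, hC, key⟩ := ev_lower n
  obtain ⟨t₀, ht₀, hadm⟩ := h.exists_adm hθ₀
  have hk := ka_pos (n := n)
  -- `f` is the logarithm of the share of `v`, corrected by bounded terms that absorb the errors; while that
  -- share is small, `ev_lower` makes `f` nondecreasing
  set f := fun t => log (av t (fun y => v y ^ 2)) - log (Hh u v t) + Nn u v t - C / ka n * th n t with hf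
  have hpos : ∀ x, t₀ ≤ x → 0 < x := fun x hx => by linarith
  have hb := fun t (ht : t₀ ≤ t) => barrier (f := f) (k := log η₀ - C / ka n) ht (fun x hx =>
    (((((h.symm.hasDerivAt_sq (hpos x hx)).log (h.symm.Hu_pos (hpos x hx)).ne').sub (h.log_H_deriv (hpos x hx))).add
      (h.N_deriv (hpos x hx))).sub ((th_deriv (hpos x hx)).const_mul (C / ka n)))) (fun x hx hfx => by
    have hx0 := hpos x hx
    have pv := h.symm.Hu_pos hx0
    have pH := h.H_pos hx0
    have n0 := h.N_nonneg hx0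
    have n1 := h.N_le_one hx0
    have hA := h.A_nonneg hx0
    have hP := P_nonneg (u := v) (v := u) hx0
    have hε : 0 ≤ x * PP u v x / Hh u v x :=
      div_nonneg (mul_nonneg hx0.le (P_nonneg hx0)) pH.le
    have hth := th_le_one (n := n) (ht₀.trans hx)
    have hlog : log (av x (fun y => v y ^ 2)) ≤ log (η₀ * Hh u v x) := by
      rw [Real.log_mul hη₀.ne' pH.ne']
      have : C / ka n * th n x ≤ C / ka n * 1 := by gcongr
      simp only [hf] at hfx
      linarith
    have hle := (Real.log_le_log_iff pv (by positivity)).1 hlog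
    have hk1 := key u v x (th n x) h (hadm x hx).1 (hadm x hx).2 hle
    have hk2 : (1 - C * th n x) / x ≤ (av x (gs v) + av x (fun y => v y ^ 2 * u y ^ 2)) / av x (fun y => v y ^ 2) := by
      rw [div_le_div_iff₀ hx0 pv]
      unfold PP at hP
      nlinarith [mul_nonneg hx0.le hP]
    have e : (1 - C * th n x) / x - (Nn u v x + x * PP u v x / Hh u v x) / x +
        (Aa u v x + (1 + Nn u v x) * (x * PP u v x / Hh u v x)) / x - C / ka n * -(ka n * (th n x / x)) =
        (1 - Nn u v x + Aa u v x + Nn u v x * (x * PP u v x / Hh u v x)) / x := by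
      field_simp; ring
    have e2 : 0 ≤ (1 - Nn u v x + Aa u v x + Nn u v x * (x * PP u v x / Hh u v x)) / x :=
      div_nonneg (by nlinarith [mul_nonneg n0 hε]) hx0.le
    linarith)
  refine ⟨exp (min (f t₀) (log η₀ - C / ka n) - 1), t₀, exp_pos _, ht₀, fun t ht => ?_⟩
  have hx0 := hpos t ht
  have pv := h.symm.Hu_pos hx0
  have pH := h.H_pos hx0
  have n1 := h.N_le_one hx0
  have h1 := hb t ht
  rw [← Real.log_le_log_iff (by positivity) pv, Real.log_mul (exp_pos _).ne' pH.ne', Real.log_exp]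
  have : 0 ≤ C / ka n * th n t := by have := th_pos (n := n) hx0; positivity
  generalize min (f t₀) (log η₀ - C / ka n) = q at *
  simp only [hf] at h1
  linarith

end Sol
end TR

/-! ### Near-linearity and imbalance -/

namespace TR
open Real Filter Topology
variable {n : ℕ}

lemma av_odd {s : ℝ} {f : Euc n → ℝ} (hf : ∀ y, f (-y) = - f y) : av s f = 0 := by
  have h1 : av s f = - av s f := by
    conv_lhs => unfold av
    rw [← integral_neg_eq_self]
    simp only [hf, gk_neg]
    rw [← av_neg]
    rfl
  linarith

lemma lin_odd (b : Fin n → ℝ) (y : Euc n) : ∑ i, b i * (-y) i = - ∑ i, b i * y i := by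
  simp [Finset.sum_neg_distrib]

lemma abs_sq_sub_le (a b : ℝ) : |a * abs a - b * abs b| ≤ |a - b| * (2 * |a| + |a - b|) := by
  have h1 : |b| ≤ |a| + |a - b| := by
    have := abs_sub_abs_le_abs_sub b a
    rw [abs_sub_comm] at this; linarith
  have h2 : |a * abs a - b * abs b| ≤ |a - b| * (|a| + |b|) := by
    have h3 : a * |a| - b * |b| = (a - b) * |a| + b * (|a| - |b|) := by ring
    rw [h3]
    refine (abs_add_le _ _).trans ?_
    rw [abs_mul, abs_mul, abs_abs]
    have := abs_abs_sub_abs_le a b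
    nlinarith [abs_nonneg b]
  refine h2.trans ?_
  have := abs_nonneg (a - b)
  exact mul_le_mul_of_nonneg_left (by linarith) this

/-- A function whose gradient has small variance is close to an affine function, so that the mean of
`w |w|` is small together with the gradient variance and the mean of `w`: the linear part is odd. -/
lemma near_linear {s : ℝ} (hs : 0 < s) {w : Euc n → ℝ} (hw : ContDiff ℝ 1 w) (h2 : G2 w) (hD : ∀ i, G2 (D i w))
    {Q : ℝ} (hQ : Q = s * (∑ i, (av s (fun y => D i w y ^ 2) - av s (D i w) ^ 2)) + av s w ^ 2) :
    |av s (fun y => w y * |w y|)| ≤ 2 * (√Q * √(av s (fun y => w y ^ 2))) + Q := by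
  set b : Fin n → ℝ := fun i => av s (D i w) with hb
  set l : Euc n → ℝ := fun y => ∑ i, b i * y i with hl
  have lG2 : G2 l := G2.sum Finset.univ fun i _ => (PG.coord i).G2.const_mul (b i)
  have lc : ContDiff ℝ 1 l := ContDiff.sum fun i _ => contDiff_const.mul (coord_contDiff i)
  have lodd : ∀ y, l (-y) = - l y := fun y => lin_odd b y
  set d : Euc n → ℝ := fun y => w y - l y with hd
  have dG2 : G2 d := h2.sub lG2
  have dc : ContDiff ℝ 1 d := hw.sub lc
  have Dl : ∀ i y, D i l y = b i := by
    intro i y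
    rw [hl, D_sum Finset.univ fun j _ => ((coord_contDiff j).differentiable one_ne_zero y).const_mul (b j)]
    rw [Finset.sum_eq_single i]
    · rw [D_const_mul ((coord_contDiff i).differentiable one_ne_zero y), D_coord]; simp
    · intro j _ hj
      rw [D_const_mul ((coord_contDiff j).differentiable one_ne_zero y), D_coord]; simp [hj.symm]
    · simp
  have Dd : ∀ i, D i d = fun y => D i w y - b i := by
    intro i; ext y
    rw [hd, D_sub (hw.differentiable one_ne_zero y) (lc.differentiable one_ne_zero y), Dl]
  have dDG2 : ∀ i, G2 (D i d) := fun i => by rw [Dd]; exact (hD i).sub (PG.const (b i)).G2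
  have hp := poincare hs dc dG2 dDG2
  have e1 : av s d = av s w := by
    rw [hd, av_sub hs h2.GI lG2.GI, av_odd lodd, sub_zero]
  have e2 : ∀ i, av s (fun y => D i d y ^ 2) = av s (fun y => D i w y ^ 2) - b i ^ 2 := by
    intro i
    have : (fun y => D i d y ^ 2) = fun y => D i w y ^ 2 - (2 * b i) * D i w y + b i ^ 2 := by
      ext y; rw [Dd]; ring
    rw [this, av_add hs ((hD i).sq.sub ((hD i).GI.const_mul _)) (GI.const _), av_sub hs (hD i).sq ((hD i).GI.const_mul _),
      av_const_mul, av_const hs]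
    simp only [hb]; ring
  simp only [e1, e2] at hp
  have hdQ : av s (fun y => d y ^ 2) ≤ Q := by rw [hQ]; simp only [hb] at hp; linarith
  have h0 : av s (fun y => l y * |l y|) = 0 := av_odd fun y => by rw [lodd, abs_neg]; ring
  have habs : ∀ {f : Euc n → ℝ}, G2 f → G2 (fun y => |f y|) := fun {f} hf =>
    ⟨hf.cont.abs, by simpa only [sq_abs] using hf.sq⟩
  have g1 : GI (fun y => w y * |w y|) := h2.mul (habs h2)
  have g2 : GI (fun y => l y * |l y|) := lG2.mul (habs lG2)
  have g3 : GI (fun y => |d y| * |w y|) := (habs dG2).mul (habs h2)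
  have k1 : |av s (fun y => w y * |w y|)| ≤ 2 * av s (fun y => |d y| * |w y|) + av s (fun y => d y ^ 2) := by
    have : av s (fun y => w y * |w y|) = av s (fun y => w y * |w y| - l y * |l y|) := by
      rw [av_sub hs g1 g2, h0, sub_zero]
    rw [this]
    refine (av_abs_le hs (g1.sub g2)).trans ?_
    rw [← av_const_mul, ← av_add hs (g3.const_mul _) dG2.sq]
    refine av_mono hs (g1.sub g2).abs ((g3.const_mul _).add dG2.sq) fun y => ?_
    refine (abs_sq_sub_le _ _).trans (le_of_eq ?_)
    rw [← sq_abs (d y)]; simp only [hd]; ring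
  have k2 : av s (fun y => |d y| * |w y|) ≤ √Q * √(av s (fun y => w y ^ 2)) := by
    have hc := av_cs hs (habs dG2) (habs h2)
    simp only [sq_abs] at hc
    have hn : 0 ≤ av s (fun y => d y ^ 2) := av_nonneg hs fun y => sq_nonneg _
    have hn2 : 0 ≤ av s (fun y => w y ^ 2) := av_nonneg hs fun y => sq_nonneg _
    rw [← Real.sqrt_mul (hn.trans hdQ)]
    exact Real.le_sqrt_of_sq_le (hc.trans (by gcongr))
  linarith


lemma sq_le_two (x y : ℝ) : x ^ 2 ≤ 2 * y ^ 2 + 2 * (x - y) ^ 2 := by nlinarith [sq_nonneg (x - 2 * y)]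

lemma abs_sq_diff {a b : ℝ} (ha : 0 ≤ a) (hb : 0 ≤ b) : |(a - b) * abs (a - b) - (a ^ 2 - b ^ 2)| ≤ 2 * (a * b) := by
  rcases le_total b a with h | h
  · rw [abs_of_nonneg (sub_nonneg.2 h), abs_le]; constructor <;> nlinarith [mul_nonneg ha hb]
  · rw [abs_of_nonpos (sub_nonpos.2 h), abs_le]; constructor <;> nlinarith [mul_nonneg ha hb]

namespace Sol
variable {u v : Euc n → ℝ} {s t θ : ℝ}

lemma av_ww_abs (h : Sol u v) (a : Adm u v t θ) {α β : ℝ} (hα : 0 ≤ α) (hβ : 0 ≤ β) :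
    |av t (fun y => ww u v t θ α β y * |ww u v t θ α β y|) -
      (α ^ 2 * av t (fun y => tru t θ u y ^ 2) - β ^ 2 * av t (fun y => tru t θ v y ^ 2))| ≤
      2 * (α * β) * av t (fun y => tru t θ u y * tru t θ v y) := by
  have ht := a.t0
  have pU := h.tru_pg a
  have pV := h.symm.tru_pg a.symm
  have hw := h.ww_g2 a α β
  have g1 : GI (fun y => ww u v t θ α β y * |ww u v t θ α β y|) :=
    hw.mul ⟨hw.cont.abs, by simpa only [sq_abs] using hw.sq⟩
  have g2 := ((pU.pow 2).GI.const_mul (α ^ 2)).sub ((pV.pow 2).GI.const_mul (β ^ 2))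
  rw [← av_const_mul, ← av_const_mul, ← av_const_mul,
    ← av_sub ht ((pU.pow 2).GI.const_mul _) ((pV.pow 2).GI.const_mul _), ← av_sub ht g1 g2]
  refine (av_abs_le ht (g1.sub g2)).trans (av_mono ht (g1.sub g2).abs ((pU.mul pV).GI.const_mul _) fun y => ?_)
  have := abs_sq_diff (mul_nonneg hα (h.tru_nonneg a y)) (mul_nonneg hβ (h.symm.tru_nonneg a.symm y))
  unfold ww
  refine le_trans (le_of_eq ?_) (this.trans (le_of_eq ?_))
  · congr 1; ring
  · ring

set_option maxHeartbeats 1000000 in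
/-- With weights given by the means, the truncated difference `v̄U - ūV` has almost zero mean, so the
Gaussian Poincaré inequality bounds `v̄² t∫|∇u|² + ū² t∫|∇v|²` from below up to `O(θ)`; the surplus `R`
in that inequality controls the imbalance `v̄² ∫u² - ū² ∫v²`. -/
lemma static4 (n : ℕ) : ∃ C : ℝ, 0 < C ∧ ∀ (u v : Euc n → ℝ) (t θ : ℝ), Sol u v → Adm u v t θ → ∃ R : ℝ, 0 ≤ R ∧
    (av t v ^ 2 * av t (fun y => u y ^ 2) + av t u ^ 2 * av t (fun y => v y ^ 2)) + R / 8 - C * θ * Hh u v t ^ 2 ≤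
      av t v ^ 2 * (t * av t (gs u)) + av t u ^ 2 * (t * av t (gs v)) ∧
    (av t v ^ 2 * av t (fun y => u y ^ 2) - av t u ^ 2 * av t (fun y => v y ^ 2)) ^ 2 ≤
      C * (R + θ * Hh u v t ^ 2) * Hh u v t ^ 2 := by
  set k := √(Kt n) with hk
  have hk0 : 0 ≤ k := Real.sqrt_nonneg _
  set K := 17 + 8 * k with hK
  refine ⟨4 * (8 + 2 * K) + 2 * (2 * k + 4) ^ 2 + 6 + 4 * k, by positivity, fun u v t θ h a => ?_⟩
  have ht := a.t0
  have hθ := a.θ0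
  have hθ1 := a.θ1
  have hY : 0 ≤ av t v := av_nonneg ht fun y => (h.pv y).le
  have hX : 0 ≤ av t u := av_nonneg ht fun y => (h.pu y).le
  have s1 := h.S1 a hY hX
  have s2 := h.S2 a hY hX
  have hc1 := h.ww_c1 a (av t v) (av t u)
  have hg2 := h.ww_g2 a (av t v) (av t u)
  have hgD := h.ww_g2D a (av t v) (av t u)
  have gap := poincare_gap ht hc1 hg2 hgD
  have nl := near_linear ht hc1 hg2 hgD rfl
  have ab := h.av_ww_abs a hY hX
  have e : av t (gs (ww u v t θ (av t v) (av t u))) =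
    ∑ i, av t (fun y => D i (ww u v t θ (av t v) (av t u)) y ^ 2) :=
    av_sum ht _ fun i _ => (hgD i).sq
  rw [← e] at gap
  have hR : 0 ≤ t * ∑ i, (av t (fun y => D i (ww u v t θ (av t v) (av t u)) y ^ 2) -
      av t (D i (ww u v t θ (av t v) (av t u))) ^ 2) :=
    mul_nonneg ht.le (Finset.sum_nonneg fun i _ => sub_nonneg.mpr (av_sq_le ht (hgD i)))
  have W0 : 0 ≤ av t (fun y => ww u v t θ (av t v) (av t u) y ^ 2) := av_nonneg ht fun _ => sq_nonneg _
  have W1 := h.av_ww_sq a (av t v) (av t u)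
  have wb := h.av_ww a (av t v) (av t u)
  have P0 : 0 ≤ av t (fun y => tru t θ u y * tru t θ v y) :=
    av_nonneg ht fun y => mul_nonneg (h.tru_nonneg a y) (h.symm.tru_nonneg a.symm y)
  have P1 := h.cross' a
  have U1 := h.av_tru_sq_le a
  have U2 := h.le_av_tru_sq a
  have V1 := h.symm.av_tru_sq_le a.symm
  have V2 := h.symm.le_av_tru_sq a.symm
  have u1 := h.av_tru_le a
  have u2 := h.le_av_tru a
  have v1 := h.symm.av_tru_le a.symm
  have v2 := h.symm.le_av_tru a.symm
  have x1 := h.le_sqrt_Hu ht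
  have y1 := h.symm.le_sqrt_Hu ht
  have es := h.e_sum_le ht
  have hP := mul_nonneg ht.le (P_nonneg (u := u) (v := v) ht)
  have pu := h.Hu_pos ht
  have pv := h.symm.Hu_pos ht
  have gu := mul_nonneg ht.le (gs_av_nonneg (u := u) ht)
  have gv := mul_nonneg ht.le (gs_av_nonneg (u := v) ht)
  have hHp := h.H_pos ht
  have hH : Hh u v t = av t (fun y => u y ^ 2) + av t (fun y => v y ^ 2) := rfl
  rw [Real.sqrt_mul Kt_pos.le, ← hk] at s1 s2 P1
  refine ⟨_, hR, ?_⟩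
  set X := av t u
  set Y := av t v
  set Hu := av t (fun y => u y ^ 2)
  set Hv := av t (fun y => v y ^ 2)
  set eu := t * av t (gs u)
  set ev := t * av t (gs v)
  set H := Hh u v t
  set G := t * av t (gs (ww u v t θ Y X))
  set W := av t (fun y => ww u v t θ Y X y ^ 2)
  set I := av t (fun y => ww u v t θ Y X y * |ww u v t θ Y X y|)
  set m := av t (ww u v t θ Y X)
  set S := ∑ i, (av t (fun y => D i (ww u v t θ Y X) y ^ 2) - av t (D i (ww u v t θ Y X)) ^ 2)
  set P := av t (fun y => tru t θ u y * tru t θ v y)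
  set TU := av t (fun y => tru t θ u y ^ 2)
  set TV := av t (fun y => tru t θ v y ^ 2)
  set U := av t (tru t θ u)
  set V := av t (tru t θ v)
  have sH : √H * √H = H := Real.mul_self_sqrt hHp.le
  have sHu : √Hu ≤ √H := Real.sqrt_le_sqrt (by linarith)
  have sHv : √Hv ≤ √H := Real.sqrt_le_sqrt (by linarith)
  have sev : √ev ≤ √H := Real.sqrt_le_sqrt (by linarith)
  have hX1 : X ≤ √H := x1.trans sHu
  have hY1 : Y ≤ √H := y1.trans sHv
  have hX2 : X ^ 2 ≤ H := by rw [← sH, sq]; gcongr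
  have hY2 : Y ^ 2 ≤ H := by rw [← sH, sq]; gcongr
  have hYX : Y * X ≤ H := by rw [← sH]; gcongr
  have hYX0 : 0 ≤ Y * X := mul_nonneg hY hX
  have hZ : Y ^ 2 * Hu + X ^ 2 * Hv ≤ H ^ 2 := by
    calc _ ≤ H * Hu + H * Hv := by gcongr
      _ = _ := by rw [hH]; ring
  have he : Y ^ 2 * eu + X ^ 2 * ev ≤ H ^ 2 := by
    calc _ ≤ H * eu + H * ev := by gcongr
      _ = H * (eu + ev) := by ring
      _ ≤ H * H := by gcongr; linarith
      _ = _ := by ring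
  have hW : W ≤ H ^ 2 := by
    have : Y ^ 2 * TU + X ^ 2 * TV ≤ Y ^ 2 * Hu + X ^ 2 * Hv := by gcongr
    have : 0 ≤ 2 * Y * X * P := by positivity
    linarith
  have c1 : 2 * (Y * X) * (θ * (k * √H * √ev)) ≤ 2 * k * θ * H ^ 2 := by
    calc _ ≤ 2 * H * (θ * (k * √H * √H)) := by gcongr
      _ = 2 * H * (θ * (k * (√H * √H))) := by ring
      _ = _ := by rw [sH]; ring
  have c2 : 2 * (Y * X) * (θ * (k * √H * √Hv)) ≤ 2 * k * θ * H ^ 2 := by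
    calc _ ≤ 2 * H * (θ * (k * √H * √H)) := by gcongr
      _ = 2 * H * (θ * (k * (√H * √H))) := by ring
      _ = _ := by rw [sH]; ring
  have c3 : 2 * (Y * X) * P ≤ 2 * k * θ * H ^ 2 := by
    refine le_trans ?_ c2
    gcongr
  have hθH : 0 ≤ θ * H ^ 2 := by positivity
  have c4 : 4 * θ * (Y ^ 2 * Hu + X ^ 2 * Hv) ≤ 4 * θ * H ^ 2 := by gcongr
  have m1 : |m| ≤ 2 * θ * H := by
    have f1 : Y * (θ * √Hu) ≤ θ * H := by
      calc _ ≤ √H * (θ * √H) := by gcongr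
        _ = θ * (√H * √H) := by ring
        _ = _ := by rw [sH]
    have f2 : X * (θ * √Hv) ≤ θ * H := by
      calc _ ≤ √H * (θ * √H) := by gcongr
        _ = θ * (√H * √H) := by ring
        _ = _ := by rw [sH]
    have g1 := mul_le_mul_of_nonneg_left u1 hY
    have g2 := mul_le_mul_of_nonneg_left u2 hY
    have g3 := mul_le_mul_of_nonneg_left v1 hX
    have g4 := mul_le_mul_of_nonneg_left v2 hX
    rw [wb, abs_le]
    constructor <;> linarith
  have hH2 : 0 ≤ H ^ 2 := sq_nonneg _
  have m2 : m ^ 2 ≤ 2 * θ * H ^ 2 := by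
    calc m ^ 2 = |m| ^ 2 := (sq_abs m).symm
      _ ≤ (2 * θ * H) ^ 2 := by gcongr
      _ = 2 * (θ * H ^ 2) * (2 * θ) := by ring
      _ ≤ 2 * (θ * H ^ 2) * 1 := by gcongr; linarith
      _ = _ := by ring
  have hθH1 : θ * H ^ 2 ≤ 1 / 2 * H ^ 2 := by gcongr
  have hkθ : k * (θ * H ^ 2) ≤ k * (1 / 2 * H ^ 2) := by gcongr
  have hkH : 0 ≤ k * H ^ 2 := by positivity
  have hRle : t * S ≤ 8 * (2 + k) * H ^ 2 := by linarith
  have hQle : t * S + m ^ 2 ≤ K * H ^ 2 := by rw [hK]; linarith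
  have hQ0 : 0 ≤ t * S + m ^ 2 := by positivity
  have hI : I ^ 2 ≤ (8 + 2 * K) * (t * S + m ^ 2) * H ^ 2 := by
    set Q := t * S + m ^ 2
    have r1 : √W ≤ H := Real.sqrt_le_iff.2 ⟨hHp.le, hW⟩
    have r2 : |I| ≤ 2 * (√Q * H) + Q := nl.trans (by gcongr)
    have r3 : √Q ^ 2 = Q := Real.sq_sqrt hQ0
    calc I ^ 2 = |I| ^ 2 := (sq_abs I).symm
      _ ≤ (2 * (√Q * H) + Q) ^ 2 := by gcongr
      _ ≤ 2 * (2 * (√Q * H)) ^ 2 + 2 * Q ^ 2 := by nlinarith only [sq_nonneg (2 * (√Q * H) - Q)]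
      _ = 8 * √Q ^ 2 * H ^ 2 + 2 * (Q * Q) := by ring
      _ ≤ 8 * √Q ^ 2 * H ^ 2 + 2 * (Q * (K * H ^ 2)) := by gcongr
      _ = _ := by rw [r3]; ring
  have hE : |(Y ^ 2 * Hu - X ^ 2 * Hv) - I| ≤ (2 * k + 4) * (θ * H ^ 2) := by
    have a1 := mul_le_mul_of_nonneg_left U1 (sq_nonneg Y)
    have a2 := mul_le_mul_of_nonneg_left U2 (sq_nonneg Y)
    have a3 := mul_le_mul_of_nonneg_left V1 (sq_nonneg X)
    have a4 := mul_le_mul_of_nonneg_left V2 (sq_nonneg X)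
    have b1 : 0 ≤ θ * (Y ^ 2 * Hu) := by positivity
    have b2 : 0 ≤ θ * (X ^ 2 * Hv) := by positivity
    rw [abs_le] at ab ⊢
    constructor <;> linarith [ab.1, ab.2]
  constructor
  · have : 0 ≤ (4 * (8 + 2 * K) + 2 * (2 * k + 4) ^ 2) * (θ * H ^ 2) := by positivity
    linarith
  · have q1 : (Y ^ 2 * Hu - X ^ 2 * Hv) ^ 2 ≤ 2 * I ^ 2 + 2 * ((2 * k + 4) * (θ * H ^ 2)) ^ 2 := by
      have : ((Y ^ 2 * Hu - X ^ 2 * Hv) - I) ^ 2 ≤ ((2 * k + 4) * (θ * H ^ 2)) ^ 2 := by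
        rw [← sq_abs (_ - I)]; gcongr
      linarith only [this, sq_le_two (Y ^ 2 * Hu - X ^ 2 * Hv) I]
    have q2 : ((2 * k + 4) * (θ * H ^ 2)) ^ 2 ≤ (2 * k + 4) ^ 2 * (θ * H ^ 2) * H ^ 2 := by
      calc _ = (2 * k + 4) ^ 2 * (θ * H ^ 2) * H ^ 2 * θ := by ring
        _ ≤ (2 * k + 4) ^ 2 * (θ * H ^ 2) * H ^ 2 * 1 := by gcongr; linarith
        _ = _ := by ring
    have q3 : (8 + 2 * K) * (t * S + m ^ 2) * H ^ 2 ≤ (8 + 2 * K) * (t * S + 2 * θ * H ^ 2) * H ^ 2 := by gcongr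
    have q4 : 0 ≤ (2 * (8 + 2 * K) + 2 * (2 * k + 4) ^ 2 + 6 + 4 * k) * (t * S) * H ^ 2 := by positivity
    have q5 : 0 ≤ (6 + 4 * k) * (θ * H ^ 2) * H ^ 2 := by positivity
    linarith only [q1, q2, hI, q3, q4, q5]

end Sol
end TR

/-! ### Linear lower growth at the origin -/

namespace TR
open Real Filter Topology
variable {n : ℕ}

/-- The algebra behind the monotonicity of `log (Z / (ūv̄)) - log t`, with `X = ū`, `Y = v̄`. -/
lemma alg4 {X Y Hu Hv H eu ev p pu pv N A R θ C ρ Z : ℝ} (hX : 0 < X) (hY : 0 < Y) (hH : 0 < H)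
    (hHe : H = Hu + Hv) (hu : 0 < Hu) (hv : 0 < Hv) (hC : 0 < C) (hρ : 0 < ρ) (hp : 0 ≤ p) (hθ : 0 ≤ θ) (hR : 0 ≤ R)
    (hZ : Z = Y ^ 2 * Hu + X ^ 2 * Hv) (hX2 : ρ * H ≤ X ^ 2) (hY2 : ρ * H ≤ Y ^ 2)
    (hg : (pu - N * X) ^ 2 + (pv - N * Y) ^ 2 ≤ A * H)
    (h1 : Z + R / 8 - C * θ * H ^ 2 ≤ Y ^ 2 * eu + X ^ 2 * ev)
    (h2 : (Y ^ 2 * Hu - X ^ 2 * Hv) ^ 2 ≤ C * (R + θ * H ^ 2) * H ^ 2) :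
    1 - (C + 1 / 8) / ρ * θ - C / ρ ^ 2 * A ≤
      (Y * pv * Hu + Y ^ 2 * (eu + p) + X * pu * Hv + X ^ 2 * (ev + p)) / Z - pu / (2 * X) - pv / (2 * Y) := by
  have hZ0 : 0 < Z := by rw [hZ]; positivity
  have hZH : ρ * H ^ 2 ≤ Z := by
    calc ρ * H ^ 2 = ρ * H * Hu + ρ * H * Hv := by rw [hHe]; ring
      _ ≤ Y ^ 2 * Hu + X ^ 2 * Hv := by gcongr
      _ = Z := hZ.symm
  set E := Y ^ 2 * Hu - X ^ 2 * Hv with hE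
  set x := (pv - N * Y) / Y - (pu - N * X) / X with hx
  have e : (Y * pv * Hu + Y ^ 2 * (eu + p) + X * pu * Hv + X ^ 2 * (ev + p)) / Z - pu / (2 * X) - pv / (2 * Y) =
      (Y ^ 2 * eu + X ^ 2 * ev + p * (X ^ 2 + Y ^ 2) + x * E / 2) / Z := by
    have : x = pv / Y - pu / X := by rw [hx]; field_simp; ring
    rw [this, hE, div_sub_div _ _ hZ0.ne' (by positivity), div_sub_div _ _ (by positivity) (by positivity),
      div_eq_div_iff (by positivity) hZ0.ne', hZ]
    field_simp
    ring
  have hx2 : x ^ 2 ≤ 2 * A / ρ := by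
    have k1 : x ^ 2 ≤ 2 * ((pv - N * Y) ^ 2 / Y ^ 2) + 2 * ((pu - N * X) ^ 2 / X ^ 2) := by
      rw [hx, ← div_pow, ← div_pow]
      nlinarith only [sq_nonneg ((pv - N * Y) / Y + (pu - N * X) / X)]
    have k2 : (pv - N * Y) ^ 2 / Y ^ 2 ≤ (pv - N * Y) ^ 2 / (ρ * H) := by gcongr
    have k3 : (pu - N * X) ^ 2 / X ^ 2 ≤ (pu - N * X) ^ 2 / (ρ * H) := by gcongr
    have k4 : ((pu - N * X) ^ 2 + (pv - N * Y) ^ 2) / (ρ * H) ≤ A * H / (ρ * H) := by gcongr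
    have k5 : A * H / (ρ * H) = A / ρ := by field_simp
    rw [k5, add_div] at k4
    have : 2 * A / ρ = 2 * (A / ρ) := by ring
    linarith
  have hE2 : E ^ 2 ≤ C / ρ * (R + θ * H ^ 2) * Z := by
    refine h2.trans ?_
    calc C * (R + θ * H ^ 2) * H ^ 2 = C / ρ * (R + θ * H ^ 2) * (ρ * H ^ 2) := by field_simp
      _ ≤ _ := by gcongr
  have hxE : -(E ^ 2 * (ρ / (4 * C * Z)) + x ^ 2 * (Z * C / ρ)) ≤ x * E := by
    have a0 : 0 < ρ / (4 * C * Z) := by positivity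
    have : x * E + (E ^ 2 * (ρ / (4 * C * Z)) + x ^ 2 * (Z * C / ρ)) =
        ρ / (4 * C * Z) * (E + x * (2 * C * Z / ρ)) ^ 2 := by field_simp; ring
    have : 0 ≤ ρ / (4 * C * Z) * (E + x * (2 * C * Z / ρ)) ^ 2 := by positivity
    linarith
  have b1 : E ^ 2 * (ρ / (4 * C * Z)) ≤ (R + θ * H ^ 2) / 4 := by
    calc _ ≤ C / ρ * (R + θ * H ^ 2) * Z * (ρ / (4 * C * Z)) := by gcongr
      _ = _ := by field_simp
  have b2 : x ^ 2 * (Z * C / ρ) ≤ 2 * (C / ρ ^ 2 * A) * Z := by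
    calc _ ≤ 2 * A / ρ * (Z * C / ρ) := by gcongr
      _ = _ := by field_simp
  have b3 : θ * H ^ 2 ≤ θ / ρ * Z := by
    calc _ = θ / ρ * (ρ * H ^ 2) := by field_simp
      _ ≤ _ := by gcongr
  rw [e, le_div_iff₀ hZ0]
  have b4 : (C + 1 / 8) * (θ * H ^ 2) ≤ (C + 1 / 8) * (θ / ρ * Z) := by gcongr
  have b5 : 0 ≤ p * (X ^ 2 + Y ^ 2) := by positivity
  have b6 : (1 - (C + 1 / 8) / ρ * θ - C / ρ ^ 2 * A) * Z = Z - (C + 1 / 8) * (θ / ρ * Z) - (C / ρ ^ 2 * A) * Z := by ring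
  rw [b6]
  linarith only [h1, hxE, b1, b2, b4, b5]

namespace Sol
variable {u v : Euc n → ℝ} {s t θ : ℝ}

lemma av_rad_defect (h : Sol u v) (ht : 0 < t) (c : ℝ) :
    (t * av t (fun y => u y * v y ^ 2) - c * av t u) ^ 2 ≤ av t (fun y => (rad u y - c * u y) ^ 2) := by
  rw [← h.av_rad ht, ← av_const_mul, ← av_sub ht h.g2rad.GI (h.pgu.GI.const_mul c)]
  exact av_sq_le ht (h.g2rad.sub (h.pgu.G2.const_mul c))

/-- The homogeneity defect dominates its projection onto constants. -/
lemma A_ge (h : Sol u v) (ht : 0 < t) :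
    (t * av t (fun y => u y * v y ^ 2) - Nn u v t * av t u) ^ 2 +
      (t * av t (fun y => v y * u y ^ 2) - Nn u v t * av t v) ^ 2 ≤ Aa u v t * Hh u v t := by
  have h1 := h.av_rad_defect ht (Nn u v t)
  have h2 := h.symm.av_rad_defect ht (Nn u v t)
  have : Aa u v t * Hh u v t = av t (fun y => (rad u y - Nn u v t * u y) ^ 2) +
      av t (fun y => (rad v y - Nn u v t * v y) ^ 2) := by
    unfold Aa; field_simp [(h.H_pos ht).ne']
  linarith

/-- At the origin the Gaussian height grows at least linearly in the scale. With
`Z = v̄² ∫u² + ū² ∫v²`, the quantity `log (Z / (ūv̄ t))`, corrected by bounded multiples of `N` and `θ`, is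
nondecreasing, and `Z / (ūv̄)` is comparable to `H` because neither component is negligible. -/
lemma step4 (h : Sol u v) : ∃ c t₀ : ℝ, 0 < c ∧ 1 ≤ t₀ ∧ ∀ t, t₀ ≤ t → c * t ≤ Hh u v t := by
  obtain ⟨c₁, t₁, hc₁, ht₁, hv⟩ := h.step3
  obtain ⟨c₂, t₂, hc₂, ht₂, hu⟩ := h.symm.step3
  obtain ⟨C, hC, key⟩ := static4 n
  obtain ⟨t₃, ht₃, hadm⟩ := h.exists_adm (one_pos)
  set t₀ := max t₁ (max t₂ t₃) with ht₀
  have l1 : t₁ ≤ t₀ := le_max_left _ _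
  have l2 : t₂ ≤ t₀ := (le_max_left _ _).trans (le_max_right _ _)
  have l3 : t₃ ≤ t₀ := (le_max_right _ _).trans (le_max_right _ _)
  have hk := ka_pos (n := n)
  have hpos : ∀ x, t₀ ≤ x → 0 < x := fun x hx => by linarith
  have hK : 0 < C3 n ^ 2 * K2 n := mul_pos (pow_pos C3_pos 2) K2_pos
  set c := min c₁ c₂ with hc
  have hc0 : 0 < c := lt_min hc₁ hc₂
  set ρ := c ^ 3 / (C3 n ^ 2 * K2 n) with hρ
  have hρ0 : 0 < ρ := by positivity
  have bu : ∀ x, t₀ ≤ x → ρ * Hh u v x ≤ av x u ^ 2 := fun x hx => by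
    have hx0 := hpos x hx
    have hH := h.H_pos hx0
    have := hu x (l2.trans hx)
    rw [H_symm] at this
    have := h.av_ge_of_half hx0 hc0.le ((mul_le_mul_of_nonneg_right (min_le_right c₁ c₂) hH.le).trans this)
    calc _ = (√ρ * √(Hh u v x)) ^ 2 := by rw [mul_pow, Real.sq_sqrt hρ0.le, Real.sq_sqrt hH.le]
      _ ≤ _ := by gcongr
  have bv : ∀ x, t₀ ≤ x → ρ * Hh u v x ≤ av x v ^ 2 := fun x hx => by
    have hx0 := hpos x hx
    have hH := h.H_pos hx0
    have := hv x (l1.trans hx)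
    have := h.symm.av_ge_of_half hx0 hc0.le (by
      rw [H_symm]; exact ((mul_le_mul_of_nonneg_right (min_le_left c₁ c₂) hH.le).trans this))
    rw [H_symm] at this
    calc _ = (√ρ * √(Hh u v x)) ^ 2 := by rw [mul_pow, Real.sq_sqrt hρ0.le, Real.sq_sqrt hH.le]
      _ ≤ _ := by gcongr
  set Zf : ℝ → ℝ := fun t => av t v ^ 2 * av t (fun y => u y ^ 2) + av t u ^ 2 * av t (fun y => v y ^ 2) with hZf
  set C₁ := (C + 1 / 8) / ρ with hC₁
  set C₂ := C / ρ ^ 2 with hC₂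
  have hC₁0 : 0 < C₁ := by positivity
  have hC₂0 : 0 < C₂ := by positivity
  set f := fun t => log (Zf t) - log (av t u) - log (av t v) - log t + C₂ * Nn u v t - C₁ / ka n * th n t with hf
  have au : ∀ x, t₀ ≤ x → 0 < av x u := fun x hx => av_pos (hpos x hx) h.pgu.GI h.pu
  have av0 : ∀ x, t₀ ≤ x → 0 < av x v := fun x hx => av_pos (hpos x hx) h.pgv.GI h.pv
  have Z0 : ∀ x, t₀ ≤ x → 0 < Zf x := fun x hx => by
    have := au x hx
    have := av0 x hx
    have := h.Hu_pos (hpos x hx)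
    have := h.symm.Hu_pos (hpos x hx)
    simp only [hZf]; positivity
  have hmono : ∀ t, t₀ ≤ t → f t₀ ≤ f t := fun t ht =>
    le_of_deriv (f := f) ht (fun x hx => by
      have hx0 := hpos x hx.1
      exact ((((((((h.symm.hasDerivAt_av hx0).pow 2).mul (h.hasDerivAt_sq hx0)).add
        (((h.hasDerivAt_av hx0).pow 2).mul (h.symm.hasDerivAt_sq hx0))).log (Z0 x hx.1).ne').sub
        ((h.hasDerivAt_av hx0).log (au x hx.1).ne')).sub ((h.symm.hasDerivAt_av hx0).log (av0 x hx.1).ne')).sub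
        (Real.hasDerivAt_log hx0.ne')).add ((h.N_deriv hx0).const_mul C₂) |>.sub ((th_deriv hx0).const_mul (C₁ / ka n)))
      fun x hx => by
        have hx0 := hpos x hx.1
        obtain ⟨R, hR, k1, k2⟩ := key u v x (th n x) h (hadm x (l3.trans hx.1)).1
        have hA := h.A_nonneg hx0
        have hN := h.N_nonneg hx0
        have hP := mul_nonneg hx0.le (P_nonneg (u := u) (v := v) hx0)
        have hε : 0 ≤ x * PP u v x / Hh u v x := div_nonneg hP (h.H_pos hx0).le
        have al := alg4 (au x hx.1) (av0 x hx.1) (h.H_pos hx0) rfl (h.Hu_pos hx0) (h.symm.Hu_pos hx0) hC hρ0 hP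
          (th_pos hx0).le hR rfl (bu x hx.1) (bv x hx.1) (h.A_ge hx0) k1 k2
        have hPs : av x (fun y => v y ^ 2 * u y ^ 2) = PP u v x := by
          unfold PP; congr 1; ext y; ring
        have hPs2 : av x (fun y => u y ^ 2 * v y ^ 2) = PP u v x := rfl
        rw [hPs, hPs2]
        have hZx : Zf x = av x v ^ 2 * av x (fun y => u y ^ 2) + av x u ^ 2 * av x (fun y => v y ^ 2) := rfl
        have hZ := Z0 x hx.1
        have a1 := au x hx.1
        have a2 := av0 x hx.1
        rw [← hZx] at al
        have fin : 0 ≤ ((av x v * (x * av x (fun y => v y * u y ^ 2)) * av x (fun y => u y ^ 2) +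
            av x v ^ 2 * (x * av x (gs u) + x * PP u v x) +
            av x u * (x * av x (fun y => u y * v y ^ 2)) * av x (fun y => v y ^ 2) +
            av x u ^ 2 * (x * av x (gs v) + x * PP u v x)) / Zf x -
            x * av x (fun y => u y * v y ^ 2) / (2 * av x u) - x * av x (fun y => v y * u y ^ 2) / (2 * av x v) - 1
            + C₂ * (Aa u v x + (1 + Nn u v x) * (x * PP u v x / Hh u v x)) + C₁ * th n x) / x := by
          refine div_nonneg ?_ hx0.le
          have : 0 ≤ C₂ * ((1 + Nn u v x) * (x * PP u v x / Hh u v x)) := by positivity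
          linarith
        refine fin.trans (le_of_eq ?_)
        simp only [Pi.pow_apply, Pi.mul_apply, Pi.add_apply]
        rw [← hZx]
        field_simp
        ring
  refine ⟨ρ * exp (f t₀ - C₂), t₀, by positivity, ht₁.trans l1, fun t ht => ?_⟩
  have ht0 := hpos t ht
  have hH := h.H_pos ht0
  have m := hmono t ht
  have n1 := h.N_le_one ht0
  have hth : 0 ≤ C₁ / ka n * th n t := by have := th_pos (n := n) ht0; positivity
  have m2 : f t₀ - C₂ + log t ≤ log (Zf t / (av t u * av t v)) := by
    rw [Real.log_div (Z0 t ht).ne' (mul_pos (au t ht) (av0 t ht)).ne', Real.log_mul (au t ht).ne' (av0 t ht).ne']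
    have : C₂ * Nn u v t ≤ C₂ * 1 := by gcongr
    have hft : f t = log (Zf t) - log (av t u) - log (av t v) - log t + C₂ * Nn u v t - C₁ / ka n * th n t := rfl
    linarith
  have m3 : exp (f t₀ - C₂) * t ≤ Zf t / (av t u * av t v) := by
    have := Real.exp_le_exp.2 m2
    rwa [Real.exp_add, Real.exp_log ht0, Real.exp_log (div_pos (Z0 t ht) (mul_pos (au t ht) (av0 t ht)))] at this
  have m4 : Zf t ≤ Hh u v t ^ 2 := by
    have i1 := av_sq_le ht0 h.pgu.G2
    have i2 := av_sq_le ht0 h.pgv.G2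
    have j1 := h.Hu_pos ht0
    have j2 := h.symm.Hu_pos ht0
    have e : Hh u v t = av t (fun y => u y ^ 2) + av t (fun y => v y ^ 2) := rfl
    simp only [hZf]
    rw [e]
    nlinarith [mul_le_mul_of_nonneg_right i1 j2.le, mul_le_mul_of_nonneg_right i2 j1.le]
  have m5 : ρ * Hh u v t ≤ av t u * av t v := by
    refine le_of_sq_le_sq ?_ (mul_pos (au t ht) (av0 t ht)).le
    rw [mul_pow (av t u), sq (ρ * Hh u v t)]
    have := h.H_pos ht0
    exact mul_le_mul (bu t ht) (bv t ht) (by positivity) (sq_nonneg _)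
  have m6 : Zf t / (av t u * av t v) ≤ Hh u v t / ρ := by
    calc _ ≤ Hh u v t ^ 2 / (ρ * Hh u v t) := by gcongr
      _ = _ := by field_simp
  have m7 := m3.trans m6
  rw [le_div_iff₀ hρ0] at m7
  linarith

end Sol
end TR

/-! ### Uniform linear growth, the Harnack inequality and the conclusion -/

namespace TR
open Real Filter Topology
variable {n : ℕ}

namespace Sol
variable {u v : Euc n → ℝ} {s t θ : ℝ}

/-- The Gaussian height grows at least linearly in the scale, uniformly in the centre. -/
lemma F2 (h : Sol u v) : ∃ c : ℝ, 0 < c ∧ ∀ x s, 0 < s → c * s ≤ Hh (TR.tr x u) (TR.tr x v) s := by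
  obtain ⟨c, t₀, hc, ht₀, hlow⟩ := h.step4
  set q : ℝ := 2 ^ (n / 2 : ℝ) * exp (1 / 2) with hq
  have hq0 : 0 < q := by positivity
  refine ⟨c / (2 * q * exp 1), by positivity, fun x s hs => ?_⟩
  set S := max t₀ (max (‖x‖ ^ 2) s) with hS
  have l1 : t₀ ≤ S := le_max_left _ _
  have l2 : ‖x‖ ^ 2 ≤ S := (le_max_left _ _).trans (le_max_right _ _)
  have l3 : s ≤ S := (le_max_right _ _).trans (le_max_right _ _)
  have hS0 : 0 < S := by linarith
  have hx := h.tr x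
  have back : ∀ f : Euc n → ℝ, TR.tr (-x) (TR.tr x f) = f := fun f => by
    ext y; simp [TR.tr]
  have hfac : (2 * S / S) ^ (n / 2 : ℝ) * exp (‖-x‖ ^ 2 / (2 * (2 * S - S))) ≤ q := by
    rw [hq, norm_neg]
    have e1 : 2 * S / S = 2 := by field_simp
    rw [e1]
    refine mul_le_mul_of_nonneg_left (Real.exp_le_exp.2 ?_) (by positivity)
    rw [div_le_div_iff₀ (by linarith) (by norm_num)]
    linarith
  have b1 := hx.Hu_tr_le hS0 (by linarith : S < 2 * S) (-x)
  have b2 := hx.symm.Hu_tr_le hS0 (by linarith : S < 2 * S) (-x)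
  rw [back] at b1 b2
  have p1 := hx.Hu_pos (by linarith : 0 < 2 * S)
  have p2 := hx.symm.Hu_pos (by linarith : 0 < 2 * S)
  have b3 : Hh u v S ≤ q * Hh (TR.tr x u) (TR.tr x v) (2 * S) := by
    have c1 := b1.trans (mul_le_mul_of_nonneg_right hfac p1.le)
    have c2 := b2.trans (mul_le_mul_of_nonneg_right hfac p2.le)
    unfold Hh; linarith
  have b4 := hlow S l1
  have b5 := hx.F1 hs (by linarith : s ≤ 2 * S)
  have b6 : c / (2 * q) ≤ Hh (TR.tr x u) (TR.tr x v) (2 * S) / (2 * S) := by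
    rw [div_le_div_iff₀ (by positivity) (by positivity)]
    nlinarith
  have b7 := b6.trans b5
  have b8 : c / (2 * q * exp 1) ≤ Hh (TR.tr x u) (TR.tr x v) s / s := by
    rw [← div_div, div_le_iff₀ (exp_pos 1)]; linarith
  rwa [le_div_iff₀ hs] at b8

/-- A quantitative Harnack inequality at the centre, for a potential `v²` of quadratic growth. -/
lemma harnack (h : Sol u v) {V σ : ℝ} (hs : 0 < s) (hV : 0 < V) (hv : ∀ y, v y ^ 2 ≤ V * (1 + ‖y‖ ^ 2 / s))
    (hσ : 0 < σ) (hσV : σ ^ 2 * V ≤ s / 2) : av σ u ≤ exp (V * (σ + n * σ ^ 2 / (2 * s))) * u 0 := by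
  set g : ℝ → ℝ := fun τ => -(V * (τ + n * τ ^ 2 / (2 * s))) with hg
  have hgd : ∀ τ, HasDerivAt g (-(V * (1 + n * τ / s))) τ := fun τ => by
    have := (((hasDerivAt_id τ).add (((hasDerivAt_pow 2 τ).const_mul (n : ℝ)).div_const (2 * s))).const_mul V).neg
    refine this.congr_deriv ?_
    push_cast
    field_simp
  have main : -(u 0 * 1) ≤ -(av σ u * exp (g σ)) := by
    refine lim_le_of_deriv (f := fun τ => -(av τ u * exp (g τ))) hσ
      (fun τ hτ _ => ((h.hasDerivAt_av hτ).mul (hgd τ).exp).neg) (fun τ hτ hτσ => ?_) ?_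
    · set p := av τ (fun y => u y * v y ^ 2) with hp
      have hp0 : 0 ≤ p := av_nonneg hτ fun y => by have := h.pu y; positivity
      have hu0 : 0 ≤ av τ u := av_nonneg hτ fun y => (h.pu y).le
      have gy : GI (fun y => u y * ‖y‖ ^ 2) := (h.pgu.mul PG.norm_sq).GI
      have k1 : p ≤ V * av τ u + V / s * av τ (fun y => u y * ‖y‖ ^ 2) := by
        rw [← av_const_mul, ← av_const_mul, ← av_add hτ (h.pgu.GI.const_mul _) (gy.const_mul _)]
        refine av_mono hτ (h.pgu.mul (h.pgv.pow 2)).GI ((h.pgu.GI.const_mul _).add (gy.const_mul _)) fun y => ?_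
        have := mul_le_mul_of_nonneg_left (hv y) (h.pu y).le
        refine this.trans (le_of_eq ?_)
        field_simp
      rw [av_norm_sq hτ h.c1 h.pgu.GI h.g2rad.GI, h.av_rad hτ, ← hp] at k1
      have k2 : τ ^ 2 * V ≤ s / 2 := le_trans (by gcongr) hσV
      have k3 : V / s * (τ * (τ * p)) ≤ 1 / 2 * p := by
        calc _ = (τ ^ 2 * V) / s * p := by field_simp
          _ ≤ (s / 2) / s * p := by gcongr
          _ = _ := by field_simp
      have k4 : 1 / 2 * p ≤ V * (1 + n * τ / s) * av τ u := by
        have : V / s * (n * τ * av τ u) = V * (n * τ / s) * av τ u := by field_simp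
        linarith
      have := mul_le_mul_of_nonneg_right k4 (exp_pos (g τ)).le
      linarith
    · have l1 := av_lim_zero h.pgu
      have l2 : Tendsto (fun m : ℕ => 1 / ((m : ℝ) + 1)) atTop (𝓝 0) := tendsto_one_div_add_atTop_nhds_zero_nat
      have l3 : Tendsto (fun m : ℕ => exp (g (1 / ((m : ℝ) + 1)))) atTop (𝓝 1) := by
        have hc : ContinuousAt g 0 := (hgd 0).continuousAt
        have := (Real.continuous_exp.tendsto _).comp (hc.tendsto.comp l2)
        have e : exp (g 0) = 1 := by simp [hg]
        rw [e] at this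
        exact this
      exact (l1.mul l3).neg
  have e1 : av σ u * exp (g σ) ≤ u 0 := by linarith
  have e2 := mul_le_mul_of_nonneg_left e1 (exp_pos (V * (σ + n * σ ^ 2 / (2 * s)))).le
  have e3 : exp (V * (σ + n * σ ^ 2 / (2 * s))) * (av σ u * exp (g σ)) = av σ u := by
    rw [mul_left_comm, ← Real.exp_add]; simp [hg]
  linarith

lemma v_sq_le (h : Sol u v) (hs : 0 < s) (y : Euc n) : v y ^ 2 ≤ C3 n * Hh u v s * (1 + ‖y‖ ^ 2 / s) := by
  have := h.F3 hs y
  nlinarith [sq_nonneg (u y)]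

/-- If both components are at most `T` at the centre then the Gaussian height grows at most linearly, with a
constant depending only on `T` and on the linear lower bound. The comparison takes place at the scale `s`
determined by `s H(s) = 1`, where the potential is of order one. -/
lemma fin1 (n : ℕ) {c T : ℝ} (hc : 0 < c) (hT : 0 < T) : ∃ K : ℝ, 0 < K ∧ ∀ u v : Euc n → ℝ, Sol u v →
    (∀ s, 0 < s → c * s ≤ Hh u v s) → u 0 ≤ T → v 0 ≤ T → ∀ S, √(1 / c) ≤ S → Hh u v S ≤ K * S := by
  set ϑ : ℝ := 1 / (2 * C3 n) with hϑ
  have hC := C3_pos (n := n)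
  have hC1 := one_le_C3 (n := n)
  have hK2 := K2_pos (n := n)
  have hϑ0 : 0 < ϑ := by positivity
  have hϑ1 : ϑ ≤ 1 := by rw [hϑ, div_le_one (by positivity)]; linarith
  set r := √((1 / 2) ^ 3 / (C3 n ^ 2 * K2 n)) with hr
  have hr0 : 0 < r := by positivity
  set L := exp (C3 n * (ϑ + n * ϑ ^ 2 / 2)) with hL
  have hL0 : 0 < L := exp_pos _
  set m := ϑ * r ^ 2 / (exp 1 * (L * T) ^ 2) with hm
  have hm0 : 0 < m := by positivity
  refine ⟨exp 1 / m ^ 2, by positivity, fun u v h hlow hu hv S hS => ?_⟩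
  obtain ⟨K, hK, hup⟩ := h.H_le
  -- the scale at which `s * H(s) = 1`
  obtain ⟨s, hs0, hs⟩ : ∃ s, 0 < s ∧ s * Hh u v s = 1 := by
    set a := min 1 (1 / (2 * K)) with ha
    have ha0 : 0 < a := by positivity
    set b := max a √(1 / c) with hb
    have hab : a ≤ b := le_max_left _ _
    have hcont : ContinuousOn (fun s => s * Hh u v s) (Icc a b) := fun x hx =>
      (continuousAt_id.mul (h.H_deriv (ha0.trans_le hx.1)).continuousAt).continuousWithinAt
    have fa : a * Hh u v a ≤ 1 := by
      have a1 : a ≤ 1 := min_le_left _ _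
      have a2 : a ≤ 1 / (2 * K) := min_le_right _ _
      calc a * Hh u v a ≤ 1 / (2 * K) * (K * (1 + 1)) := by
            have := hup a ha0
            have := (h.H_pos ha0).le
            gcongr
            exact (hup a ha0).trans (by gcongr)
        _ = 1 := by field_simp; norm_num
    have fb : 1 ≤ b * Hh u v b := by
      have b0 : 0 < b := ha0.trans_le hab
      have b1 : 1 / c ≤ b ^ 2 := by
        rw [← Real.sq_sqrt (by positivity : 0 ≤ 1 / c)]
        gcongr; exact le_max_right _ _
      have b2 := hlow b b0
      rw [div_le_iff₀ hc] at b1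
      nlinarith
    obtain ⟨s, hs, hse⟩ := intermediate_value_Icc hab hcont ⟨fa, fb⟩
    exact ⟨s, ha0.trans_le hs.1, hse⟩
  have hH : Hh u v s = 1 / s := by field_simp; linarith
  have hV : 0 < C3 n * Hh u v s := mul_pos hC (h.H_pos hs0)
  have hσ : 0 < ϑ * s := by positivity
  have hσV : (ϑ * s) ^ 2 * (C3 n * Hh u v s) ≤ s / 2 := by
    have : (ϑ * s) ^ 2 * (C3 n * Hh u v s) = s / 2 * ϑ := by rw [hH, hϑ]; field_simp
    rw [this]; nlinarith
  have hexp : exp (C3 n * Hh u v s * (ϑ * s + n * (ϑ * s) ^ 2 / (2 * s))) = L := by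
    rw [hL, hH]; congr 1; field_simp
  have k1 := h.harnack hs0 hV (h.v_sq_le hs0) hσ hσV
  have k2 := h.symm.harnack hs0 hV (by have := h.symm.v_sq_le hs0; rwa [H_symm] at this) hσ hσV
  rw [hexp] at k1 k2
  have k3 : av (ϑ * s) u ≤ L * T := k1.trans (by gcongr)
  have k4 : av (ϑ * s) v ≤ L * T := k2.trans (by gcongr)
  have k5 : r * √(Hh u v (ϑ * s)) ≤ L * T := by
    have hHe : Hh u v (ϑ * s) = av (ϑ * s) (fun y => u y ^ 2) + av (ϑ * s) (fun y => v y ^ 2) := rfl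
    rcases le_total (av (ϑ * s) (fun y => v y ^ 2)) (av (ϑ * s) (fun y => u y ^ 2)) with hle | hle
    · exact (h.av_ge_of_half hσ (η := 1 / 2) (by norm_num) (by linarith)).trans k3
    · have := h.symm.av_ge_of_half hσ (η := 1 / 2) (by norm_num) (by rw [H_symm]; linarith)
      rw [H_symm] at this
      exact this.trans k4
  have hHσ := h.H_pos hσ
  have k6 : r ^ 2 * Hh u v (ϑ * s) ≤ (L * T) ^ 2 := by
    calc _ = (r * √(Hh u v (ϑ * s))) ^ 2 := by rw [mul_pow, Real.sq_sqrt hHσ.le]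
      _ ≤ _ := by gcongr
  have k7 := h.F1 hσ (show ϑ * s ≤ s by nlinarith)
  have k8 : m ≤ s := by
    rw [hm, div_le_iff₀ (by positivity)]
    have e1 : exp 1 * (Hh u v (ϑ * s) / (ϑ * s)) * (ϑ * s * s) = exp 1 * (Hh u v (ϑ * s)) * s := by field_simp
    have e2 : Hh u v s / s * (ϑ * s * s) = ϑ := by rw [hH]; field_simp
    have e3 := mul_le_mul_of_nonneg_right k7 (by positivity : 0 ≤ ϑ * s * s)
    rw [e1, e2] at e3
    calc ϑ * r ^ 2 ≤ exp 1 * Hh u v (ϑ * s) * s * r ^ 2 := by gcongr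
      _ = exp 1 * s * (r ^ 2 * Hh u v (ϑ * s)) := by ring
      _ ≤ exp 1 * s * (L * T) ^ 2 := by gcongr
      _ = _ := by ring
  have k9 : s ≤ √(1 / c) := by
    refine Real.le_sqrt_of_sq_le ?_
    rw [le_div_iff₀ hc]
    have := mul_le_mul_of_nonneg_left (hlow s hs0) hs0.le
    linarith
  have k10 := h.F1 hs0 (k9.trans hS)
  have hS0 : 0 < S := hs0.trans_le (k9.trans hS)
  rw [div_le_iff₀ hS0, hH] at k10
  refine k10.trans ?_
  have : exp 1 * (1 / s / s) = exp 1 / s ^ 2 := by field_simp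
  rw [this]
  gcongr

lemma pg_cube (S : ℝ) : PG (fun z : Euc n => (1 + S * ‖z‖ ^ 2) ^ 3) :=
  ((PG.const 1).add ((PG.const S).mul PG.norm_sq)).pow 3

lemma av_cube_scale {τ S : ℝ} (hτ : 0 < τ) (hS : τ ≤ S) :
    av τ (fun y : Euc n => (1 + ‖y‖ ^ 2) ^ 3) ≤ av 1 (fun z : Euc n => (1 + S * ‖z‖ ^ 2) ^ 3) := by
  rw [av_scale hτ]
  have e : (fun z : Euc n => (1 + ‖√τ • z‖ ^ 2) ^ 3) = fun z => (1 + τ * ‖z‖ ^ 2) ^ 3 := by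
    ext z; rw [norm_smul, mul_pow, Real.norm_eq_abs, sq_abs, Real.sq_sqrt hτ.le]
  rw [e]
  exact av_mono one_pos (pg_cube τ).GI (pg_cube S).GI fun z => by gcongr

set_option maxHeartbeats 1000000 in
/-- If `u` were tiny at the centre it would be small on a large ball, so `v` would be nearly harmonic there
with mean close to `v 0 ≤ T`, contradicting the linear growth of the height. -/
lemma fin2 (n : ℕ) {c T K : ℝ} (hc : 0 < c) (hT : 0 < T) (hK : 0 < K) : ∃ ε : ℝ, 0 < ε ∧ ∀ u v : Euc n → ℝ, Sol u v →
    (∀ s, 0 < s → c * s ≤ Hh u v s) → (∀ S, √(1 / c) ≤ S → Hh u v S ≤ K * S) → v 0 ≤ T → ε ≤ u 0 := by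
  have hC := C3_pos (n := n)
  have hC1 := one_le_C3 (n := n)
  have hK2 := K2_pos (n := n)
  set r := √((1 / 2) ^ 3 / (C3 n ^ 2 * K2 n)) with hr
  have hr0 : 0 < r := by positivity
  set a := max 1 √(1 / c) with ha
  have ha1 : 1 ≤ a := le_max_left _ _
  have ha0 : 0 < a := by linarith
  set V := C3 n * (K * a) with hV
  have hV0 : 0 < V := by positivity
  set σ := min 1 (a / (2 * V)) with hσ
  have hσ0 : 0 < σ := by positivity
  have hσV : σ ^ 2 * V ≤ a / 2 := by
    have s1 : σ ≤ 1 := min_le_left _ _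
    have s2 : σ ≤ a / (2 * V) := min_le_right _ _
    calc σ ^ 2 * V = σ * σ * V := by ring
      _ ≤ 1 * (a / (2 * V)) * V := by gcongr
      _ = _ := by field_simp
  set L := 2 ^ (n / 2 : ℝ) * exp (V * (σ + n * σ ^ 2 / (2 * a))) with hL
  have hL0 : 0 < L := by positivity
  set S := ((2 * T / r) ^ 2 + 1) / c with hS
  have hS0 : 0 < S := by positivity
  set M := av 1 (fun z : Euc n => (1 + S * ‖z‖ ^ 2) ^ 3) with hM
  have hM0 : 0 < M := av_pos one_pos (pg_cube S).GI fun z => by positivity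
  set δ := min (c * S / (2 * M)) (2 * T / ((1 + V) * M * S)) with hδ
  have hδ0 : 0 < δ := by positivity
  have hδ1 : δ * M ≤ c * S / 2 := by
    calc _ ≤ c * S / (2 * M) * M := by gcongr; exact min_le_left _ _
      _ = _ := by field_simp
  have hδ2 : 1 / 2 * (δ * ((1 + V) * M)) * S ≤ T := by
    calc _ ≤ 1 / 2 * (2 * T / ((1 + V) * M * S) * ((1 + V) * M)) * S := by gcongr; exact min_le_right _ _
      _ = _ := by field_simp
  refine ⟨√δ * exp (-(V / (δ * σ))) / L, by positivity, fun u v h hlow hup hv => ?_⟩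
  by_contra hcon
  push Not at hcon
  have hu0 := h.pu 0
  -- pointwise quadratic growth
  have q1 : ∀ y, u y ^ 2 + v y ^ 2 ≤ V * (1 + ‖y‖ ^ 2 / a) := fun y => by
    have := h.F3 ha0 y
    have hHa := hup a (le_max_right _ _)
    calc _ ≤ C3 n * (1 + ‖y‖ ^ 2 / a) * Hh u v a := this
      _ ≤ C3 n * (1 + ‖y‖ ^ 2 / a) * (K * a) := by gcongr
      _ = _ := by rw [hV]; ring
  have q2 : ∀ y : Euc n, V * (1 + ‖y‖ ^ 2 / a) ≤ V * (1 + ‖y‖ ^ 2) := fun y => by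
    gcongr; exact div_le_self (sq_nonneg _) ha1
  have hk := h.harnack ha0 hV0 (fun y => by nlinarith only [hV0, q1 y, sq_nonneg (u y)]) hσ0 hσV
  -- the Harnack bound at the centre spreads to all points
  have q3 : ∀ y, u y ≤ L * u 0 * exp (‖y‖ ^ 2 / σ) := fun y => by
    have b1 := (h.tr y).le_av (by positivity : 0 < σ / 2)
    have b2 := av_shift (by positivity : 0 < σ / 2) (by linarith : σ / 2 < σ) y h.pgu.GI (h.tr y).pgu.GI
      fun z => (h.pu z).le
    have e0 : TR.tr y u 0 = u y := by simp [TR.tr]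
    have e1 : σ / (σ / 2) = 2 := by field_simp
    have e2 : 2 * (σ - σ / 2) = σ := by ring
    rw [e0] at b1
    rw [e1, e2] at b2
    calc u y ≤ 2 ^ (n / 2 : ℝ) * exp (‖y‖ ^ 2 / σ) * av σ u := b1.trans b2
      _ ≤ 2 ^ (n / 2 : ℝ) * exp (‖y‖ ^ 2 / σ) * (exp (V * (σ + n * σ ^ 2 / (2 * a))) * u 0) := by gcongr
      _ = _ := by rw [hL]; ring
  have q4 : ∀ y, u y ^ 2 ≤ δ * (1 + ‖y‖ ^ 2) ^ 2 := fun y => by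
    rcases le_total (V / δ) (‖y‖ ^ 2) with hy | hy
    · have f1 : u y ^ 2 ≤ V * (1 + ‖y‖ ^ 2) := by nlinarith only [hV0, q1 y, q2 y, sq_nonneg (v y)]
      rw [div_le_iff₀ hδ0] at hy
      have : V ≤ δ * (1 + ‖y‖ ^ 2) := by nlinarith
      calc _ ≤ V * (1 + ‖y‖ ^ 2) := f1
        _ ≤ δ * (1 + ‖y‖ ^ 2) * (1 + ‖y‖ ^ 2) := by gcongr
        _ = _ := by ring
    · have f1 : u y ≤ √δ := by
        refine (q3 y).trans ?_
        rw [lt_div_iff₀ hL0] at hcon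
        have f2 : exp (‖y‖ ^ 2 / σ) ≤ exp (V / (δ * σ)) := by
          apply Real.exp_le_exp.2
          rw [← div_div]; gcongr
        calc L * u 0 * exp (‖y‖ ^ 2 / σ) ≤ (√δ * exp (-(V / (δ * σ)))) * exp (V / (δ * σ)) := by
              exact mul_le_mul (by linarith) f2 (exp_pos _).le (by positivity)
          _ = √δ := by rw [mul_assoc, ← Real.exp_add]; simp
      calc u y ^ 2 ≤ √δ ^ 2 := by have := (h.pu y).le; gcongr
        _ = δ * 1 := by rw [Real.sq_sqrt hδ0.le, mul_one]
        _ ≤ _ := by gcongr; exact one_le_pow₀ (by linarith only [sq_nonneg ‖y‖])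
  have pg3 : PG (fun y : Euc n => (1 + ‖y‖ ^ 2) ^ 3) := by simpa using pg_cube (n := n) 1
  have q5 : ∀ τ, 0 < τ → τ ≤ S → av τ (fun y => v y * u y ^ 2) ≤ δ * ((1 + V) * M) := fun τ hτ hτS => by
    calc av τ (fun y => v y * u y ^ 2) ≤ av τ (fun y => (δ * (1 + V)) * (1 + ‖y‖ ^ 2) ^ 3) := by
          refine av_mono hτ (h.pgv.mul (h.pgu.pow 2)).GI (pg3.GI.const_mul _) fun y => ?_
          have f1 : v y ≤ (1 + V) * (1 + ‖y‖ ^ 2) := by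
            nlinarith only [hV0, q1 y, q2 y, sq_nonneg (u y), sq_nonneg (v y - 1), sq_nonneg ‖y‖]
          have := (h.pv y).le
          calc v y * u y ^ 2 ≤ ((1 + V) * (1 + ‖y‖ ^ 2)) * (δ * (1 + ‖y‖ ^ 2) ^ 2) := by
                gcongr; exact q4 y
            _ = _ := by ring
      _ = δ * (1 + V) * av τ (fun y : Euc n => (1 + ‖y‖ ^ 2) ^ 3) := av_const_mul _
      _ ≤ δ * (1 + V) * M := by gcongr; exact av_cube_scale hτ hτS
      _ = _ := by ring
  have q6 : av S v ≤ 2 * T := by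
    have := lim_le_of_deriv (f := fun τ => 1 / 2 * (δ * ((1 + V) * M)) * τ - av τ v) (l := 0 - v 0) hS0
      (fun τ hτ _ => ((hasDerivAt_id τ).const_mul _).sub (h.symm.hasDerivAt_av hτ))
      (fun τ hτ hτS => by have := q5 τ hτ hτS; linarith) (by
        refine Tendsto.sub ?_ (av_lim_zero h.pgv)
        have l2 : Tendsto (fun m : ℕ => 1 / ((m : ℝ) + 1)) atTop (𝓝 0) := tendsto_one_div_add_atTop_nhds_zero_nat
        simpa using l2.const_mul (1 / 2 * (δ * ((1 + V) * M))))
    linarith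
  have q7 : av S (fun y => u y ^ 2) ≤ c * S / 2 := by
    refine le_trans ?_ hδ1
    calc av S (fun y => u y ^ 2) ≤ av S (fun y => δ * (1 + ‖y‖ ^ 2) ^ 3) := by
          refine av_mono hS0 (h.pgu.pow 2).GI (pg3.GI.const_mul _) fun y => (q4 y).trans ?_
          gcongr
          · linarith only [sq_nonneg ‖y‖]
          · norm_num
      _ = δ * av S (fun y : Euc n => (1 + ‖y‖ ^ 2) ^ 3) := av_const_mul _
      _ ≤ _ := by gcongr; exact av_cube_scale hS0 le_rfl
  have q8 := hlow S hS0
  have hHe : Hh u v S = av S (fun y => u y ^ 2) + av S (fun y => v y ^ 2) := rfl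
  have q9 := h.symm.av_ge_of_half hS0 (η := 1 / 2) (by norm_num) (by rw [H_symm]; linarith)
  rw [H_symm, ← hr] at q9
  have hHS := h.H_pos hS0
  have q10 : √(Hh u v S) ≤ 2 * T / r := by
    rw [le_div_iff₀ hr0]; linarith
  have q11 : Hh u v S ≤ (2 * T / r) ^ 2 := by
    rw [← Real.sq_sqrt hHS.le]; gcongr
  have q12 : c * S = (2 * T / r) ^ 2 + 1 := by rw [hS]; field_simp
  linarith

/-- Both components are bounded below on the transition region. -/
lemma transition (h : Sol u v) {T : ℝ} (hT : 0 < T) :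
    ∃ c > 0, ∀ x, u x ≤ T → v x ≤ T → c ≤ u x ∧ c ≤ v x := by
  obtain ⟨c, hc, hlow⟩ := h.F2
  obtain ⟨K, hK, hup⟩ := fin1 n hc hT
  obtain ⟨ε, hε, hfin⟩ := fin2 n hc hT hK
  refine ⟨ε, hε, fun x hu hv => ?_⟩
  have hx := h.tr x
  have eu : TR.tr x u 0 = u x := by simp [TR.tr]
  have ev : TR.tr x v 0 = v x := by simp [TR.tr]
  have up := hup _ _ hx (hlow x) (by rwa [eu]) (by rwa [ev])
  rw [← eu, ← ev]
  refine ⟨hfin _ _ hx (hlow x) up (by rwa [ev]), hfin _ _ hx.symm ?_ ?_ (by rwa [eu])⟩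
  · rw [H_symm]; exact hlow x
  · rw [H_symm]; exact up

end Sol
end TR

theorem lower_bound_on_transition_region (n : ℕ) (hn : 2 ≤ n)
    (u v : Euc n → ℝ)
    (hu : ContDiff ℝ (⊤ : ℕ∞) u) (hv : ContDiff ℝ (⊤ : ℕ∞) v)
    (hupos : ∀ x, 0 < u x) (hvpos : ∀ x, 0 < v x)
    (hequ : ∀ x, lap u x = u x * v x ^ 2)
    (heqv : ∀ x, lap v x = v x * u x ^ 2)
    (C₀ : ℝ) (hC₀ : 0 < C₀)
    (hgrowth : ∀ x, u x + v x ≤ C₀ * (1 + ‖x‖)) :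
    ∀ T > (1 : ℝ), ∃ c > (0 : ℝ), ∀ x₀ : Euc n, u x₀ ≤ T → v x₀ ≤ T →
      c ≤ u x₀ ∧ c ≤ v x₀ := by
  intro T hT
  exact TR.Sol.transition ⟨contDiff_infty.1 hu 2, contDiff_infty.1 hv 2,
    hupos, hvpos, hequ, heqv, C₀, hC₀, hgrowth⟩ (by linarith)
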